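/- Let f : ℝ → ℝ be a smooth function such that f' is surjective and nowhere flat. For every A ∈ SL(2,ℝ) and every α > 0 for which the first row of A satisfies (A₁₁, A₁₂) = r·(cos α, sin α) for some r > 0, the set L = { u : u is a continuous 2π-periodic function ℝ → ℝ, u is not constant, Φ_{f'∘u}(2π) = A and θ_{f'∘u}(2π) = α }, equipped with the topology induced by the sup norm on continuous 2π-periodic functions, is nonempty and contractible. -/

import Mathlib

open Real Set Matrix

/-- A smooth function is nowhere flat if some derivative of order `r' ≤ r` (for a
uniform `r`) is nonzero at every point. -/
def NowhereFlat (g : ℝ → ℝ) : Prop :=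
  ∃ r : ℕ, 0 < r ∧ ∀ x : ℝ, ∃ r' : ℕ, 0 < r' ∧ r' ≤ r ∧ iteratedDeriv r' g x ≠ 0

/-- `Φ` is the fundamental matrix of the potential `q`: `Φ(0) = I` and
`Φ' = [[0,1],[q,0]]·Φ`. -/
def IsFundMatrix (q : ℝ → ℝ) (Φ : ℝ → Matrix (Fin 2) (Fin 2) ℝ) : Prop :=
  Φ 0 = 1 ∧
    ∀ t : ℝ, ∀ i j, HasDerivAt (fun s => Φ s i j) ((!![0, 1; q t, 0] * Φ t) i j) t

/-- `θ` is the continuous argument lift on `[0,2π]` of the first row of `Φ`. -/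
def IsArgLift (Φ : ℝ → Matrix (Fin 2) (Fin 2) ℝ) (θ : ℝ → ℝ) : Prop :=
  ContinuousOn θ (Icc 0 (2 * π)) ∧ θ 0 = 0 ∧
    ∀ t ∈ Icc (0:ℝ) (2 * π),
      Φ t 0 0 = Real.sqrt ((Φ t 0 0) ^ 2 + (Φ t 0 1) ^ 2) * Real.cos (θ t) ∧
      Φ t 0 1 = Real.sqrt ((Φ t 0 0) ^ 2 + (Φ t 0 1) ^ 2) * Real.sin (θ t)

/-- The level set of the nonlinear monodromy map `μ_f` over the element of `G₀` encoded
by `(A, α)`, inside the space of (bounded) continuous `2π`-periodic real functions with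
the sup norm, intersected with the nonconstant functions. -/
def levelSet (f : ℝ → ℝ) (A : Matrix (Fin 2) (Fin 2) ℝ) (α : ℝ) :
    Set (BoundedContinuousFunction ℝ ℝ) :=
  {u | Function.Periodic ⇑u (2 * π) ∧ (¬ ∃ c : ℝ, ⇑u = fun _ => c) ∧
    ∃ Φ : ℝ → Matrix (Fin 2) (Fin 2) ℝ, ∃ θ : ℝ → ℝ,
      IsFundMatrix (fun t => deriv f (u t)) Φ ∧ IsArgLift Φ θ ∧
      Φ (2 * π) = A ∧ θ (2 * π) = α}

/-!
In polar coordinates `(v₁, v₂) = r (cos θ, sin θ)` the potential is a function of `φ = θ' = 1 / r²`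
and its first two derivatives, and prescribing the monodromy and the angle amounts to affine
conditions on `φ`: on its 1-jets at `0` and `2π`, and on its integral. As `φ` ranges over a convex
set, the potentials with this monodromy and angle form a contractible space. To pull the contraction
back along `u ↦ f' ∘ u`, a potential `q` is realized as the weak limit of `f' (W (q t) (t / s))` as
`s → 0`, where `W l` is an oscillation for which `f' ∘ W l` has mean `l`. Starting from a loop `u`,
a front first sweeps over `[0, 2π]` and replaces `u` behind it by the oscillation for `q = f' ∘ u`;
then `q` moves in the contractible space. Since the solutions depend on the potential continuously
in the weak topology, the monodromy is off by a small error only, which a three-parameter correction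
removes exactly. It comes from a quantitative inverse function theorem, which applies because
`f'' ∘ u` does not vanish identically and the products `v₁²`, `v₁ v₂`, `v₂²` are linearly
independent on every interval.
-/

namespace HillMonodromy

open Filter Topology MeasureTheory

theorem exists_eventually_norm_le_of_isCompact {X S F : Type*} [TopologicalSpace X]
    [TopologicalSpace S] [SeminormedAddCommGroup F] {k : X → S → F}
    (hk : Continuous (Function.uncurry k)) {s : Set S} (hs : IsCompact s) (x₀ : X) :
    ∃ C, 0 ≤ C ∧ ∀ᶠ x in 𝓝 x₀, ∀ t ∈ s, ‖k x t‖ ≤ C := by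
  obtain ⟨C, hC⟩ := hs.exists_bound_of_continuousOn (hk.uncurry_left x₀).continuousOn
  refine ⟨|C| + 1, by positivity, ?_⟩
  refine hs.eventually_forall_of_forall_eventually fun t ht => ?_
  have hlt : ‖k x₀ t‖ < |C| + 1 := by linarith [hC t ht, le_abs_self C]
  exact (hk.norm.continuousAt.eventually (gt_mem_nhds hlt)).mono fun _ => le_of_lt

/-! ### Linear differential equations -/

section LinearFlow

variable {E : Type*} [NormedAddCommGroup E] [NormedSpace ℝ E]

/-- The terms of the Picard series of the linear equation `y' = A(t) y`, `y(0) = c`. -/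
noncomputable def picardTerm (A : ℝ → E →L[ℝ] E) (c : E) : ℕ → ℝ → E
  | 0, _ => c
  | n + 1, t => ∫ s in (0 : ℝ)..t, A s (picardTerm A c n s)

/-- The solution of the linear equation `y' = A(t) y`, `y(0) = c`, as the sum of its Picard
series. -/
noncomputable def linearFlow (A : ℝ → E →L[ℝ] E) (c : E) (t : ℝ) : E := ∑' n, picardTerm A c n t

theorem linearFlow_zero (A : ℝ → E →L[ℝ] E) (c : E) : linearFlow A c 0 = c := by
  refine (tsum_eq_single 0 fun n hn => ?_).trans rfl
  obtain ⟨m, rfl⟩ := Nat.exists_eq_succ_of_ne_zero hn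
  simp [picardTerm]

theorem continuous_uncurry_picardTerm {X : Type*} [TopologicalSpace X]
    {A : X → ℝ → E →L[ℝ] E} (hA : Continuous (Function.uncurry A))
    (c : E) (n : ℕ) : Continuous fun z : X × ℝ => picardTerm (A z.1) c n z.2 := by
  induction n with
  | zero => exact continuous_const
  | succ n ih =>
    refine intervalIntegral.continuous_parametric_intervalIntegral_of_continuous
      (f := fun (z : X × ℝ) s => A z.1 s (picardTerm (A z.1) c n s)) ?_ continuous_snd
    have hproj : Continuous fun w : (X × ℝ) × ℝ => (w.1.1, w.2) := by fun_prop
    exact (hA.comp hproj).clm_apply (ih.comp hproj)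

theorem continuous_picardTerm {A : ℝ → E →L[ℝ] E} (hA : Continuous A) (c : E) (n : ℕ) :
    Continuous (picardTerm A c n) :=
  (continuous_uncurry_picardTerm (X := Unit) (A := fun _ => A) (hA.comp continuous_snd) c n).comp
    (Continuous.prodMk_right ())

theorem hasDerivAt_picardTerm_succ [CompleteSpace E] {A : ℝ → E →L[ℝ] E} (hA : Continuous A)
    (c : E) (n : ℕ) (t : ℝ) :
    HasDerivAt (picardTerm A c (n + 1)) (A t (picardTerm A c n t)) t :=
  ((hA.clm_apply (continuous_picardTerm hA c n)).integral_hasStrictDerivAt 0 t).hasDerivAt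

theorem norm_picardTerm_le {A : ℝ → E →L[ℝ] E} (hA : Continuous A) (c : E) {K M : ℝ}
    (hAK : ∀ t ∈ Icc (-M) M, ‖A t‖ ≤ K) (n : ℕ) :
    ∀ t ∈ Icc (-M) M, ‖picardTerm A c n t‖ ≤ ‖c‖ * ((K * |t|) ^ n / n.factorial) := by
  induction n with
  | zero => intro t _; simp [picardTerm]
  | succ n ih =>
    intro t ht
    have : 0 ≤ K := (norm_nonneg _).trans (hAK t ht)
    have hsub : ∀ s ∈ uIoc 0 t, s ∈ Icc (-M) M := fun s hs =>
      ordConnected_Icc.uIcc_subset (by constructor <;> linarith [ht.1, ht.2]) ht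
        (uIoc_subset_uIcc hs)
    have hcont := hA.clm_apply (continuous_picardTerm hA c n)
    calc ‖∫ s in (0 : ℝ)..t, A s (picardTerm A c n s)‖
        ≤ ∫ s in uIoc 0 t, ‖A s (picardTerm A c n s)‖ :=
          intervalIntegral.norm_integral_le_integral_norm_uIoc
      _ ≤ ∫ s in uIoc 0 t, K * (‖c‖ * (K ^ n / n.factorial)) * |s - 0| ^ n := by
          refine setIntegral_mono_on (intervalIntegrable_iff.1 (hcont.norm.intervalIntegrable 0 t))
            (intervalIntegrable_iff.1 (Continuous.intervalIntegrable (by fun_prop) 0 t))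
            measurableSet_uIoc fun s hs => ?_
          calc ‖A s (picardTerm A c n s)‖ ≤ K * (‖c‖ * ((K * |s|) ^ n / n.factorial)) :=
                (A s).le_of_opNorm_le_of_le (hAK s (hsub s hs)) (ih s (hsub s hs))
            _ = K * (‖c‖ * (K ^ n / n.factorial)) * |s - 0| ^ n := by rw [sub_zero]; ring
      _ = ‖c‖ * ((K * |t|) ^ (n + 1) / (n + 1).factorial) := by
          rw [integral_const_mul, integral_pow_abs_sub_uIoc, Nat.factorial_succ, sub_zero]
          push_cast
          field_simp
          ring

theorem norm_picardTerm_le_of_mem_Icc {A : ℝ → E →L[ℝ] E} (hA : Continuous A) (c : E)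
    {K M : ℝ} (hAK : ∀ t ∈ Icc (-M) M, ‖A t‖ ≤ K) (n : ℕ) {t : ℝ} (ht : t ∈ Icc (-M) M) :
    ‖picardTerm A c n t‖ ≤ ‖c‖ * ((K * M) ^ n / n.factorial) := by
  have hK : 0 ≤ K := (norm_nonneg _).trans (hAK t ht)
  have htM : |t| ≤ M := abs_le.2 ht
  refine (norm_picardTerm_le hA c hAK n t ht).trans ?_
  gcongr

theorem Icc_neg_abs_add_one_mem_nhds (t : ℝ) : Icc (-(|t| + 1)) (|t| + 1) ∈ 𝓝 t :=
  Icc_mem_nhds (by linarith [neg_abs_le t]) (by linarith [le_abs_self t])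

theorem continuous_uncurry_linearFlow [CompleteSpace E] {X : Type*} [TopologicalSpace X]
    {A : X → ℝ → E →L[ℝ] E} (hA : Continuous (Function.uncurry A))
    (c : E) : Continuous fun z : X × ℝ => linearFlow (A z.1) c z.2 := by
  refine continuous_iff_continuousAt.2 fun ⟨x₀, t₀⟩ => ?_
  set M := |t₀| + 1
  obtain ⟨K, -, hK⟩ :=
    exists_eventually_norm_le_of_isCompact hA (isCompact_Icc (a := -M) (b := M)) x₀
  have hmem : {z : X × ℝ | (∀ t ∈ Icc (-M) M, ‖A z.1 t‖ ≤ K) ∧ z.2 ∈ Icc (-M) M} ∈ 𝓝 (x₀, t₀) :=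
    prod_mem_nhds hK (Icc_neg_abs_add_one_mem_nhds t₀)
  refine ContinuousOn.continuousAt (continuousOn_tsum
    (fun n => (continuous_uncurry_picardTerm hA c n).continuousOn)
    ((Real.summable_pow_div_factorial (K * M)).mul_left ‖c‖) ?_) hmem
  rintro n ⟨x, t⟩ ⟨hx, ht⟩
  exact norm_picardTerm_le_of_mem_Icc (hA.uncurry_left x) c hx n ht

theorem hasDerivAt_linearFlow [CompleteSpace E] {A : ℝ → E →L[ℝ] E} (hA : Continuous A) (c : E)
    (t : ℝ) : HasDerivAt (linearFlow A c) (A t (linearFlow A c t)) t := by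
  set M := |t| + 1
  obtain ⟨K, hK⟩ := isCompact_Icc.exists_bound_of_continuousOn (s := Icc (-M) M) hA.continuousOn
  have htM := Icc_neg_abs_add_one_mem_nhds t
  have hsum : ∀ s ∈ Icc (-M) M, Summable fun n => picardTerm A c n s := fun s hs =>
    .of_norm_bounded ((Real.summable_pow_div_factorial (K * M)).mul_left ‖c‖)
      fun n => norm_picardTerm_le_of_mem_Icc hA c hK n hs
  have ht : t ∈ Ioo (-M) M := by
    constructor <;> linarith [neg_abs_le t, le_abs_self t, (rfl : M = |t| + 1)]
  have htail : HasDerivAt (fun s => ∑' n, picardTerm A c (n + 1) s)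
      (∑' n, A t (picardTerm A c n t)) t :=
    hasDerivAt_tsum_of_isPreconnected
      (((Real.summable_pow_div_factorial (K * M)).mul_left ‖c‖).mul_left K)
      isOpen_Ioo isPreconnected_Ioo (fun n s _ => hasDerivAt_picardTerm_succ hA c n s)
      (fun n s hs => (A s).le_of_opNorm_le_of_le (hK s (Ioo_subset_Icc_self hs))
        (norm_picardTerm_le_of_mem_Icc hA c hK n (Ioo_subset_Icc_self hs)))
      ht ((summable_nat_add_iff 1).2 (hsum t (Ioo_subset_Icc_self ht))) ht
  rw [← (A t).map_tsum (hsum t (Ioo_subset_Icc_self ht))] at htail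
  refine (htail.const_add c).congr_of_eventuallyEq ?_
  filter_upwards [htM] with s hs
  exact (hsum s hs).tsum_eq_zero_add

end LinearFlow

/-! ### Hill's equation -/

/-- `y` is a solution of Hill's equation `y'' = q y`, with derivative `y'`. -/
def IsHillSolution (q y y' : ℝ → ℝ) : Prop :=
  ∀ t, HasDerivAt y (y' t) t ∧ HasDerivAt y' (q t * y t) t

/-- The linear map `(y, y') ↦ (y', a y)` governing Hill's equation as a first order system. -/
noncomputable def hillOperator (a : ℝ) : ℝ × ℝ →L[ℝ] ℝ × ℝ :=
  (ContinuousLinearMap.snd ℝ ℝ ℝ).prod (a • ContinuousLinearMap.fst ℝ ℝ ℝ)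

theorem continuous_hillOperator : Continuous hillOperator := by
  have h : hillOperator = fun a => (ContinuousLinearMap.snd ℝ ℝ ℝ).prod 0 +
      a • (0 : ℝ × ℝ →L[ℝ] ℝ).prod (ContinuousLinearMap.fst ℝ ℝ ℝ) := by
    ext <;> simp [hillOperator]
  rw [h]
  fun_prop

/-- The fundamental solutions `v₁ = hillSol q 0` and `v₂ = hillSol q 1` of `y'' = q y`, with
initial values `(v₁, v₁')(0) = (1, 0)` and `(v₂, v₂')(0) = (0, 1)`. -/
noncomputable def hillSol (q : ℝ → ℝ) (i : Fin 2) (t : ℝ) : ℝ :=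
  (linearFlow (fun s => hillOperator (q s)) (![(1, 0), (0, 1)] i) t).1

/-- The derivative of `hillSol q i`. -/
noncomputable def hillSol' (q : ℝ → ℝ) (i : Fin 2) (t : ℝ) : ℝ :=
  (linearFlow (fun s => hillOperator (q s)) (![(1, 0), (0, 1)] i) t).2

@[simp] theorem hillSol_zero_zero (q : ℝ → ℝ) : hillSol q 0 0 = 1 := by
  simp [hillSol, linearFlow_zero]

@[simp] theorem hillSol_one_zero (q : ℝ → ℝ) : hillSol q 1 0 = 0 := by
  simp [hillSol, linearFlow_zero]

@[simp] theorem hillSol'_zero_zero (q : ℝ → ℝ) : hillSol' q 0 0 = 0 := by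
  simp [hillSol', linearFlow_zero]

@[simp] theorem hillSol'_one_zero (q : ℝ → ℝ) : hillSol' q 1 0 = 1 := by
  simp [hillSol', linearFlow_zero]

theorem hillSol_zero_eq (Q q : ℝ → ℝ) (i : Fin 2) : hillSol Q i 0 = hillSol q i 0 := by
  fin_cases i <;> simp

theorem hillSol'_zero_eq (Q q : ℝ → ℝ) (i : Fin 2) : hillSol' Q i 0 = hillSol' q i 0 := by
  fin_cases i <;> simp

theorem isHillSolution_hillSol {q : ℝ → ℝ} (hq : Continuous q) (i : Fin 2) :
    IsHillSolution q (hillSol q i) (hillSol' q i) := fun t =>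
  have h := hasDerivAt_linearFlow (continuous_hillOperator.comp hq) (![(1, 0), (0, 1)] i) t
  ⟨h.fst, h.snd⟩

section Parametric

variable {X : Type*} [TopologicalSpace X] {q : X → ℝ → ℝ}

theorem continuous_uncurry_hillSol (hq : Continuous (Function.uncurry q)) (i : Fin 2) :
    Continuous fun z : X × ℝ => hillSol (q z.1) i z.2 :=
  (continuous_uncurry_linearFlow (A := fun x s => hillOperator (q x s))
    (continuous_hillOperator.comp hq) _).fst

theorem continuous_uncurry_hillSol' (hq : Continuous (Function.uncurry q)) (i : Fin 2) :
    Continuous fun z : X × ℝ => hillSol' (q z.1) i z.2 :=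
  (continuous_uncurry_linearFlow (A := fun x s => hillOperator (q x s))
    (continuous_hillOperator.comp hq) _).snd

end Parametric

namespace IsHillSolution

variable {q Q y y' z z' : ℝ → ℝ}

theorem continuous (h : IsHillSolution q y y') : Continuous y :=
  continuous_iff_continuousAt.2 fun t => (h t).1.continuousAt

theorem continuous_deriv (h : IsHillSolution q y y') : Continuous y' :=
  continuous_iff_continuousAt.2 fun t => (h t).2.continuousAt

theorem hasDerivAt_wronskian (hz : IsHillSolution q z z') (hy : IsHillSolution Q y y') (t : ℝ) :
    HasDerivAt (fun t => z t * y' t - z' t * y t) ((Q t - q t) * (z t * y t)) t :=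
  (((hz t).1.mul (hy t).2).sub ((hz t).2.mul (hy t).1)).congr_deriv (by ring)

theorem wronskian_eq (hz : IsHillSolution q z z') (hy : IsHillSolution q y y') (t : ℝ) :
    z t * y' t - z' t * y t = z 0 * y' 0 - z' 0 * y 0 :=
  have hderiv (t : ℝ) : HasDerivAt (fun t => z t * y' t - z' t * y t) 0 t :=
    (hasDerivAt_wronskian hz hy t).congr_deriv (by ring)
  is_const_of_deriv_eq_zero (fun t => (hderiv t).differentiableAt) (fun t => (hderiv t).deriv) t 0

theorem integral_mul_eq_wronskian (hq : Continuous q) (hQ : Continuous Q)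
    (hz : IsHillSolution q z z') (hy : IsHillSolution Q y y') (T : ℝ) :
    ∫ t in (0 : ℝ)..T, (Q t - q t) * (z t * y t) =
      (z T * y' T - z' T * y T) - (z 0 * y' 0 - z' 0 * y 0) :=
  intervalIntegral.integral_eq_sub_of_hasDerivAt (fun t _ => hasDerivAt_wronskian hz hy t)
    (((hQ.sub hq).mul (hz.continuous.mul hy.continuous)).intervalIntegrable _ _)

end IsHillSolution

theorem hillSol_mul_hillSol'_sub_eq_one {q : ℝ → ℝ} (hq : Continuous q) (t : ℝ) :
    hillSol q 0 t * hillSol' q 1 t - hillSol' q 0 t * hillSol q 1 t = 1 := by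
  rw [(isHillSolution_hillSol hq 0).wronskian_eq (isHillSolution_hillSol hq 1) t]
  simp

theorem IsHillSolution.eq_hillSol {q y y' : ℝ → ℝ} (hq : Continuous q)
    (hy : IsHillSolution q y y') (t : ℝ) :
    y t = y 0 * hillSol q 0 t + y' 0 * hillSol q 1 t ∧
      y' t = y 0 * hillSol' q 0 t + y' 0 * hillSol' q 1 t := by
  have h₀ := (isHillSolution_hillSol hq 0).wronskian_eq hy t
  have h₁ := (isHillSolution_hillSol hq 1).wronskian_eq hy t
  have hdet := hillSol_mul_hillSol'_sub_eq_one hq t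
  simp only [hillSol_zero_zero, hillSol'_zero_zero, hillSol_one_zero, hillSol'_one_zero] at h₀ h₁
  constructor
  · linear_combination (-y t) * hdet + hillSol q 1 t * h₀ - hillSol q 0 t * h₁
  · linear_combination (-y' t) * hdet + hillSol' q 1 t * h₀ - hillSol' q 0 t * h₁

/-- The fundamental matrix of Hill's equation. -/
noncomputable def fundMatrix (q : ℝ → ℝ) (t : ℝ) : Matrix (Fin 2) (Fin 2) ℝ :=
  !![hillSol q 0 t, hillSol q 1 t; hillSol' q 0 t, hillSol' q 1 t]

theorem isFundMatrix_iff_eq_fundMatrix {q : ℝ → ℝ} (hq : Continuous q)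
    {Φ : ℝ → Matrix (Fin 2) (Fin 2) ℝ} : IsFundMatrix q Φ ↔ Φ = fundMatrix q := by
  constructor
  · rintro ⟨h0, hΦ⟩
    have hsol (i : Fin 2) : IsHillSolution q (fun t => Φ t 0 i) (fun t => Φ t 1 i) := fun t =>
      ⟨(hΦ t 0 i).congr_deriv (by simp [Matrix.mul_apply, Fin.sum_univ_two]),
        (hΦ t 1 i).congr_deriv (by simp [Matrix.mul_apply, Fin.sum_univ_two])⟩
    have h₀ (t : ℝ) := (hsol 0).eq_hillSol hq t
    have h₁ (t : ℝ) := (hsol 1).eq_hillSol hq t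
    simp only [h0, Matrix.one_apply_eq, Matrix.one_apply_ne zero_ne_one,
      Matrix.one_apply_ne one_ne_zero, one_mul, zero_mul, zero_add, add_zero] at h₀ h₁
    ext t i j
    fin_cases i <;> fin_cases j <;> simp [fundMatrix, h₀, h₁]
  · rintro rfl
    refine ⟨?_, fun t i j => ?_⟩
    · ext i j
      fin_cases i <;> fin_cases j <;> simp [fundMatrix]
    · have h₀ := isHillSolution_hillSol hq 0 t
      have h₁ := isHillSolution_hillSol hq 1 t
      fin_cases i <;> fin_cases j <;>
        simp [fundMatrix, Matrix.mul_apply, Fin.sum_univ_two, h₀.1, h₀.2, h₁.1, h₁.2]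

/-! ### Dependence of the solutions on the primitive of the potential -/

/-- The primitives of `Q` and `q` from `0` are uniformly `ε`-close on `[0, T]`: the potentials
are close in a weak sense that ignores fast oscillations. -/
def WeakClose (T ε : ℝ) (Q q : ℝ → ℝ) : Prop :=
  ∀ t ∈ Icc 0 T, |∫ τ in (0 : ℝ)..t, (Q τ - q τ)| ≤ ε

/-- The function `k` and its derivative `k'` are bounded by `C` on `[0, T]`. -/
def C1Bounded (T C : ℝ) (k k' : ℝ → ℝ) : Prop :=
  ∀ t ∈ Icc 0 T, |k t| ≤ C ∧ |k' t| ≤ C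

theorem abs_mul_le_mul {a b c d : ℝ} (hac : |a| ≤ c) (hbd : |b| ≤ d) : |a * b| ≤ c * d := by
  rw [abs_mul]
  exact mul_le_mul hac hbd (abs_nonneg _) ((abs_nonneg _).trans hac)

theorem abs_integral_le_mul {T B : ℝ} (hT : 0 ≤ T) {f : ℝ → ℝ} (h : ∀ t ∈ Icc 0 T, |f t| ≤ B) :
    |∫ t in (0 : ℝ)..T, f t| ≤ B * T := by
  have := intervalIntegral.norm_integral_le_of_norm_le_const (a := 0) (b := T) (f := f) (C := B)
    fun t ht => h t (Ioc_subset_Icc_self (uIoc_of_le hT ▸ ht))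
  simpa [abs_of_nonneg hT] using this

namespace C1Bounded

variable {T C D : ℝ} {k k' l l' : ℝ → ℝ}

theorem mul (hk : C1Bounded T C k k') (hl : C1Bounded T D l l') :
    C1Bounded T (2 * C * D) (fun t => k t * l t) (fun t => k' t * l t + k t * l' t) := by
  intro t ht
  have hkl := abs_mul_le_mul (hk t ht).1 (hl t ht).1
  have hk'l := abs_mul_le_mul (hk t ht).2 (hl t ht).1
  have hkl' := abs_mul_le_mul (hk t ht).1 (hl t ht).2
  have hCD : 0 ≤ C * D := (abs_nonneg _).trans hkl
  exact ⟨by linarith, (abs_add_le _ _).trans (by linarith)⟩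

theorem of_sub (hkl : C1Bounded T C (fun t => k t - l t) fun t => k' t - l' t)
    (hl : C1Bounded T D l l') : C1Bounded T (D + C) k k' := fun t ht => by
  have h₁ := abs_le.1 (hkl t ht).1
  have h₂ := abs_le.1 (hkl t ht).2
  have h₃ := abs_le.1 (hl t ht).1
  have h₄ := abs_le.1 (hl t ht).2
  constructor <;> rw [abs_le] <;> constructor <;> linarith

theorem mono (hk : C1Bounded T C k k') (hCD : C ≤ D) : C1Bounded T D k k' := fun t ht =>
  ⟨(hk t ht).1.trans hCD, (hk t ht).2.trans hCD⟩

end C1Bounded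

/-- The constant of the Gronwall estimate `WeakClose.c1Bounded_sub`. -/
noncomputable def gronwallConst (T K C : ℝ) : ℝ := gronwallBound 0 (max 1 K) C T + C

theorem gronwallBound_zero_mul (k ε C t : ℝ) :
    gronwallBound 0 k (C * ε) t = gronwallBound 0 k C t * ε := by
  unfold gronwallBound
  split_ifs <;> ring

theorem gronwallConst_nonneg {T K C : ℝ} (hT : 0 ≤ T) (hC : 0 ≤ C) : 0 ≤ gronwallConst T K C := by
  have := gronwallBound_mono (δ := 0) le_rfl hC (le_max_of_le_left zero_le_one : 0 ≤ max 1 K) hT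
  rw [gronwallBound_x0] at this
  exact add_nonneg this hC

theorem norm_hillOperator_sub_le {a k w w' p p' e : ℝ} (hk : 1 ≤ k) (ha : |a| ≤ k) (hp : |p| ≤ e)
    (hp' : |p'| ≤ e) : ‖(w', a * w - p')‖ ≤ k * ‖(w, w' - p)‖ + e := by
  have hw : |w| ≤ ‖(w, w' - p)‖ := norm_fst_le (w, w' - p)
  have hw' : |w' - p| ≤ ‖(w, w' - p)‖ := norm_snd_le (w, w' - p)
  have hn := norm_nonneg (w, w' - p)
  refine max_le ?_ ?_ <;> simp only [Real.norm_eq_abs]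
  · have : |w'| ≤ |w' - p| + |p| := by simpa using abs_add_le (w' - p) p
    nlinarith
  · exact (abs_sub _ _).trans (add_le_add (abs_mul_le_mul ha hw) hp')

namespace WeakClose

variable {T ε : ℝ} {Q q : ℝ → ℝ}

theorem nonneg (h : WeakClose T ε Q q) (hT : 0 ≤ T) : 0 ≤ ε :=
  (abs_nonneg _).trans (h 0 ⟨le_rfl, hT⟩)

theorem abs_integral_sub_mul_le (hQ : Continuous Q) (hq : Continuous q) {k k' : ℝ → ℝ}
    (hk' : Continuous k') (hk : ∀ t, HasDerivAt k (k' t) t) {C : ℝ} (hT : 0 ≤ T)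
    (hQq : WeakClose T ε Q q) (hkC : C1Bounded T C k k') :
    |∫ t in (0 : ℝ)..T, (Q t - q t) * k t| ≤ ε * C * (1 + T) := by
  set Z : ℝ → ℝ := fun t => ∫ τ in (0 : ℝ)..t, (Q τ - q τ) with hZ
  have hZd (t : ℝ) : HasDerivAt Z (Q t - q t) t :=
    ((hQ.sub hq).integral_hasStrictDerivAt 0 t).hasDerivAt
  have hparts : ∫ t in (0 : ℝ)..T, (Q t - q t) * k t
      = Z T * k T - ∫ t in (0 : ℝ)..T, Z t * k' t := by
    rw [intervalIntegral.integral_mul_deriv_eq_deriv_mul (fun t _ => hZd t) (fun t _ => hk t)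
      ((hQ.sub hq).intervalIntegrable _ _) (hk'.intervalIntegrable _ _)]
    simp [hZ]
  have hint : |∫ t in (0 : ℝ)..T, Z t * k' t| ≤ ε * C * T :=
    abs_integral_le_mul hT fun t ht => abs_mul_le_mul (hQq t ht) (hkC t ht).2
  have hend : |Z T * k T| ≤ ε * C :=
    abs_mul_le_mul (hQq T ⟨hT, le_rfl⟩) (hkC T ⟨hT, le_rfl⟩).1
  rw [hparts]
  exact (abs_sub _ _).trans (by linarith)

/- The equation `y'' - z'' = Q (y - z) + (Q - q) z` is not small, but it becomes so once the
primitive `P` of `Q - q` is moved to the left: `(y' - z' - P z)' = Q (y - z) - P z'`. -/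
theorem c1Bounded_sub (hQ : Continuous Q) (hq : Continuous q) {y y' z z' : ℝ → ℝ}
    (hy : IsHillSolution Q y y') (hz : IsHillSolution q z z') (h0 : y 0 = z 0) (h0' : y' 0 = z' 0)
    {K C : ℝ} (hK : ∀ t ∈ Icc 0 T, |Q t| ≤ K) (hC : C1Bounded T C z z')
    (hQq : WeakClose T ε Q q) :
    C1Bounded T (gronwallConst T K C * ε) (fun t => y t - z t) fun t => y' t - z' t := by
  intro t ht
  have hT : 0 ≤ T := ht.1.trans ht.2
  have hε := hQq.nonneg hT
  have hC0 : 0 ≤ C := (abs_nonneg _).trans (hC t ht).1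
  set P : ℝ → ℝ := fun t => ∫ τ in (0 : ℝ)..t, (Q τ - q τ) with hPdef
  have hPd (t : ℝ) : HasDerivAt P (Q t - q t) t :=
    ((hQ.sub hq).integral_hasStrictDerivAt 0 t).hasDerivAt
  have hPz (t : ℝ) (ht : t ∈ Icc 0 T) : |P t * z t| ≤ C * ε := by
    rw [mul_comm C]; exact abs_mul_le_mul (hQq t ht) (hC t ht).1
  have hPz' (t : ℝ) (ht : t ∈ Icc 0 T) : |P t * z' t| ≤ C * ε := by
    rw [mul_comm C]; exact abs_mul_le_mul (hQq t ht) (hC t ht).2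
  set D : ℝ → ℝ × ℝ := fun t => (y t - z t, y' t - z' t - P t * z t) with hD
  have hDd (t : ℝ) : HasDerivAt D (y' t - z' t, Q t * (y t - z t) - P t * z' t) t :=
    ((hy t).1.sub (hz t).1).prodMk
      ((((hy t).2.sub (hz t).2).sub ((hPd t).mul (hz t).1)).congr_deriv (by ring))
  have hbound : ‖D t‖ ≤ gronwallBound 0 (max 1 K) C T * ε := by
    rw [← gronwallBound_zero_mul]
    refine (norm_le_gronwallBound_of_norm_deriv_right_le
      (fun t _ => (hDd t).continuousAt.continuousWithinAt)
      (fun t _ => (hDd t).hasDerivWithinAt) (by simp [hD, hPdef, h0, h0'] : ‖D 0‖ ≤ 0)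
      (fun s hs => norm_hillOperator_sub_le (le_max_left 1 K)
        ((hK s (Ico_subset_Icc_self hs)).trans (le_max_right 1 K)) (hPz s (Ico_subset_Icc_self hs))
        (hPz' s (Ico_subset_Icc_self hs))) t ht).trans ?_
    exact gronwallBound_mono le_rfl (by positivity) (by positivity) (by linarith [ht.2])
  have h₁ : |y t - z t| ≤ ‖D t‖ := norm_fst_le (D t)
  have h₂ : |y' t - z' t - P t * z t| ≤ ‖D t‖ := norm_snd_le (D t)
  have h₃ := hPz t ht
  have hCε : 0 ≤ C * ε := by positivity
  rw [gronwallConst, add_mul]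
  refine ⟨by linarith, ?_⟩
  have : |y' t - z' t| ≤ |y' t - z' t - P t * z t| + |P t * z t| := by
    simpa using abs_add_le (y' t - z' t - P t * z t) (P t * z t)
  linarith

end WeakClose

/-! ### Polar coordinates and Kepler's change of variable -/

/-- The squared length of the first row `(v₁, v₂)` of the fundamental matrix. -/
noncomputable def radiusSq (q : ℝ → ℝ) (t : ℝ) : ℝ := hillSol q 0 t ^ 2 + hillSol q 1 t ^ 2

/-- The derivative of `radiusSq q`. -/
noncomputable def radiusSq' (q : ℝ → ℝ) (t : ℝ) : ℝ :=
  2 * (hillSol q 0 t * hillSol' q 0 t + hillSol q 1 t * hillSol' q 1 t)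

/-- The second derivative of `radiusSq q`. -/
noncomputable def radiusSq'' (q : ℝ → ℝ) (t : ℝ) : ℝ :=
  2 * (hillSol' q 0 t ^ 2 + hillSol' q 1 t ^ 2) + 2 * (q t * radiusSq q t)

/-- The angular speed `θ' = 1 / (v₁² + v₂²)` of the first row of the fundamental matrix. -/
noncomputable def angularSpeed (q : ℝ → ℝ) (t : ℝ) : ℝ := 1 / radiusSq q t

/-- The derivative of `angularSpeed q`. -/
noncomputable def angularSpeed' (q : ℝ → ℝ) (t : ℝ) : ℝ := -radiusSq' q t / radiusSq q t ^ 2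

/-- The second derivative of `angularSpeed q`. -/
noncomputable def angularSpeed'' (q : ℝ → ℝ) (t : ℝ) : ℝ :=
  -radiusSq'' q t / radiusSq q t ^ 2 + 2 * radiusSq' q t ^ 2 / radiusSq q t ^ 3

/-- The argument `θ` of the first row of the fundamental matrix. -/
noncomputable def hillAngle (q : ℝ → ℝ) (t : ℝ) : ℝ := ∫ τ in (0 : ℝ)..t, angularSpeed q τ

/-- Kepler's formula for the potential at a point where the angular speed and its first two
derivatives are `a`, `b`, `c`. -/
noncomputable def keplerPotential (a b c : ℝ) : ℝ :=
  -a ^ 2 + 3 / 4 * (b / a) ^ 2 - 1 / 2 * (c / a)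

/-- `φ`, with derivatives `φ'` and `φ''`, has the properties characterising the angular speed of
the first row of a fundamental matrix. -/
structure IsAngularSpeed (φ φ' φ'' : ℝ → ℝ) : Prop where
  pos : ∀ t, 0 < φ t
  hasDerivAt : ∀ t, HasDerivAt φ (φ' t) t
  hasDerivAt' : ∀ t, HasDerivAt φ' (φ'' t) t
  continuous'' : Continuous φ''
  zero : φ 0 = 1
  deriv_zero : φ' 0 = 0

namespace IsAngularSpeed

variable {φ φ' φ'' : ℝ → ℝ} (h : IsAngularSpeed φ φ' φ'')

include h

theorem continuous : Continuous φ :=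
  continuous_iff_continuousAt.2 fun t => (h.hasDerivAt t).continuousAt

theorem continuous' : Continuous φ' :=
  continuous_iff_continuousAt.2 fun t => (h.hasDerivAt' t).continuousAt

theorem continuous_keplerPotential :
    Continuous fun t => keplerPotential (φ t) (φ' t) (φ'' t) := by
  have := h.continuous; have := h.continuous'; have := h.continuous''
  have hφ (t : ℝ) := (h.pos t).ne'
  unfold keplerPotential
  fun_prop (disch := assumption)

theorem hasDerivAt_div_sqrt {c s : ℝ → ℝ} (hc : ∀ t, HasDerivAt c (-(φ t * s t)) t) (t : ℝ) :
    HasDerivAt (fun t => c t / √(φ t))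
      (-(1 / 2) * (φ' t / φ t) * (c t / √(φ t)) - φ t * (s t / √(φ t))) t := by
  have hr : 0 < √(φ t) := Real.sqrt_pos.2 (h.pos t)
  have hsq := Real.sq_sqrt (h.pos t).le
  refine ((hc t).div ((h.hasDerivAt t).sqrt (h.pos t).ne') hr.ne').congr_deriv ?_
  generalize √(φ t) = r at *
  rw [← hsq]
  field_simp
  ring

theorem isHillSolution_div_sqrt {c s : ℝ → ℝ} (hc : ∀ t, HasDerivAt c (-(φ t * s t)) t)
    (hs : ∀ t, HasDerivAt s (φ t * c t) t) :
    IsHillSolution (fun t => keplerPotential (φ t) (φ' t) (φ'' t)) (fun t => c t / √(φ t))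
      fun t => -(1 / 2) * (φ' t / φ t) * (c t / √(φ t)) - φ t * (s t / √(φ t)) := fun t => by
  have hφ := (h.pos t).ne'
  have hcd := h.hasDerivAt_div_sqrt hc t
  have hsd := h.hasDerivAt_div_sqrt (c := s) (s := fun t => -c t)
    (fun t => (hs t).congr_deriv (by ring)) t
  refine ⟨hcd, (((((h.hasDerivAt' t).div (h.hasDerivAt t) hφ).const_mul (-(1 / 2))).mul hcd).sub
    ((h.hasDerivAt t).mul hsd)).congr_deriv ?_⟩
  simp only [keplerPotential, Pi.div_apply]
  field_simp
  ring

theorem fundMatrix_keplerPotential (t : ℝ) :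
    fundMatrix (fun t => keplerPotential (φ t) (φ' t) (φ'' t)) t =
      let θ := ∫ τ in (0 : ℝ)..t, φ τ
      let a := cos θ / √(φ t)
      let b := sin θ / √(φ t)
      !![a, b; -(1 / 2) * (φ' t / φ t) * a - φ t * b, -(1 / 2) * (φ' t / φ t) * b + φ t * a] := by
  set θ : ℝ → ℝ := fun t => ∫ τ in (0 : ℝ)..t, φ τ with hθ
  have hθd (t : ℝ) : HasDerivAt θ (φ t) t := (h.continuous.integral_hasStrictDerivAt 0 t).hasDerivAt
  have hcos (t : ℝ) : HasDerivAt (fun t => cos (θ t)) (-(φ t * sin (θ t))) t :=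
    (hθd t).cos.congr_deriv (by ring)
  have hsin (t : ℝ) : HasDerivAt (fun t => sin (θ t)) (φ t * cos (θ t)) t :=
    (hθd t).sin.congr_deriv (by ring)
  have h₀ := (h.isHillSolution_div_sqrt hcos hsin).eq_hillSol h.continuous_keplerPotential t
  have h₁ := (h.isHillSolution_div_sqrt (c := fun t => sin (θ t)) (s := fun t => -cos (θ t))
    (fun t => (hsin t).congr_deriv (by ring)) fun t => (hcos t).neg.congr_deriv
      (by ring)).eq_hillSol h.continuous_keplerPotential t
  have hθ0 : θ 0 = 0 := by simp [hθ]
  simp only [hθ0, h.zero, h.deriv_zero, cos_zero, sin_zero, Real.sqrt_one, div_one,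
    mul_zero, zero_mul, sub_zero, zero_add, add_zero, one_mul, mul_one,
    sub_neg_eq_add, neg_div, mul_neg] at h₀ h₁
  simp only [fundMatrix, ← h₀.1, ← h₀.2, ← h₁.1, ← h₁.2, neg_mul]
  rfl

theorem angularSpeed_keplerPotential :
    angularSpeed (fun t => keplerPotential (φ t) (φ' t) (φ'' t)) = φ := by
  ext t
  have h₀ := congrFun₂ (h.fundMatrix_keplerPotential t) 0 0
  have h₁ := congrFun₂ (h.fundMatrix_keplerPotential t) 0 1
  simp only [fundMatrix, Matrix.of_apply, Matrix.cons_val_zero, Matrix.cons_val_one] at h₀ h₁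
  rw [angularSpeed, radiusSq, h₀, h₁, div_pow, div_pow, ← add_div, cos_sq_add_sin_sq,
    Real.sq_sqrt (h.pos t).le, one_div_one_div]

end IsAngularSpeed

section AngularSpeed

variable {q : ℝ → ℝ}

theorem one_le_radiusSq_mul (hq : Continuous q) (t : ℝ) :
    1 ≤ radiusSq q t * (hillSol' q 0 t ^ 2 + hillSol' q 1 t ^ 2) := by
  rw [← one_pow 2, ← hillSol_mul_hillSol'_sub_eq_one hq t, radiusSq]
  linarith [sq_nonneg (hillSol q 0 t * hillSol' q 0 t + hillSol q 1 t * hillSol' q 1 t)]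

theorem radiusSq_pos (hq : Continuous q) (t : ℝ) : 0 < radiusSq q t :=
  pos_of_mul_pos_left (one_pos.trans_le (one_le_radiusSq_mul hq t)) (by positivity)

theorem hasDerivAt_radiusSq (hq : Continuous q) (t : ℝ) :
    HasDerivAt (radiusSq q) (radiusSq' q t) t :=
  (((isHillSolution_hillSol hq 0 t).1.pow 2).add
    ((isHillSolution_hillSol hq 1 t).1.pow 2)).congr_deriv (by simp [radiusSq']; ring)

theorem hasDerivAt_radiusSq' (hq : Continuous q) (t : ℝ) :
    HasDerivAt (radiusSq' q) (radiusSq'' q t) t := by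
  have h₀ := isHillSolution_hillSol hq 0 t
  have h₁ := isHillSolution_hillSol hq 1 t
  refine (((h₀.1.mul h₀.2).add (h₁.1.mul h₁.2)).const_mul 2).congr_deriv ?_
  simp only [radiusSq, radiusSq'']
  ring

section Parametric

variable {X : Type*} [TopologicalSpace X] {Q : X → ℝ → ℝ}

theorem continuous_uncurry_radiusSq (hQ : Continuous (Function.uncurry Q)) :
    Continuous fun z : X × ℝ => radiusSq (Q z.1) z.2 :=
  ((continuous_uncurry_hillSol hQ 0).pow 2).add ((continuous_uncurry_hillSol hQ 1).pow 2)

theorem continuous_uncurry_radiusSq' (hQ : Continuous (Function.uncurry Q)) :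
    Continuous fun z : X × ℝ => radiusSq' (Q z.1) z.2 :=
  (((continuous_uncurry_hillSol hQ 0).mul (continuous_uncurry_hillSol' hQ 0)).add
    ((continuous_uncurry_hillSol hQ 1).mul (continuous_uncurry_hillSol' hQ 1))).const_mul 2

theorem continuous_uncurry_radiusSq'' (hQ : Continuous (Function.uncurry Q)) :
    Continuous fun z : X × ℝ => radiusSq'' (Q z.1) z.2 :=
  ((((continuous_uncurry_hillSol' hQ 0).pow 2).add
    ((continuous_uncurry_hillSol' hQ 1).pow 2)).const_mul 2).add
      ((hQ.mul (continuous_uncurry_radiusSq hQ)).const_mul 2)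

theorem continuous_uncurry_angularSpeed (hQ : Continuous (Function.uncurry Q)) :
    Continuous fun z : X × ℝ => angularSpeed (Q z.1) z.2 :=
  continuous_const.div (continuous_uncurry_radiusSq hQ) fun z =>
    (radiusSq_pos (hQ.uncurry_left z.1) z.2).ne'

theorem continuous_uncurry_angularSpeed' (hQ : Continuous (Function.uncurry Q)) :
    Continuous fun z : X × ℝ => angularSpeed' (Q z.1) z.2 :=
  (continuous_uncurry_radiusSq' hQ).neg.div ((continuous_uncurry_radiusSq hQ).pow 2) fun z =>
    pow_ne_zero 2 (radiusSq_pos (hQ.uncurry_left z.1) z.2).ne'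

theorem continuous_uncurry_angularSpeed'' (hQ : Continuous (Function.uncurry Q)) :
    Continuous fun z : X × ℝ => angularSpeed'' (Q z.1) z.2 := by
  have hne (n : ℕ) (z : X × ℝ) : radiusSq (Q z.1) z.2 ^ n ≠ 0 :=
    pow_ne_zero n (radiusSq_pos (hQ.uncurry_left z.1) z.2).ne'
  have hr := continuous_uncurry_radiusSq hQ
  exact ((continuous_uncurry_radiusSq'' hQ).neg.div (hr.pow 2) (hne 2)).add
    ((((continuous_uncurry_radiusSq' hQ).pow 2).const_mul 2).div (hr.pow 3) (hne 3))

end Parametric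

theorem hasDerivAt_angularSpeed (hq : Continuous q) (t : ℝ) :
    HasDerivAt (angularSpeed q) (angularSpeed' q t) t :=
  ((hasDerivAt_const t (1 : ℝ)).div (hasDerivAt_radiusSq hq t)
    (radiusSq_pos hq t).ne').congr_deriv (by simp [angularSpeed'])

theorem hasDerivAt_angularSpeed' (hq : Continuous q) (t : ℝ) :
    HasDerivAt (angularSpeed' q) (angularSpeed'' q t) t := by
  have hr := (radiusSq_pos hq t).ne'
  refine ((hasDerivAt_radiusSq' hq t).neg.div ((hasDerivAt_radiusSq hq t).pow 2)
    (pow_ne_zero 2 hr)).congr_deriv ?_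
  simp only [angularSpeed'', Pi.neg_apply, Pi.pow_apply]
  field_simp
  push_cast
  ring

theorem continuous_angularSpeed'' (hq : Continuous q) : Continuous (angularSpeed'' q) := by
  have h := continuous_uncurry_angularSpeed'' (X := Unit) (Q := fun _ => q) (hq.comp continuous_snd)
  simpa only [Function.comp_def] using h.comp (Continuous.prodMk_right ())

theorem isAngularSpeed_angularSpeed (hq : Continuous q) :
    IsAngularSpeed (angularSpeed q) (angularSpeed' q) (angularSpeed'' q) where
  pos t := one_div_pos.2 (radiusSq_pos hq t)
  hasDerivAt := hasDerivAt_angularSpeed hq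
  hasDerivAt' := hasDerivAt_angularSpeed' hq
  continuous'' := continuous_angularSpeed'' hq
  zero := by simp [angularSpeed, radiusSq]
  deriv_zero := by simp [angularSpeed', radiusSq']

theorem keplerPotential_angularSpeed (hq : Continuous q) (t : ℝ) :
    keplerPotential (angularSpeed q t) (angularSpeed' q t) (angularSpeed'' q t) = q t := by
  have hr := radiusSq_pos hq t
  have hdet := hillSol_mul_hillSol'_sub_eq_one hq t
  unfold keplerPotential angularSpeed angularSpeed' angularSpeed'' radiusSq' radiusSq''
  field_simp
  unfold radiusSq
  linear_combination
    4 * (hillSol q 0 t * hillSol' q 1 t - hillSol' q 0 t * hillSol q 1 t + 1) * hdet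

theorem continuous_hillAngle (hq : Continuous q) : Continuous (hillAngle q) :=
  intervalIntegral.continuous_primitive
    (fun _ _ => (isAngularSpeed_angularSpeed hq).continuous.intervalIntegrable _ _) 0

theorem hillSol_eq_sqrt_radiusSq_mul (hq : Continuous q) (t : ℝ) :
    hillSol q 0 t = √(radiusSq q t) * cos (hillAngle q t) ∧
      hillSol q 1 t = √(radiusSq q t) * sin (hillAngle q t) := by
  have h := (isAngularSpeed_angularSpeed hq).fundMatrix_keplerPotential t
  simp only [keplerPotential_angularSpeed hq] at h
  have h₀ := congrFun₂ h 0 0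
  have h₁ := congrFun₂ h 0 1
  simp only [fundMatrix, Matrix.of_apply, Matrix.cons_val_zero, Matrix.cons_val_one, angularSpeed,
    one_div, Real.sqrt_inv, div_inv_eq_mul] at h₀ h₁
  simp only [hillAngle, angularSpeed, one_div]
  exact ⟨h₀.trans (mul_comm _ _), h₁.trans (mul_comm _ _)⟩

end AngularSpeed

/-! ### The level set in terms of the angular speed -/

theorem eqOn_of_cos_eq_of_sin_eq {s : Set ℝ} (hs : IsPreconnected s) {a b : ℝ → ℝ}
    (ha : ContinuousOn a s) (hb : ContinuousOn b s) (hcos : ∀ t ∈ s, cos (a t) = cos (b t))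
    (hsin : ∀ t ∈ s, sin (a t) = sin (b t)) {t₀ : ℝ} (ht₀ : t₀ ∈ s) (h₀ : a t₀ = b t₀) :
    EqOn a b s := by
  refine Circle.isCoveringMap_exp.eqOn_of_comp_eqOn hs ha hb (fun t ht => ?_) ht₀ h₀
  refine Circle.ext (Complex.ext ?_ ?_) <;>
    simp [Circle.coe_exp, Complex.exp_ofReal_mul_I_re, Complex.exp_ofReal_mul_I_im, hcos t ht,
      hsin t ht]

theorem isArgLift_fundMatrix_iff {q θ : ℝ → ℝ} (hq : Continuous q) :
    IsArgLift (fundMatrix q) θ ↔ EqOn θ (hillAngle q) (Icc 0 (2 * π)) := by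
  have hpolar := hillSol_eq_sqrt_radiusSq_mul hq
  have h0 : (0 : ℝ) ∈ Icc 0 (2 * π) := ⟨le_rfl, by positivity⟩
  have hr (t : ℝ) : √(radiusSq q t) ≠ 0 := (Real.sqrt_pos.2 (radiusSq_pos hq t)).ne'
  have hangle : hillAngle q 0 = 0 := intervalIntegral.integral_same
  constructor
  · rintro ⟨hθ, hθ0, hlift⟩
    exact eqOn_of_cos_eq_of_sin_eq isPreconnected_Icc hθ (continuous_hillAngle hq).continuousOn
      (fun t ht => mul_left_cancel₀ (hr t) ((hlift t ht).1.symm.trans (hpolar t).1))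
      (fun t ht => mul_left_cancel₀ (hr t) ((hlift t ht).2.symm.trans (hpolar t).2)) h0
      (hθ0.trans hangle.symm)
  · intro hθ
    refine ⟨(continuous_hillAngle hq).continuousOn.congr hθ, (hθ h0).trans hangle, fun t ht => ?_⟩
    rw [hθ ht]
    exact hpolar t

theorem mem_levelSet_iff {f : ℝ → ℝ} (hf : Continuous (deriv f)) {A : Matrix (Fin 2) (Fin 2) ℝ}
    {α : ℝ} {u : BoundedContinuousFunction ℝ ℝ} :
    u ∈ levelSet f A α ↔ Function.Periodic ⇑u (2 * π) ∧ (¬ ∃ c : ℝ, ⇑u = fun _ => c) ∧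
      fundMatrix (fun t => deriv f (u t)) (2 * π) = A ∧
        hillAngle (fun t => deriv f (u t)) (2 * π) = α := by
  have hq : Continuous fun t => deriv f (u t) := hf.comp u.continuous
  have hmem : 2 * π ∈ Icc 0 (2 * π) := ⟨by positivity, le_rfl⟩
  refine and_congr_right fun _ => and_congr_right fun _ => ⟨?_, fun ⟨hA, hα⟩ => ?_⟩
  · rintro ⟨Φ, θ, hΦ, hθ, hA, hα⟩
    obtain rfl := (isFundMatrix_iff_eq_fundMatrix hq).1 hΦ
    exact ⟨hA, ((isArgLift_fundMatrix_iff hq).1 hθ hmem).symm.trans hα⟩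
  · exact ⟨_, _, (isFundMatrix_iff_eq_fundMatrix hq).2 rfl,
      (isArgLift_fundMatrix_iff hq).2 fun _ _ => rfl, hA, hα⟩

/-- The angular speeds `φ` of the potentials with monodromy `A` and total angle `α` on `[0, 2π]`:
the end point conditions express `A` through the first row of the fundamental matrix and its
derivative. These conditions are affine in `φ`. -/
structure HasMonodromy (A : Matrix (Fin 2) (Fin 2) ℝ) (α : ℝ) (φ φ' φ'' : ℝ → ℝ) : Prop
    extends IsAngularSpeed φ φ' φ'' where
  two_pi : φ (2 * π) = 1 / (A 0 0 ^ 2 + A 0 1 ^ 2)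
  deriv_two_pi : φ' (2 * π) = -(2 * (A 0 0 * A 1 0 + A 0 1 * A 1 1)) / (A 0 0 ^ 2 + A 0 1 ^ 2) ^ 2
  integral : ∫ t in (0 : ℝ)..(2 * π), φ t = α

section Monodromy

variable {A : Matrix (Fin 2) (Fin 2) ℝ} {α : ℝ}

theorem hasMonodromy_angularSpeed {q : ℝ → ℝ} (hq : Continuous q) :
    HasMonodromy (fundMatrix q (2 * π)) (hillAngle q (2 * π)) (angularSpeed q) (angularSpeed' q)
      (angularSpeed'' q) where
  __ := isAngularSpeed_angularSpeed hq
  two_pi := rfl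
  deriv_two_pi := rfl
  integral := rfl

namespace HasMonodromy

variable {φ φ' φ'' ψ ψ' ψ'' : ℝ → ℝ}

theorem hillAngle_keplerPotential (h : HasMonodromy A α φ φ' φ'') :
    hillAngle (fun t => keplerPotential (φ t) (φ' t) (φ'' t)) (2 * π) = α := by
  rw [hillAngle, h.angularSpeed_keplerPotential, h.integral]

theorem fundMatrix_keplerPotential_eq (hA : A.det = 1)
    (hrow : ∃ r : ℝ, 0 < r ∧ A 0 0 = r * cos α ∧ A 0 1 = r * sin α)
    (h : HasMonodromy A α φ φ' φ'') :
    fundMatrix (fun t => keplerPotential (φ t) (φ' t) (φ'' t)) (2 * π) = A := by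
  obtain ⟨r, hr, hcos, hsin⟩ := hrow
  have hrsq : A 0 0 ^ 2 + A 0 1 ^ 2 = r ^ 2 := by
    rw [hcos, hsin]; linear_combination r ^ 2 * sin_sq_add_cos_sq α
  have hsqrt : √(φ (2 * π)) = 1 / r := by
    rw [h.two_pi, hrsq, one_div, Real.sqrt_inv, Real.sqrt_sq hr.le, one_div]
  have hdet : A 0 0 * A 1 1 - A 0 1 * A 1 0 = 1 := by rw [← hA, Matrix.det_fin_two]
  have hne : A 0 0 ^ 2 + A 0 1 ^ 2 ≠ 0 := by rw [hrsq]; positivity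
  have hrow₀ : cos α / (1 / r) = A 0 0 := by rw [hcos]; field_simp
  have hrow₁ : sin α / (1 / r) = A 0 1 := by rw [hsin]; field_simp
  rw [h.fundMatrix_keplerPotential]
  simp only [h.integral, hsqrt, hrow₀, hrow₁]
  rw [h.two_pi, h.deriv_two_pi]
  ext i j
  fin_cases i <;> fin_cases j <;>
    simp only [Fin.zero_eta, Fin.mk_one, Matrix.of_apply, Matrix.cons_val', Matrix.cons_val_zero,
      Matrix.cons_val_one, Matrix.cons_val_fin_one]
  · field_simp
    linear_combination A 0 1 * hdet
  · field_simp
    linear_combination - A 0 0 * hdet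

theorem convexCombination (h : HasMonodromy A α φ φ' φ'') (k : HasMonodromy A α ψ ψ' ψ'') {σ : ℝ}
    (h0 : 0 ≤ σ) (h1 : σ ≤ 1) :
    HasMonodromy A α (fun t => (1 - σ) * φ t + σ * ψ t) (fun t => (1 - σ) * φ' t + σ * ψ' t)
      fun t => (1 - σ) * φ'' t + σ * ψ'' t where
  pos t := (convex_Ioi (0 : ℝ)) (h.pos t) (k.pos t) (sub_nonneg.2 h1) h0 (sub_add_cancel 1 σ)
  hasDerivAt t := ((h.hasDerivAt t).const_mul _).add ((k.hasDerivAt t).const_mul _)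
  hasDerivAt' t := ((h.hasDerivAt' t).const_mul _).add ((k.hasDerivAt' t).const_mul _)
  continuous'' := (h.continuous''.const_mul _).add (k.continuous''.const_mul _)
  zero := by rw [h.zero, k.zero]; ring
  deriv_zero := by rw [h.deriv_zero, k.deriv_zero]; ring
  two_pi := by rw [h.two_pi, k.two_pi]; ring
  deriv_two_pi := by rw [h.deriv_two_pi, k.deriv_two_pi]; ring
  integral := by
    have := h.continuous; have := k.continuous
    rw [intervalIntegral.integral_add (Continuous.intervalIntegrable (by fun_prop) _ _)
      (Continuous.intervalIntegrable (by fun_prop) _ _), intervalIntegral.integral_const_mul,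
      intervalIntegral.integral_const_mul, h.integral, k.integral]
    ring

end HasMonodromy

theorem tendsto_integral_exp_sub_mul {T : ℝ} (hT : 0 ≤ T) {a w : ℝ → ℝ} (ha : Continuous a)
    (hw : Continuous w) (hpos : ∀ t ∈ Ioo 0 T, 0 < w t) :
    Tendsto (fun n : ℕ => ∫ t in (0 : ℝ)..T, exp (a t - n * w t)) atTop (𝓝 0) := by
  suffices Tendsto (fun n : ℕ => ∫ t in (0 : ℝ)..T, exp (a t - n * w t)) atTop
      (𝓝 (∫ _ in (0 : ℝ)..T, 0)) by simpa using this
  have hae : ∀ᵐ t : ℝ, t ∈ uIoc 0 T → 0 < w t := by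
    filter_upwards [Measure.ae_ne volume T] with t htT ht
    rw [uIoc_of_le hT] at ht
    exact hpos t ⟨ht.1, ht.2.lt_of_ne htT⟩
  refine intervalIntegral.tendsto_integral_filter_of_dominated_convergence (fun t => exp (a t))
    (.of_forall fun n => Continuous.aestronglyMeasurable (by fun_prop))
    (.of_forall fun n => ?_) (Continuous.intervalIntegrable (by fun_prop) _ _) ?_
  · filter_upwards [hae] with t ht htT
    have := ht htT
    rw [Real.norm_eq_abs, abs_exp, exp_le_exp]
    exact sub_le_self _ (by positivity)
  · filter_upwards [hae] with t ht htT
    refine tendsto_exp_atBot.comp ?_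
    simp only [sub_eq_add_neg]
    exact tendsto_atBot_add_const_left _ _
      (tendsto_neg_atTop_atBot.comp (tendsto_natCast_atTop_atTop.atTop_mul_const (ht htT)))

theorem exists_integral_exp_add_mul_eq {T : ℝ} (hT : 0 < T) {a w : ℝ → ℝ} (ha : Continuous a)
    (hw : Continuous w) (hpos : ∀ t ∈ Ioo 0 T, 0 < w t) (hα : 0 < α) :
    ∃ κ, ∫ t in (0 : ℝ)..T, exp (a t + κ * w t) = α := by
  have hcont : Continuous fun κ => ∫ t in (0 : ℝ)..T, exp (a t + κ * w t) :=
    intervalIntegral.continuous_parametric_intervalIntegral_of_continuous'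
      (by simp only [Function.uncurry_def]; fun_prop) _ _
  refine mem_range_of_exists_le_of_exists_ge hcont ?_ ?_
  · obtain ⟨n, hn⟩ :=
      ((tendsto_integral_exp_sub_mul hT.le ha hw hpos).eventually (gt_mem_nhds hα)).exists
    exact ⟨-n, by simpa only [neg_mul, ← sub_eq_add_neg] using hn.le⟩
  · have hwint : 0 < ∫ t in (0 : ℝ)..T, w t :=
      intervalIntegral.intervalIntegral_pos_of_pos_on (hw.intervalIntegrable _ _) hpos hT
    set c := ∫ t in (0 : ℝ)..T, (1 + a t) with hc
    set κ := (α - c) / ∫ t in (0 : ℝ)..T, w t with hκ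
    refine ⟨κ, ?_⟩
    calc α = c + κ * ∫ t in (0 : ℝ)..T, w t := by rw [hκ, div_mul_cancel₀ _ hwint.ne']; ring
      _ = ∫ t in (0 : ℝ)..T, (1 + a t + κ * w t) := by
          rw [hc, ← intervalIntegral.integral_const_mul, ← intervalIntegral.integral_add] <;>
            exact Continuous.intervalIntegrable (by fun_prop) _ _
      _ ≤ ∫ t in (0 : ℝ)..T, exp (a t + κ * w t) := by
          refine intervalIntegral.integral_mono_on hT.le
            (Continuous.intervalIntegrable (by fun_prop) _ _)
            (Continuous.intervalIntegrable (by fun_prop) _ _) fun t _ => ?_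
          linarith [add_one_le_exp (a t + κ * w t)]

open Polynomial in
/- The exponential of a polynomial interpolates the prescribed values and slopes at `0` and `T`;
its free multiple of `t² (T - t)²` adjusts the integral. -/
theorem exists_polynomial_exp_interpolation {T b c : ℝ} (hT : 0 < T) (hb : 0 < b) (hα : 0 < α) :
    ∃ p : ℝ[X], p.eval 0 = 0 ∧ p.derivative.eval 0 = 0 ∧ exp (p.eval T) = b ∧
      exp (p.eval T) * p.derivative.eval T = c ∧ ∫ t in (0 : ℝ)..T, exp (p.eval t) = α := by
  set a₀ := Real.log b / T ^ 2 with ha₀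
  set a₁ := (c / b - 2 * T * a₀) / T ^ 2 with ha₁
  set p₀ : ℝ[X] := X ^ 2 * (C a₀ + C a₁ * (X - C T)) with hp₀
  set w : ℝ[X] := X ^ 2 * (C T - X) ^ 2 with hw
  obtain ⟨κ, hκ⟩ := exists_integral_exp_add_mul_eq hT p₀.continuous w.continuous
    (fun t ht => by
      have := ht.1; have := sub_pos.2 ht.2
      simp only [hw, eval_mul, eval_pow, eval_X, eval_sub, eval_C]
      positivity) hα
  have hvalue : (p₀ + C κ * w).eval T = Real.log b := by
    simp [hp₀, hw, ha₀, mul_div_cancel₀, hT.ne']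
  have hslope : (p₀ + C κ * w).derivative.eval T = c / b := by
    simp [hp₀, hw, ha₁, derivative_mul, derivative_pow]
    field_simp
    ring
  refine ⟨p₀ + C κ * w, by simp [hp₀, hw], by simp [hp₀, hw, derivative_mul, derivative_pow], ?_,
    ?_, by simpa using hκ⟩
  · rw [hvalue, exp_log hb]
  · rw [hvalue, hslope, exp_log hb, mul_div_cancel₀ _ hb.ne']

theorem exists_hasMonodromy (hα : 0 < α) (hrow : 0 < A 0 0 ^ 2 + A 0 1 ^ 2) :
    ∃ φ φ' φ'' : ℝ → ℝ, HasMonodromy A α φ φ' φ'' := by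
  obtain ⟨p, h0, h0', hT, hT', hint⟩ := exists_polynomial_exp_interpolation
    (c := -(2 * (A 0 0 * A 1 0 + A 0 1 * A 1 1)) / (A 0 0 ^ 2 + A 0 1 ^ 2) ^ 2) two_pi_pos
    (one_div_pos.2 hrow) hα
  have hexp (t : ℝ) := (p.hasDerivAt t).exp
  refine ⟨fun t => exp (p.eval t), fun t => exp (p.eval t) * p.derivative.eval t, fun t =>
    exp (p.eval t) * p.derivative.eval t * p.derivative.eval t +
      exp (p.eval t) * p.derivative.derivative.eval t, ?_⟩
  exact
    { pos := fun t => exp_pos _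
      hasDerivAt := hexp
      hasDerivAt' := fun t => (hexp t).mul (p.derivative.hasDerivAt t)
      continuous'' := by fun_prop
      zero := by simp [h0]
      deriv_zero := by simp [h0']
      two_pi := hT
      deriv_two_pi := hT'
      integral := hint }

end Monodromy

/-! ### Weak perturbations of the monodromy -/

theorem abs_sum_mul_le {ι : Type*} [Fintype ι] {K : ℝ} {a : ι → ℝ} (ha : ∀ l, |a l| ≤ K)
    (Δ : ι → ℝ) : |∑ l, Δ l * a l| ≤ Fintype.card ι * K * ‖Δ‖ := by
  refine (Finset.abs_sum_le_sum_abs _ _).trans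
    ((Finset.sum_le_card_nsmul _ _ (‖Δ‖ * K) fun l _ =>
      abs_mul_le_mul (norm_le_pi_norm Δ l) (ha l)).trans_eq ?_)
  rw [Finset.card_univ, nsmul_eq_mul]
  ring

/-- On `[0, T]`, the potentials `Q` and `Q'` are bounded by `K` and weakly `ε`-close to `q`, and
their difference is `∑ l, Δ l * ξ l` up to an error of `ε ‖Δ‖`, where `ξ l` is bounded by `K` and
weakly `ε`-close to `ζ l`. -/
structure IsWeakPerturbation {ι : Type*} [Fintype ι] (T K ε : ℝ) (q Q Q' : ℝ → ℝ)
    (ξ ζ : ι → ℝ → ℝ) (Δ : ι → ℝ) : Prop where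
  continuous_base : Continuous q
  continuous : Continuous Q
  continuous' : Continuous Q'
  continuous_direction (l : ι) : Continuous (ξ l)
  continuous_limit (l : ι) : Continuous (ζ l)
  abs_le : ∀ t ∈ Icc 0 T, |Q t| ≤ K
  abs_le' : ∀ t ∈ Icc 0 T, |Q' t| ≤ K
  abs_direction_le (l : ι) : ∀ t ∈ Icc 0 T, |ξ l t| ≤ K
  weakClose : WeakClose T ε Q q
  weakClose' : WeakClose T ε Q' q
  weakClose_direction (l : ι) : WeakClose T ε (ξ l) (ζ l)
  abs_sub_sub_le : ∀ t ∈ Icc 0 T, |Q t - Q' t - ∑ l, Δ l * ξ l t| ≤ ε * ‖Δ‖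
  le_one : ε ≤ 1

section Perturbation

variable {T K ε : ℝ} {q Q Q' y y' z z' v v' w w' : ℝ → ℝ}

theorem WeakClose.c1Bounded (hT : 0 ≤ T) (hK : 0 ≤ K) (hQ : Continuous Q) (hq : Continuous q)
    (hv : IsHillSolution Q v v') (hy : IsHillSolution q y y') (h0 : v 0 = y 0) (h0' : v' 0 = y' 0)
    (hQK : ∀ t ∈ Icc 0 T, |Q t| ≤ K) (hyK : C1Bounded T K y y') (hε : ε ≤ 1)
    (hQq : WeakClose T ε Q q) : C1Bounded T (K + gronwallConst T K K) v v' :=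
  ((hQq.c1Bounded_sub hQ hq hv hy h0 h0' hQK hyK).mono
    (mul_le_of_le_one_right (gronwallConst_nonneg hT hK) hε)).of_sub hyK

theorem WeakClose.abs_integral_sub_mul_mul_le (hT : 0 ≤ T) (hK : 0 ≤ K) (hQ : Continuous Q)
    (hq : Continuous q) (hz : IsHillSolution q z z') (hv : IsHillSolution Q v v')
    (hy : IsHillSolution q y y') (h0 : v 0 = y 0) (h0' : v' 0 = y' 0)
    (hQK : ∀ t ∈ Icc 0 T, |Q t| ≤ K) (hzK : C1Bounded T K z z') (hyK : C1Bounded T K y y')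
    (hε : ε ≤ 1) (hQq : WeakClose T ε Q q) :
    |∫ t in (0 : ℝ)..T, (Q t - q t) * (z t * v t)| ≤
      2 * K * (K + gronwallConst T K K) * (1 + T) * ε := by
  have := hz.continuous; have := hz.continuous_deriv
  have := hv.continuous; have := hv.continuous_deriv
  refine (hQq.abs_integral_sub_mul_le hQ hq (k := fun t => z t * v t)
    (k' := fun t => z' t * v t + z t * v' t) (by fun_prop)
    (fun t => (hz t).1.mul (hv t).1) hT (hzK.mul (hQq.c1Bounded hT hK hQ hq hv hy h0 h0' hQK hyK
      hε))).trans_eq (by ring)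

theorem integral_sub_mul_sub_integral_sub_mul {ι : Type*} [Fintype ι] {F G : ℝ → ℝ}
    {ξ : ι → ℝ → ℝ} {Δ c : ι → ℝ} (hQ : Continuous Q) (hQ' : Continuous Q') (hq : Continuous q)
    (hξ : ∀ l, Continuous (ξ l)) (hF : Continuous F) (hG : Continuous G) :
    (∫ t in (0 : ℝ)..T, (Q t - q t) * F t) - (∫ t in (0 : ℝ)..T, (Q' t - q t) * G t) -
        ∑ l, Δ l * c l =
      (∫ t in (0 : ℝ)..T, (Q t - Q' t - ∑ l, Δ l * ξ l t) * F t) +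
        ∑ l, Δ l * ((∫ t in (0 : ℝ)..T, ξ l t * F t) - c l) +
        ∫ t in (0 : ℝ)..T, (Q' t - q t) * (F t - G t) := by
  have hsum : ∑ l, Δ l * ∫ t in (0 : ℝ)..T, ξ l t * F t =
      ∫ t in (0 : ℝ)..T, (∑ l, Δ l * ξ l t) * F t := by
    simp only [← intervalIntegral.integral_const_mul, Finset.sum_mul, mul_assoc]
    exact (intervalIntegral.integral_finsetSum
      fun l _ => Continuous.intervalIntegrable (by fun_prop) _ _).symm
  have hint : (∫ t in (0 : ℝ)..T, (Q t - q t) * F t) - (∫ t in (0 : ℝ)..T, (Q' t - q t) * G t) =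
      (∫ t in (0 : ℝ)..T, (Q t - Q' t - ∑ l, Δ l * ξ l t) * F t) +
        (∫ t in (0 : ℝ)..T, (∑ l, Δ l * ξ l t) * F t) +
        ∫ t in (0 : ℝ)..T, (Q' t - q t) * (F t - G t) := by
    rw [← intervalIntegral.integral_sub, ← intervalIntegral.integral_add,
      ← intervalIntegral.integral_add]
    · exact intervalIntegral.integral_congr fun t _ => by ring
    all_goals exact Continuous.intervalIntegrable (by fun_prop) _ _
  simp only [mul_sub (Δ _), Finset.sum_sub_distrib]
  rw [hint, hsum]
  ring

namespace IsWeakPerturbation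

variable {ι : Type*} [Fintype ι] {ξ ζ : ι → ℝ → ℝ} {Δ : ι → ℝ}

theorem nonneg (h : IsWeakPerturbation T K ε q Q Q' ξ ζ Δ) (hT : 0 ≤ T) : 0 ≤ ε :=
  h.weakClose.nonneg hT

theorem weakClose_sub (h : IsWeakPerturbation T K ε q Q Q' ξ ζ Δ) (hK : 0 ≤ K) :
    WeakClose T (T * (Fintype.card ι * K + 1) * ‖Δ‖) Q Q' := by
  have hsub : ∀ t ∈ Icc 0 T, |Q t - Q' t| ≤ (Fintype.card ι * K + 1) * ‖Δ‖ := fun t ht => by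
    have h₁ := h.abs_sub_sub_le t ht
    have h₂ := abs_sum_mul_le (fun l => h.abs_direction_le l t ht) Δ
    have h₃ := mul_le_of_le_one_left (norm_nonneg Δ) h.le_one
    have h₄ := abs_sub_abs_le_abs_sub (Q t - Q' t) (∑ l, Δ l * ξ l t)
    linarith
  intro t ht
  refine (abs_integral_le_mul ht.1 fun s hs => hsub s ⟨hs.1, hs.2.trans ht.2⟩).trans ?_
  have := mul_le_mul_of_nonneg_left ht.2
    (by positivity : 0 ≤ (Fintype.card ι * K + 1) * ‖Δ‖)
  linarith

/-- The constant of the estimate `IsWeakPerturbation.abs_integral_sub_integral_sub_sum_le`. -/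
noncomputable def perturbationConst (m : ℕ) (T K : ℝ) : ℝ :=
  K * (K + gronwallConst T K K) * T +
    m * (K * K * gronwallConst T K K * T + 2 * K * K * (1 + T)) +
      2 * K * (gronwallConst T K (K + gronwallConst T K K) * (T * (m * K + 1))) * (1 + T)

theorem perturbationConst_nonneg {m : ℕ} (hT : 0 ≤ T) (hK : 0 ≤ K) :
    0 ≤ perturbationConst m T K := by
  have h₁ := gronwallConst_nonneg (K := K) hT hK
  have h₂ := gronwallConst_nonneg (K := K) hT (add_nonneg hK h₁)
  unfold perturbationConst
  positivity

theorem abs_integral_direction_sub_le (h : IsWeakPerturbation T K ε q Q Q' ξ ζ Δ) (hT : 0 ≤ T)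
    (hz : IsHillSolution q z z') (hy : IsHillSolution q y y') (hv : IsHillSolution Q v v')
    (hv0 : v 0 = y 0) (hv0' : v' 0 = y' 0) (hzK : C1Bounded T K z z')
    (hyK : C1Bounded T K y y') (l : ι) :
    |(∫ t in (0 : ℝ)..T, ξ l t * (z t * v t)) - ∫ t in (0 : ℝ)..T, ζ l t * (z t * y t)| ≤
      (K * K * gronwallConst T K K * T + 2 * K * K * (1 + T)) * ε := by
  have := hz.continuous; have := hz.continuous_deriv; have := hy.continuous
  have := hy.continuous_deriv; have := hv.continuous
  have := h.continuous_direction l; have := h.continuous_limit l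
  have hvy := h.weakClose.c1Bounded_sub h.continuous h.continuous_base hv hy hv0 hv0' h.abs_le hyK
  have hsplit : (∫ t in (0 : ℝ)..T, ξ l t * (z t * v t)) - ∫ t in (0 : ℝ)..T, ζ l t * (z t * y t) =
      (∫ t in (0 : ℝ)..T, ξ l t * z t * (v t - y t)) +
        ∫ t in (0 : ℝ)..T, (ξ l t - ζ l t) * (z t * y t) := by
    rw [← intervalIntegral.integral_sub, ← intervalIntegral.integral_add]
    · exact intervalIntegral.integral_congr fun t _ => by ring
    all_goals exact Continuous.intervalIntegrable (by fun_prop) _ _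
  have h₁ : |∫ t in (0 : ℝ)..T, ξ l t * z t * (v t - y t)| ≤
      K * K * (gronwallConst T K K * ε) * T :=
    abs_integral_le_mul hT fun t ht =>
      abs_mul_le_mul (abs_mul_le_mul (h.abs_direction_le l t ht) (hzK t ht).1) (hvy t ht).1
  have h₂ := (h.weakClose_direction l).abs_integral_sub_mul_le (h.continuous_direction l)
    (h.continuous_limit l) (k := fun t => z t * y t) (k' := fun t => z' t * y t + z t * y' t)
    (by fun_prop) (fun t => (hz t).1.mul (hy t).1) hT (hzK.mul hyK)
  rw [hsplit]
  exact (abs_add_le _ _).trans (by linarith)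

theorem abs_integral_sub_integral_sub_sum_le (h : IsWeakPerturbation T K ε q Q Q' ξ ζ Δ)
    (hT : 0 ≤ T) (hK : 0 ≤ K) (hz : IsHillSolution q z z') (hy : IsHillSolution q y y')
    (hv : IsHillSolution Q v v') (hw : IsHillSolution Q' w w') (hv0 : v 0 = y 0)
    (hv0' : v' 0 = y' 0) (hw0 : w 0 = y 0) (hw0' : w' 0 = y' 0) (hzK : C1Bounded T K z z')
    (hyK : C1Bounded T K y y') :
    |(∫ t in (0 : ℝ)..T, (Q t - q t) * (z t * v t)) -
        (∫ t in (0 : ℝ)..T, (Q' t - q t) * (z t * w t)) -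
        ∑ l, Δ l * ∫ t in (0 : ℝ)..T, ζ l t * (z t * y t)| ≤
      perturbationConst (Fintype.card ι) T K * ε * ‖Δ‖ := by
  have := h.continuous; have := h.continuous'; have := h.continuous_base
  have := h.continuous_direction; have := hz.continuous; have := hv.continuous
  have := hw.continuous; have := hz.continuous_deriv; have := hv.continuous_deriv
  have := hw.continuous_deriv
  have hvB := h.weakClose.c1Bounded hT hK h.continuous h.continuous_base hv hy hv0 hv0' h.abs_le
    hyK h.le_one
  have hwB := h.weakClose'.c1Bounded hT hK h.continuous' h.continuous_base hw hy hw0 hw0' h.abs_le'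
    hyK h.le_one
  have hvw := (h.weakClose_sub hK).c1Bounded_sub h.continuous h.continuous' hv hw
    (hv0.trans hw0.symm) (hv0'.trans hw0'.symm) h.abs_le hwB
  have h₁ := abs_integral_le_mul hT fun t ht =>
    abs_mul_le_mul (h.abs_sub_sub_le t ht) (abs_mul_le_mul (hzK t ht).1 (hvB t ht).1)
  have h₂ := abs_sum_mul_le
    (fun l => h.abs_integral_direction_sub_le hT hz hy hv hv0 hv0' hzK hyK l) Δ
  have h₃ := h.weakClose'.abs_integral_sub_mul_le h.continuous' h.continuous_base
    (k := fun t => z t * (v t - w t)) (k' := fun t => z' t * (v t - w t) + z t * (v' t - w' t))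
    (by fun_prop) (fun t => (hz t).1.mul ((hv t).1.sub (hw t).1)) hT (hzK.mul hvw)
  rw [integral_sub_mul_sub_integral_sub_mul h.continuous h.continuous' h.continuous_base
    h.continuous_direction (by fun_prop) (by fun_prop)]
  simp only [← mul_sub]
  refine (abs_add_le _ _).trans ((add_le_add ((abs_add_le _ _).trans (add_le_add h₁ h₂))
    h₃).trans_eq ?_)
  unfold perturbationConst
  ring

end IsWeakPerturbation

/-! ### The defect of the monodromy -/

/-- The products `v₁²`, `v₁v₂`, `v₂²` of the fundamental solutions. -/
noncomputable def solProduct (q : ℝ → ℝ) (k : Fin 3) (t : ℝ) : ℝ :=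
  hillSol q (![0, 1, 1] k) t * hillSol q (![0, 0, 1] k) t

/-- Three entries of `Jᵀ Aᵀ J Φ_Q(T)`, `J = [[0, 1], [-1, 0]]`, minus those of the identity matrix:
for `A` in `SL(2, ℝ)` this measures the failure of `Φ_Q(T) = A`. -/
noncomputable def monodromyDefect (T : ℝ) (A : Matrix (Fin 2) (Fin 2) ℝ) (Q : ℝ → ℝ)
    (k : Fin 3) : ℝ :=
  A 0 (![0, 1, 1] k) * hillSol' Q (![0, 0, 1] k) T - A 1 (![0, 1, 1] k) * hillSol Q (![0, 0, 1] k) T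
    + ![0, 1, 0] k

variable {A : Matrix (Fin 2) (Fin 2) ℝ}

theorem monodromyDefect_eq_integral (hq : Continuous q) (hQ : Continuous Q)
    (hA : fundMatrix q T = A) (k : Fin 3) :
    monodromyDefect T A Q k = ∫ t in (0 : ℝ)..T,
      (Q t - q t) * (hillSol q (![0, 1, 1] k) t * hillSol Q (![0, 0, 1] k) t) := by
  rw [(isHillSolution_hillSol hq _).integral_mul_eq_wronskian hq hQ (isHillSolution_hillSol hQ _) T,
    ← hA]
  fin_cases k <;> simp [monodromyDefect, fundMatrix]

theorem monodromyDefect_self (hq : Continuous q) (hA : fundMatrix q T = A) :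
    monodromyDefect T A q = 0 := by
  ext k
  simp [monodromyDefect_eq_integral hq hq hA]

theorem fundMatrix_eq_of_monodromyDefect_eq_zero (hA : A.det = 1) (hQ : Continuous Q)
    (h : monodromyDefect T A Q = 0) : fundMatrix Q T = A := by
  have h₀ := congrFun h 0
  have h₁ := congrFun h 1
  have h₂ := congrFun h 2
  have hQdet := hillSol_mul_hillSol'_sub_eq_one hQ T
  rw [Matrix.det_fin_two] at hA
  simp only [monodromyDefect, Matrix.cons_val, Pi.zero_apply] at h₀ h₁ h₂
  have e₀₀ : hillSol Q 0 T = A 0 0 := by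
    linear_combination (-hillSol Q 0 T) * hA + A 0 1 * h₀ - A 0 0 * h₁
  have e₁₀ : hillSol' Q 0 T = A 1 0 := by
    linear_combination (-hillSol' Q 0 T) * hA + A 1 1 * h₀ - A 1 0 * h₁
  rw [e₀₀, e₁₀] at hQdet
  have e₀₁ : hillSol Q 1 T = A 0 1 := by
    linear_combination (-hillSol Q 1 T) * hA - A 0 0 * h₂ + A 0 1 * hQdet
  have e₁₁ : hillSol' Q 1 T = A 1 1 := by
    linear_combination (-hillSol' Q 1 T) * hA - A 1 0 * h₂ + A 1 1 * hQdet
  rw [fundMatrix, e₀₀, e₀₁, e₁₀, e₁₁, ← Matrix.eta_fin_two]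

theorem WeakClose.norm_monodromyDefect_le (hT : 0 ≤ T) (hK : 0 ≤ K) (hQ : Continuous Q)
    (hq : Continuous q) (hA : fundMatrix q T = A) (hQK : ∀ t ∈ Icc 0 T, |Q t| ≤ K)
    (hqK : ∀ i, C1Bounded T K (hillSol q i) (hillSol' q i)) (hε : ε ≤ 1)
    (hQq : WeakClose T ε Q q) :
    ‖monodromyDefect T A Q‖ ≤ 2 * K * (K + gronwallConst T K K) * (1 + T) * ε := by
  have hε0 := hQq.nonneg hT
  have hM := gronwallConst_nonneg (K := K) hT hK
  refine (pi_norm_le_iff_of_nonneg (by positivity)).2 fun k => ?_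
  rw [monodromyDefect_eq_integral hq hQ hA]
  exact hQq.abs_integral_sub_mul_mul_le hT hK hQ hq (isHillSolution_hillSol hq _)
    (isHillSolution_hillSol hQ _) (isHillSolution_hillSol hq _) (hillSol_zero_eq _ _ _)
    (hillSol'_zero_eq _ _ _) hQK (hqK _) (hqK _) hε

theorem IsWeakPerturbation.norm_monodromyDefect_sub_sub_le {ξ ζ : Fin 3 → ℝ → ℝ} {Δ : Fin 3 → ℝ}
    (h : IsWeakPerturbation T K ε q Q Q' ξ ζ Δ) (hT : 0 ≤ T) (hK : 0 ≤ K)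
    (hA : fundMatrix q T = A) (hqK : ∀ i, C1Bounded T K (hillSol q i) (hillSol' q i))
    (hζ : ∀ k l, ∫ t in (0 : ℝ)..T, ζ l t * solProduct q k t = if k = l then 1 else 0) :
    ‖monodromyDefect T A Q - monodromyDefect T A Q' - Δ‖ ≤
      perturbationConst 3 T K * ε * ‖Δ‖ := by
  have hε0 := h.nonneg hT
  have hC := perturbationConst_nonneg (m := 3) hT hK
  refine (pi_norm_le_iff_of_nonneg (by positivity)).2 fun k => ?_
  have hq := h.continuous_base
  have hest := h.abs_integral_sub_integral_sub_sum_le hT hK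
    (isHillSolution_hillSol hq (![0, 1, 1] k)) (isHillSolution_hillSol hq (![0, 0, 1] k))
    (isHillSolution_hillSol h.continuous _) (isHillSolution_hillSol h.continuous' _)
    (hillSol_zero_eq _ _ _) (hillSol'_zero_eq _ _ _) (hillSol_zero_eq _ _ _)
    (hillSol'_zero_eq _ _ _) (hqK _) (hqK _)
  have hdual (l : Fin 3) : ∫ t in (0 : ℝ)..T,
      ζ l t * (hillSol q (![0, 1, 1] k) t * hillSol q (![0, 0, 1] k) t) = if k = l then 1 else 0 :=
    hζ k l
  simp only [hdual, mul_ite, mul_one, mul_zero, Finset.sum_ite_eq, Finset.mem_univ,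
    if_true] at hest
  simpa [monodromyDefect_eq_integral hq h.continuous hA,
    monodromyDefect_eq_integral hq h.continuous' hA] using hest

theorem angularSpeed_le {B t : ℝ} (hq : Continuous q) (hB : ∀ i, |hillSol' q i t| ≤ B) :
    angularSpeed q t ≤ 2 * B ^ 2 := by
  have hr := radiusSq_pos hq t
  have h₀ := sq_le_sq' (abs_le.1 (hB 0)).1 (abs_le.1 (hB 0)).2
  have h₁ := sq_le_sq' (abs_le.1 (hB 1)).1 (abs_le.1 (hB 1)).2
  rw [angularSpeed, div_le_iff₀ hr, mul_comm]
  exact (one_le_radiusSq_mul hq t).trans (mul_le_mul_of_nonneg_left (by linarith) hr.le)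

theorem abs_angularSpeed_sub_le {B D t : ℝ} (hQ : Continuous Q) (hq : Continuous q)
    (hQB : ∀ i, |hillSol Q i t| ≤ B ∧ |hillSol' Q i t| ≤ B)
    (hqB : ∀ i, |hillSol q i t| ≤ B ∧ |hillSol' q i t| ≤ B)
    (hD : ∀ i, |hillSol Q i t - hillSol q i t| ≤ D) :
    |angularSpeed Q t - angularSpeed q t| ≤ 2 * B ^ 2 * (2 * B ^ 2) * (4 * B * D) := by
  have hRQ := (radiusSq_pos hQ t).ne'
  have hRq := (radiusSq_pos hq t).ne'
  have hpos {p : ℝ → ℝ} (hp : Continuous p) : |angularSpeed p t| = angularSpeed p t :=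
    abs_of_pos ((isAngularSpeed_angularSpeed hp).pos t)
  have hsum (i : Fin 2) : |hillSol q i t + hillSol Q i t| ≤ B + B :=
    (abs_add_le _ _).trans (add_le_add (hqB i).1 (hQB i).1)
  have hdiff (i : Fin 2) : |hillSol q i t - hillSol Q i t| ≤ D :=
    (abs_sub_comm _ _).trans_le (hD i)
  have hsplit : angularSpeed Q t - angularSpeed q t =
      angularSpeed Q t * angularSpeed q t * (radiusSq q t - radiusSq Q t) := by
    unfold angularSpeed
    field_simp
  have hfactor : radiusSq q t - radiusSq Q t =
      (hillSol q 0 t + hillSol Q 0 t) * (hillSol q 0 t - hillSol Q 0 t) +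
        (hillSol q 1 t + hillSol Q 1 t) * (hillSol q 1 t - hillSol Q 1 t) := by
    unfold radiusSq
    ring
  have hradius : |radiusSq q t - radiusSq Q t| ≤ 4 * B * D := by
    rw [hfactor]
    have h₀ := abs_mul_le_mul (hsum 0) (hdiff 0)
    have h₁ := abs_mul_le_mul (hsum 1) (hdiff 1)
    exact (abs_add_le _ _).trans (by linarith)
  rw [hsplit]
  exact abs_mul_le_mul (abs_mul_le_mul
    ((hpos hQ).trans_le (angularSpeed_le hQ fun i => (hQB i).2))
    ((hpos hq).trans_le (angularSpeed_le hq fun i => (hqB i).2))) hradius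

theorem WeakClose.exists_abs_hillAngle_sub_le (hT : 0 ≤ T) (hK : 0 ≤ K) : ∃ C, 0 ≤ C ∧
    ∀ {ε : ℝ} {q Q : ℝ → ℝ}, Continuous Q → Continuous q → (∀ t ∈ Icc 0 T, |Q t| ≤ K) →
      (∀ i, C1Bounded T K (hillSol q i) (hillSol' q i)) → ε ≤ 1 → WeakClose T ε Q q →
        |hillAngle Q T - hillAngle q T| ≤ C * ε := by
  have hM := gronwallConst_nonneg (K := K) hT hK
  set M := gronwallConst T K K
  set B := K + M
  refine ⟨2 * B ^ 2 * (2 * B ^ 2) * (4 * B * M) * T, by positivity, ?_⟩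
  intro ε q Q hQ hq hQK hqK hε hQq
  have hQs := isHillSolution_hillSol hQ
  have hqs := isHillSolution_hillSol hq
  have hQB (i : Fin 2) : C1Bounded T B (hillSol Q i) (hillSol' Q i) :=
    hQq.c1Bounded hT hK hQ hq (hQs i) (hqs i) (hillSol_zero_eq _ _ _)
      (hillSol'_zero_eq _ _ _) hQK (hqK i) hε
  have hqB (i : Fin 2) : C1Bounded T B (hillSol q i) (hillSol' q i) :=
    (hqK i).mono (le_add_of_nonneg_right hM)
  have hD (i : Fin 2) := hQq.c1Bounded_sub hQ hq (hQs i) (hqs i) (hillSol_zero_eq _ _ _)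
    (hillSol'_zero_eq _ _ _) hQK (hqK i)
  have hint : hillAngle Q T - hillAngle q T =
      ∫ t in (0 : ℝ)..T, (angularSpeed Q t - angularSpeed q t) :=
    (intervalIntegral.integral_sub
      ((isAngularSpeed_angularSpeed hQ).continuous.intervalIntegrable _ _)
      ((isAngularSpeed_angularSpeed hq).continuous.intervalIntegrable _ _)).symm
  rw [hint]
  refine (abs_integral_le_mul hT fun t ht => abs_angularSpeed_sub_le hQ hq (fun i => hQB i t ht)
    (fun i => hqB i t ht) fun i => (hD i t ht).1).trans_eq (by ring)

end Perturbation

/-! ### Oscillations with a prescribed mean -/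

theorem continuous_of_strictMono_of_apply_eq {X : Type*} [TopologicalSpace X] {F : X → ℝ → ℝ}
    {r c : X → ℝ} (hF : Continuous (Function.uncurry F)) (hmono : ∀ x, StrictMono (F x))
    (hc : Continuous c) (hr : ∀ x, F x (r x) = c x) : Continuous r := by
  have hFb : ∀ b, Continuous fun x => F x b := fun b => by fun_prop
  refine continuous_iff_continuousAt.2 fun x₀ => tendsto_order.2 ⟨fun b hb => ?_, fun b hb => ?_⟩
  · have : F x₀ b < c x₀ := hr x₀ ▸ hmono x₀ hb
    filter_upwards [(hFb b).continuousAt.eventually_lt hc.continuousAt this] with x hx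
    exact (hmono x).lt_iff_lt.1 (hr x ▸ hx)
  · have : c x₀ < F x₀ b := hr x₀ ▸ hmono x₀ hb
    filter_upwards [hc.continuousAt.eventually_lt (hFb b).continuousAt this] with x hx
    exact (hmono x).lt_iff_lt.1 (hr x ▸ hx)

theorem integral_max_zero_sq_pos {f : ℝ → ℝ} (hf : Continuous f)
    (hpos : ∃ x ∈ Icc (0 : ℝ) 1, 0 < f x) : 0 < ∫ x in (0 : ℝ)..1, max (f x) 0 ^ 2 := by
  obtain ⟨x, hx, hfx⟩ := hpos
  exact intervalIntegral.integral_pos one_pos (by fun_prop) (fun _ _ => sq_nonneg _)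
    ⟨x, hx, pow_pos (lt_max_of_lt_left hfx) 2⟩

theorem exists_density_integral_mul_eq_zero {Y : Type*} [TopologicalSpace Y] {u : Y → ℝ → ℝ}
    (hu : Continuous (Function.uncurry u)) (hneg : ∀ y, ∃ x ∈ Icc (0 : ℝ) 1, u y x < 0)
    (hpos : ∀ y, ∃ x ∈ Icc (0 : ℝ) 1, 0 < u y x) :
    ∃ ρ : Y → ℝ → ℝ, Continuous (Function.uncurry ρ) ∧ (∀ y x, 1 ≤ ρ y x) ∧
      ∀ y, ∫ x in (0 : ℝ)..1, u y x * ρ y x = 0 := by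
  set m : Y → ℝ := fun y => ∫ x in (0 : ℝ)..1, u y x
  set P : Y → ℝ := fun y => ∫ x in (0 : ℝ)..1, max (u y x) 0 ^ 2
  set N : Y → ℝ := fun y => ∫ x in (0 : ℝ)..1, max (-u y x) 0 ^ 2
  have hP : ∀ y, 0 < P y := fun y => integral_max_zero_sq_pos (by fun_prop) (hpos y)
  have hN : ∀ y, 0 < N y := fun y => integral_max_zero_sq_pos (by fun_prop) (by simpa using hneg y)
  have hm : Continuous m := by fun_prop
  have hPc : Continuous P :=
    intervalIntegral.continuous_parametric_intervalIntegral_of_continuous' (by fun_prop) 0 1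
  have hNc : Continuous N :=
    intervalIntegral.continuous_parametric_intervalIntegral_of_continuous' (by fun_prop) 0 1
  refine ⟨fun y x => 1 + max (-m y) 0 / P y * max (u y x) 0 + max (m y) 0 / N y * max (-u y x) 0,
    ?_, fun y x => ?_, fun y => ?_⟩
  · have hPm : Continuous fun y => max (-m y) 0 / P y := by
      fun_prop (disch := exact fun y => (hP y).ne')
    have hNm : Continuous fun y => max (m y) 0 / N y := by
      fun_prop (disch := exact fun y => (hN y).ne')
    exact (continuous_const.add ((hPm.comp continuous_fst).mul (hu.max continuous_const))).add
      ((hNm.comp continuous_fst).mul (hu.neg.max continuous_const))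
  · have := hP y
    have := hN y
    have : 0 ≤ max (-m y) 0 / P y * max (u y x) 0 := by positivity
    have : 0 ≤ max (m y) 0 / N y * max (-u y x) 0 := by positivity
    linarith
  · have hsplit : ∀ x, u y x * (1 + max (-m y) 0 / P y * max (u y x) 0 +
        max (m y) 0 / N y * max (-u y x) 0) =
        u y x + max (-m y) 0 / P y * max (u y x) 0 ^ 2 - max (m y) 0 / N y * max (-u y x) 0 ^ 2 :=
      fun x => by rcases le_total (u y x) 0 with h | h <;> simp [h] <;> ring
    have hm0 : m y + max (-m y) 0 - max (m y) 0 = 0 := by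
      rcases le_total (m y) 0 with h | h <;> simp [h]
    simp only [hsplit]
    rw [intervalIntegral.integral_sub, intervalIntegral.integral_add,
      intervalIntegral.integral_const_mul, intervalIntegral.integral_const_mul,
      div_mul_cancel₀ _ (hP y).ne', div_mul_cancel₀ _ (hN y).ne', hm0]
    all_goals exact Continuous.intervalIntegrable (by fun_prop) _ _

-- `X y` inverts the normalized primitive of `ρ y`.
theorem exists_reparametrization {Y : Type*} [TopologicalSpace Y] {ρ : Y → ℝ → ℝ}
    (hρ : Continuous (Function.uncurry ρ)) (hρ1 : ∀ y x, 1 ≤ ρ y x) :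
    ∃ X : Y → ℝ → ℝ, Continuous (Function.uncurry X) ∧ (∀ y, X y 0 = 0) ∧ (∀ y, X y 1 = 1) ∧
      ∀ y (k : ℝ → ℝ), Continuous k →
        (∫ x in (0 : ℝ)..1, ρ y x) * ∫ w in (0 : ℝ)..1, k (X y w) =
          ∫ x in (0 : ℝ)..1, k x * ρ y x := by
  set F : Y → ℝ → ℝ := fun y x => ∫ t in (0 : ℝ)..x, ρ y t
  have hρy : ∀ y, Continuous (ρ y) := fun y => by fun_prop
  have hF : Continuous (Function.uncurry F) :=
    intervalIntegral.continuous_parametric_primitive_of_continuous hρ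
  have hFd : ∀ y x, HasDerivAt (F y) (ρ y x) x := fun y x =>
    ((hρy y).integral_hasStrictDerivAt 0 x).hasDerivAt
  have hmono : ∀ y, StrictMono (F y) := fun y =>
    strictMono_of_hasDerivAt_pos (hFd y) fun x => one_pos.trans_le (hρ1 y x)
  have hsub : ∀ y, Monotone fun x => F y x - x := fun y =>
    monotone_of_hasDerivAt_nonneg (fun x => (hFd y x).sub (hasDerivAt_id x))
      fun x => sub_nonneg.2 (hρ1 y x)
  have hF0 : ∀ y, F y 0 = 0 := fun y => intervalIntegral.integral_same
  have hsurj : ∀ y, Function.Surjective (F y) := fun y =>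
    Continuous.surjective (by fun_prop)
      (tendsto_atTop_mono' _ (by
        filter_upwards [eventually_ge_atTop 0] with x hx
        simpa [hF0] using hsub y hx) tendsto_id)
      (tendsto_atBot_mono' _ (by
        filter_upwards [eventually_le_atBot 0] with x hx
        simpa [hF0] using hsub y hx) tendsto_id)
  choose X hX using fun y w => hsurj y (w * F y 1)
  have hXc : Continuous (Function.uncurry X) :=
    continuous_of_strictMono_of_apply_eq (F := fun z : Y × ℝ => F z.1)
      (c := fun z => z.2 * F z.1 1) (by fun_prop) (fun z => hmono z.1) (by fun_prop)
      fun z => hX z.1 z.2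
  have hF1 : ∀ y, F y 1 ≠ 0 := fun y => (hF0 y ▸ hmono y one_pos).ne'
  refine ⟨X, hXc, fun y => (hmono y).injective (by simp [hX, hF0]),
    fun y => (hmono y).injective (by simp [hX]), fun y k hk => ?_⟩
  have hXF : ∀ x, X y (F y x / F y 1) = x := fun x =>
    (hmono y).injective (by rw [hX, div_mul_cancel₀ _ (hF1 y)])
  have hsubst := intervalIntegral.integral_comp_mul_deriv (a := 0) (b := 1)
    (f := fun x => F y x / F y 1) (f' := fun x => ρ y x / F y 1) (g := fun w => k (X y w))
    (fun x _ => (hFd y x).div_const _) ((hρy y).div_const _).continuousOn (by fun_prop)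
  simp only [Function.comp_def, hXF, hF0, zero_div, div_self (hF1 y), ← mul_div_assoc,
    intervalIntegral.integral_div] at hsubst
  rw [← hsubst]
  exact mul_div_cancel₀ _ (hF1 y)

/-- The `1`-periodic triangle wave, rising from `0` at the integers to `1` halfway between them. -/
noncomputable def triangleWave (x : ℝ) : ℝ := arccos (cos (2 * π * x)) / π

theorem continuous_triangleWave : Continuous triangleWave := by
  unfold triangleWave
  fun_prop

theorem periodic_triangleWave : Function.Periodic triangleWave 1 := fun x => by
  rw [triangleWave, mul_add, mul_one, cos_add_two_pi, triangleWave]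

theorem triangleWave_of_le_half {x : ℝ} (h0 : 0 ≤ x) (h1 : x ≤ 1 / 2) :
    triangleWave x = 2 * x := by
  rw [triangleWave, arccos_cos (by positivity) (by nlinarith [pi_pos])]
  field_simp

theorem triangleWave_of_half_le {x : ℝ} (h0 : 1 / 2 ≤ x) (h1 : x ≤ 1) :
    triangleWave x = 2 - 2 * x := by
  rw [triangleWave, ← cos_two_pi_sub, arccos_cos (by nlinarith [pi_pos]) (by nlinarith [pi_pos])]
  field_simp

theorem integral_comp_triangleWave {k : ℝ → ℝ} (hk : Continuous k) :
    ∫ x in (0 : ℝ)..1, k (triangleWave x) = ∫ w in (0 : ℝ)..1, k w := by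
  have hi : ∀ a b, IntervalIntegrable (fun x => k (triangleWave x)) volume a b := fun a b =>
    (hk.comp continuous_triangleWave).intervalIntegrable a b
  have hleft : ∫ x in (0 : ℝ)..(1 / 2), k (triangleWave x) = ∫ x in (0 : ℝ)..(1 / 2), k (2 * x) :=
    intervalIntegral.integral_congr fun x hx => by
      rw [uIcc_of_le (by norm_num)] at hx
      simp only [triangleWave_of_le_half hx.1 hx.2]
  have hright : ∫ x in (1 / 2 : ℝ)..1, k (triangleWave x) = ∫ x in (1 / 2 : ℝ)..1, k (2 - 2 * x) :=
    intervalIntegral.integral_congr fun x hx => by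
      rw [uIcc_of_le (by norm_num)] at hx
      simp only [triangleWave_of_half_le hx.1 hx.2]
  rw [← intervalIntegral.integral_add_adjacent_intervals (hi 0 (1 / 2)) (hi (1 / 2) 1), hleft,
    hright, intervalIntegral.integral_comp_mul_left k two_ne_zero,
    intervalIntegral.integral_comp_sub_mul k two_ne_zero]
  norm_num
  ring

/-- A continuous family `W l` of `1`-periodic profiles such that `g ∘ W l` has mean `l`. The last
three fields say that no `W l` stays in `[-1, 1]` or in the critical set of the primitive `g` of
`g'`. -/
structure IsOscillation (g g' : ℝ → ℝ) (W : ℝ → ℝ → ℝ) : Prop where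
  continuous : Continuous (Function.uncurry W)
  periodic : ∀ l, Function.Periodic (W l) 1
  integral_eq : ∀ l, ∫ x in (0 : ℝ)..1, g (W l x) = l
  integral_sq_pos : ∀ l, 0 < ∫ x in (0 : ℝ)..1, g' (W l x) ^ 2
  apply_zero_lt : ∀ l, W l 0 < -1
  lt_apply_half : ∀ l, 1 < W l (1 / 2)

theorem exists_continuous_radius_lt_and_gt {g : ℝ → ℝ} (hsurj : Function.Surjective g) :
    ∃ R : C(ℝ, ℝ), ∀ l, 1 < R l ∧ (∃ x, |x| ≤ R l ∧ g x < l) ∧ ∃ x, |x| ≤ R l ∧ l < g x := by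
  refine exists_continuous_forall_mem_convex_of_local_const
    (t := fun l => {R | 1 < R ∧ (∃ x, |x| ≤ R ∧ g x < l) ∧ ∃ x, |x| ≤ R ∧ l < g x})
    (fun l => ?_) fun l => ?_
  · refine Set.OrdConnected.convex (IsUpperSet.ordConnected ?_)
    rintro R R' hR ⟨h1, ⟨x, hx, hxl⟩, z, hz, hzl⟩
    exact ⟨h1.trans_le hR, ⟨x, hx.trans hR, hxl⟩, z, hz.trans hR, hzl⟩
  · obtain ⟨x, hx⟩ := hsurj (l - 1)
    obtain ⟨z, hz⟩ := hsurj (l + 1)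
    refine ⟨|x| + |z| + 2, ?_⟩
    filter_upwards [Ioo_mem_nhds (sub_one_lt l) (lt_add_one l)] with l' hl'
    have := abs_nonneg x
    have := abs_nonneg z
    exact ⟨by linarith, ⟨x, by linarith, hx ▸ hl'.1⟩, z, by linarith, hz ▸ hl'.2⟩

theorem exists_deriv_ne_zero_of_lt_of_gt {g g' : ℝ → ℝ} (hg : ∀ x, HasDerivAt g (g' x) x) {R l : ℝ}
    (hlt : ∃ x, |x| ≤ R ∧ g x < l) (hgt : ∃ x, |x| ≤ R ∧ l < g x) : ∃ x, |x| ≤ R ∧ g' x ≠ 0 := by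
  obtain ⟨x, hx, hxl⟩ := hlt
  obtain ⟨z, hz, hzl⟩ := hgt
  by_contra! hcrit
  have hconst := constant_of_has_deriv_right_zero (f := g) (a := -R) (b := R)
    (HasDerivAt.continuousOn fun x _ => hg x)
    fun y hy => hcrit y (abs_le.2 (Ico_subset_Icc_self hy)) ▸ (hg y).hasDerivWithinAt
  linarith [hconst x (abs_le.1 hx), hconst z (abs_le.1 hz)]

theorem exists_mem_Icc_mul_eq {R x : ℝ} (hR : 1 < R) (hx : |x| ≤ R) :
    ∃ w ∈ Icc (0 : ℝ) 1, R * (2 * w - 1) = x := by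
  obtain ⟨h1, h2⟩ := abs_le.1 hx
  have hR0 : 0 < R := one_pos.trans hR
  refine ⟨(x / R + 1) / 2, ⟨?_, ?_⟩, by field_simp; ring⟩
  · have : -1 ≤ x / R := by rw [le_div_iff₀ hR0]; linarith
    linarith
  · have : x / R ≤ 1 := by rw [div_le_iff₀ hR0]; linarith
    linarith

theorem exists_isOscillation {g g' : ℝ → ℝ} (hg : ∀ x, HasDerivAt g (g' x) x)
    (hg' : Continuous g') (hsurj : Function.Surjective g) : ∃ W, IsOscillation g g' W := by
  have hgc : Continuous g := continuous_iff_continuousAt.2 fun x => (hg x).continuousAt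
  obtain ⟨R, hR⟩ := exists_continuous_radius_lt_and_gt hsurj
  obtain ⟨ρ, hρ, hρ1, hρ0⟩ := exists_density_integral_mul_eq_zero
    (u := fun l w => g (R l * (2 * w - 1)) - l) (by fun_prop)
    (fun l => by
      obtain ⟨hl, ⟨x, hx, hxl⟩, -⟩ := hR l
      obtain ⟨w, hw, rfl⟩ := exists_mem_Icc_mul_eq hl hx
      exact ⟨w, hw, sub_neg.2 hxl⟩)
    fun l => by
      obtain ⟨hl, -, x, hx, hxl⟩ := hR l
      obtain ⟨w, hw, rfl⟩ := exists_mem_Icc_mul_eq hl hx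
      exact ⟨w, hw, sub_pos.2 hxl⟩
  obtain ⟨X, hX, hX0, hX1, hXint⟩ := exists_reparametrization hρ hρ1
  have hmass : ∀ l, 0 < ∫ x in (0 : ℝ)..1, ρ l x := fun l =>
    intervalIntegral.intervalIntegral_pos_of_pos
      (Continuous.intervalIntegrable (by fun_prop) _ _)
      (fun x => one_pos.trans_le (hρ1 l x)) one_pos
  have hcont := continuous_triangleWave
  refine ⟨fun l x => R l * (2 * X l (triangleWave x) - 1), by fun_prop, fun l x => ?_, fun l => ?_,
    fun l => ?_, fun l => ?_, fun l => ?_⟩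
  · simp only [periodic_triangleWave x]
  · have hmean := hXint l (fun w => g (R l * (2 * w - 1)) - l) (by fun_prop)
    rw [hρ0, mul_eq_zero, or_iff_right (hmass l).ne', intervalIntegral.integral_sub
      (Continuous.intervalIntegrable (by fun_prop) _ _) (by simp)] at hmean
    rw [integral_comp_triangleWave (k := fun w => g (R l * (2 * X l w - 1))) (by fun_prop)]
    simpa [sub_eq_zero] using hmean
  · rw [integral_comp_triangleWave (k := fun w => g' (R l * (2 * X l w - 1)) ^ 2) (by fun_prop)]
    refine (mul_pos_iff_of_pos_left (hmass l)).1 ?_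
    rw [hXint l (fun w => g' (R l * (2 * w - 1)) ^ 2) (by fun_prop)]
    obtain ⟨hl, hlt, hgt⟩ := hR l
    obtain ⟨x, hx, hgx⟩ := exists_deriv_ne_zero_of_lt_of_gt hg hlt hgt
    obtain ⟨w, hw, rfl⟩ := exists_mem_Icc_mul_eq hl hx
    exact intervalIntegral.integral_pos one_pos (by fun_prop)
      (fun w _ => mul_nonneg (sq_nonneg _) (zero_le_one.trans (hρ1 l w)))
      ⟨w, hw, mul_pos (by positivity) (one_pos.trans_le (hρ1 l w))⟩
  · simp only [triangleWave_of_le_half le_rfl one_half_pos.le, mul_zero, hX0]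
    linarith [(hR l).1]
  · simp only [triangleWave_of_le_half one_half_pos.le le_rfl, mul_one_div_cancel (two_ne_zero' ℝ),
      hX1]
    linarith [(hR l).1]

/-! ### Averaging fast oscillations -/

theorem abs_integral_sub_mul_left_le {P : ℝ → ℝ} (hP : Continuous P) {τ s L : ℝ} (hs : 0 ≤ s)
    (h : ∀ x ∈ Ioc τ (τ + s), |P x - P τ| ≤ L) : |(∫ x in τ..(τ + s), P x) - s * P τ| ≤ L * s := by
  have hτs : τ ≤ τ + s := le_add_of_nonneg_right hs
  have hle := intervalIntegral.norm_integral_le_of_norm_le_const (a := τ) (b := τ + s)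
    (f := fun x => P x - P τ) (C := L) fun x hx => h x (uIoc_of_le hτs ▸ hx)
  rw [intervalIntegral.integral_sub (hP.intervalIntegrable _ _) (by simp)] at hle
  simpa [abs_of_nonneg hs] using hle

theorem abs_integral_le_of_abs_window_le {D : ℝ → ℝ} (hD : Continuous D) {T s e C : ℝ} (hs : 0 < s)
    (hC : ∀ t ∈ Icc 0 (T + s), |D t| ≤ C)
    (he : ∀ t ∈ Icc 0 T, |∫ x in t..(t + s), D x| ≤ e * s) :
    ∀ t ∈ Icc 0 T, |∫ x in (0 : ℝ)..t, D x| ≤ e * t + 2 * C * s := by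
  intro t ht
  set P : ℝ → ℝ := fun x => ∫ y in (0 : ℝ)..x, D y
  have hi : ∀ a b, IntervalIntegrable D volume a b := hD.intervalIntegrable
  have hP : Continuous P := intervalIntegral.continuous_primitive hi 0
  -- The moving integral `∫ x in τ..τ + s, P x` varies slowly and is close to `s * P τ`.
  have hmoving : |(∫ x in t..(t + s), P x) - ∫ x in (0 : ℝ)..(0 + s), P x| ≤ e * s * t := by
    have hderiv : ∀ τ, HasDerivAt (fun τ => ∫ x in τ..(τ + s), P x) (P (τ + s) - P τ) τ := by
      intro τ
      have hprim : ∀ x, HasDerivAt (fun x => ∫ y in (0 : ℝ)..x, P y) (P x) x := fun x =>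
        (hP.integral_hasStrictDerivAt 0 x).hasDerivAt
      refine (((hprim (τ + s)).comp_add_const τ s).sub (hprim τ)).congr_of_eventuallyEq
        (Eventually.of_forall fun x => ?_)
      exact (intervalIntegral.integral_interval_sub_left (hP.intervalIntegrable _ _)
        (hP.intervalIntegrable _ _)).symm
    have hbound := norm_image_sub_le_of_norm_deriv_le_segment' (a := 0) (b := T) (C := e * s)
      (fun τ _ => (hderiv τ).hasDerivWithinAt) (fun τ hτ => ?_) t ht
    · simpa using hbound
    · rw [Real.norm_eq_abs, intervalIntegral.integral_interval_sub_left (hi _ _) (hi _ _)]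
      exact he τ (Ico_subset_Icc_self hτ)
  have hclose : ∀ τ ∈ Icc 0 T, |(∫ x in τ..(τ + s), P x) - s * P τ| ≤ C * s * s := by
    refine fun τ hτ => abs_integral_sub_mul_left_le hP hs.le fun x hx => ?_
    have hC0 : 0 ≤ C := (abs_nonneg _).trans (hC τ ⟨hτ.1, by linarith [hτ.2]⟩)
    rw [intervalIntegral.integral_interval_sub_left (hi _ _) (hi _ _)]
    have hle := intervalIntegral.norm_integral_le_of_norm_le_const (a := τ) (b := x) (f := D)
      (C := C) fun y hy => ?_
    · rw [abs_of_nonneg (by linarith [hx.1])] at hle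
      exact hle.trans (mul_le_mul_of_nonneg_left (by linarith [hx.2]) hC0)
    · rw [uIoc_of_le hx.1.le] at hy
      exact hC y ⟨by linarith [hτ.1, hy.1], by linarith [hτ.2, hy.2, hx.2]⟩
  have hT : 0 ≤ T := ht.1.trans ht.2
  have h0 := hclose 0 ⟨le_rfl, hT⟩
  have ht' := hclose t ht
  simp only [P, intervalIntegral.integral_same, mul_zero, sub_zero] at h0
  have hsP : s * |P t| ≤ s * (e * t + 2 * C * s) := by
    rw [← abs_of_pos hs, ← abs_mul, abs_of_pos hs]
    rw [abs_le] at *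
    constructor <;> nlinarith
  exact le_of_mul_le_mul_left hsP hs

theorem integral_window_eq (D : ℝ → ℝ) (s t : ℝ) :
    ∫ x in t..(t + s), D x = s * ∫ θ in (0 : ℝ)..1, D (t + s * θ) := by
  have h := intervalIntegral.smul_integral_comp_add_mul (a := 0) (b := 1) D s t
  rw [mul_zero, add_zero, mul_one, smul_eq_mul] at h
  exact h.symm

section Averaging

variable {Y : Type*} [TopologicalSpace Y] {k : Y → ℝ → ℝ → ℝ}

theorem exists_eventually_abs_le_of_periodic
    (hk : Continuous fun z : Y × ℝ × ℝ => k z.1 z.2.1 z.2.2)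
    (hper : ∀ y t, Function.Periodic (k y t) 1) (T : ℝ) (y₀ : Y) :
    ∃ C, 0 ≤ C ∧ ∀ᶠ y in 𝓝 y₀, ∀ t ∈ Icc 0 T, ∀ x, |k y t x| ≤ C := by
  obtain ⟨C, hC0, hC⟩ := exists_eventually_norm_le_of_isCompact
    (k := fun y (z : ℝ × ℝ) => k y z.1 z.2) hk
    (isCompact_Icc.prod isCompact_Icc : IsCompact (Icc (0 : ℝ) T ×ˢ Icc (0 : ℝ) 1)) y₀
  refine ⟨C, hC0, hC.mono fun y hy t ht x => ?_⟩
  obtain ⟨z, hz, hxz⟩ := (hper y t).exists_mem_Ico₀ one_pos x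
  exact hxz ▸ hy (t, z) ⟨ht, Ico_subset_Icc_self hz⟩

theorem eventually_abs_window_le (hk : Continuous fun z : Y × ℝ × ℝ => k z.1 z.2.1 z.2.2)
    (hper : ∀ y t, Function.Periodic (k y t) 1) (hmean : ∀ y t, ∫ x in (0 : ℝ)..1, k y t x = 0)
    (T : ℝ) (y₀ : Y) {e : ℝ} (he : 0 < e) :
    ∀ᶠ p : Y × ℝ in 𝓝 y₀ ×ˢ 𝓝[>] 0, ∀ t ∈ Icc 0 T,
      |∫ x in t..(t + p.2), k p.1 x (x / p.2)| ≤ e * p.2 := by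
  have hslow : ∀ᶠ p : Y × ℝ in 𝓝 (y₀, 0), ∀ z ∈ Icc 0 T ×ˢ Icc (0 : ℝ) 1 ×ˢ Icc (0 : ℝ) 1,
      |k p.1 (z.1 + p.2 * z.2.1) z.2.2 - k p.1 z.1 z.2.2| < e := by
    have hcompact : IsCompact (Icc 0 T ×ˢ Icc (0 : ℝ) 1 ×ˢ Icc (0 : ℝ) 1) :=
      isCompact_Icc.prod (isCompact_Icc.prod isCompact_Icc)
    apply hcompact.eventually_forall_of_forall_eventually
    intro z _
    have hcont : Continuous fun w : (Y × ℝ) × ℝ × ℝ × ℝ =>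
        |k w.1.1 (w.2.1 + w.1.2 * w.2.2.1) w.2.2.2 - k w.1.1 w.2.1 w.2.2.2| :=
      ((hk.comp (by fun_prop : Continuous fun w : (Y × ℝ) × ℝ × ℝ × ℝ =>
        (w.1.1, w.2.1 + w.1.2 * w.2.2.1, w.2.2.2))).sub
        (hk.comp (by fun_prop : Continuous fun w : (Y × ℝ) × ℝ × ℝ × ℝ =>
        (w.1.1, w.2.1, w.2.2.2)))).abs
    exact hcont.continuousAt.eventually (gt_mem_nhds (by simpa using he))
  have hle : 𝓝 y₀ ×ˢ 𝓝[>] (0 : ℝ) ≤ 𝓝 (y₀, 0) := by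
    rw [nhds_prod_eq]
    exact Filter.prod_mono le_rfl nhdsWithin_le_nhds
  filter_upwards [hle hslow, tendsto_snd.eventually self_mem_nhdsWithin] with p hp hs t ht
  obtain ⟨y, s⟩ := p
  replace hs : 0 < s := hs
  have hshift : ∫ θ in (0 : ℝ)..1, k y t (t / s + θ) = 0 := by
    rw [intervalIntegral.integral_comp_add_left fun x => k y t x, add_zero]
    rw [(hper y t).intervalIntegral_add_eq (t / s) 0, zero_add, hmean]
  have hky : ∀ f : ℝ → ℝ, Continuous f → Continuous fun θ => k y (f θ) (t / s + θ) := fun f hf =>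
    hk.comp (by fun_prop : Continuous fun θ => (y, f θ, t / s + θ))
  have hdiff : |∫ θ in (0 : ℝ)..1, (k y (t + s * θ) (t / s + θ) - k y t (t / s + θ))| ≤ e := by
    rw [← Real.norm_eq_abs]
    refine (intervalIntegral.norm_integral_le_of_norm_le_const (C := e) fun θ hθ => ?_).trans_eq
      (by rw [sub_zero, abs_one, mul_one])
    rw [uIoc_of_le zero_le_one] at hθ
    have hperiodic : Function.Periodic (fun x => k y (t + s * θ) x - k y t x) 1 :=
      (hper y _).sub (hper y t)
    obtain ⟨x, hx, hxeq⟩ := hperiodic.exists_mem_Ico₀ one_pos (t / s + θ)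
    rw [hxeq]
    exact (hp (t, θ, x) ⟨ht, Ioc_subset_Icc_self hθ, Ico_subset_Icc_self hx⟩).le
  rw [intervalIntegral.integral_sub ((hky _ (by fun_prop)).intervalIntegrable _ _)
    ((hky _ continuous_const).intervalIntegrable _ _), hshift, sub_zero] at hdiff
  simp only [integral_window_eq, add_div, mul_div_cancel_left₀ _ hs.ne', abs_mul, abs_of_pos hs]
  linarith [mul_le_mul_of_nonneg_left hdiff hs.le]

theorem eventually_abs_integral_oscillating_le
    (hk : Continuous fun z : Y × ℝ × ℝ => k z.1 z.2.1 z.2.2)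
    (hper : ∀ y t, Function.Periodic (k y t) 1) (hmean : ∀ y t, ∫ x in (0 : ℝ)..1, k y t x = 0)
    {T : ℝ} (hT : 0 ≤ T) (y₀ : Y) {ε : ℝ} (hε : 0 < ε) :
    ∀ᶠ p : Y × ℝ in 𝓝 y₀ ×ˢ 𝓝[>] 0, ∀ t ∈ Icc 0 T,
      |∫ x in (0 : ℝ)..t, k p.1 x (x / p.2)| ≤ ε := by
  obtain ⟨C, hC0, hC⟩ := exists_eventually_abs_le_of_periodic hk hper (T + 1) y₀
  have hsmall : ∀ᶠ s : ℝ in 𝓝[>] 0, s < min 1 (ε / (4 * (C + 1))) :=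
    nhdsWithin_le_nhds (gt_mem_nhds (by positivity))
  filter_upwards [eventually_abs_window_le hk hper hmean T y₀
    (by positivity : 0 < ε / (2 * (T + 1))), tendsto_fst.eventually hC,
    tendsto_snd.eventually hsmall, tendsto_snd.eventually self_mem_nhdsWithin]
    with p hwindow hCp hp hs t ht
  obtain ⟨y, s⟩ := p
  replace hs : 0 < s := hs
  obtain ⟨hs1, hsε⟩ := lt_min_iff.1 hp
  have hle := abs_integral_le_of_abs_window_le (D := fun x => k y x (x / s)) (C := C)
    (hk.comp (by fun_prop : Continuous fun x : ℝ => (y, x, x / s))) hs (fun τ hτ => ?_)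
    hwindow t ht
  · rw [lt_div_iff₀ (by positivity)] at hsε
    have : ε / (2 * (T + 1)) * t ≤ ε / 2 := by
      rw [div_mul_eq_mul_div, div_le_div_iff₀ (by positivity) two_pos]
      nlinarith [ht.1, ht.2]
    linarith
  · exact hCp τ ⟨hτ.1, by linarith [hτ.2]⟩ (τ / s)

theorem eventually_weakClose_average (hk : Continuous fun z : Y × ℝ × ℝ => k z.1 z.2.1 z.2.2)
    (hper : ∀ y t, Function.Periodic (k y t) 1) {T : ℝ} (hT : 0 ≤ T) (y₀ : Y) {ε : ℝ}
    (hε : 0 < ε) :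
    ∀ᶠ p : Y × ℝ in 𝓝 y₀ ×ˢ 𝓝[>] 0, WeakClose T ε (fun t => k p.1 t (t / p.2))
      fun t => ∫ x in (0 : ℝ)..1, k p.1 t x := by
  have hmean : Continuous fun z : Y × ℝ => ∫ x in (0 : ℝ)..1, k z.1 z.2 x :=
    intervalIntegral.continuous_parametric_intervalIntegral_of_continuous'
      (f := fun z : Y × ℝ => k z.1 z.2)
      (hk.comp (by fun_prop : Continuous fun w : (Y × ℝ) × ℝ => (w.1.1, w.1.2, w.2))) 0 1
  have hkx : ∀ y t, Continuous (k y t) := fun y t =>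
    hk.comp (by fun_prop : Continuous fun x : ℝ => (y, t, x))
  refine eventually_abs_integral_oscillating_le
    (k := fun y t x => k y t x - ∫ z in (0 : ℝ)..1, k y t z)
    (hk.sub (hmean.comp (by fun_prop : Continuous fun z : Y × ℝ × ℝ => (z.1, z.2.1))))
    (fun y t x => by simp only [hper y t x]) (fun y t => ?_) hT y₀ hε
  rw [intervalIntegral.integral_sub ((hkx y t).intervalIntegrable _ _) (by simp)]
  simp

end Averaging

/-! ### Discarding thin layers -/

theorem abs_integral_le_of_eq_zero_off {F : ℝ → ℝ} {S : Set ℝ} {C v T : ℝ} (hC : 0 ≤ C)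
    (hv : volume.real S ≤ v) (hSfin : volume S ≠ ⊤)
    (hF : ∀ t ∈ Icc 0 T, |F t| ≤ C) (hzero : ∀ t ∈ Icc 0 T, t ∉ S → F t = 0) :
    ∀ t ∈ Icc 0 T, |∫ x in (0 : ℝ)..t, F x| ≤ C * v := by
  intro t ht
  have hsub : ∀ x ∈ Ioc 0 t, x ∈ Icc 0 T := fun x hx => ⟨hx.1.le, hx.2.trans ht.2⟩
  have hind : ∫ x in (0 : ℝ)..t, F x = ∫ x in Ioc 0 t ∩ S, F x := by
    rw [intervalIntegral.integral_of_le ht.1, setIntegral_eq_of_subset_of_forall_sdiff_eq_zero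
      measurableSet_Ioc inter_subset_left fun x hx => ?_]
    exact hzero x (hsub x hx.1) fun hxS => hx.2 ⟨hx.1, hxS⟩
  rw [hind, ← Real.norm_eq_abs]
  have hfin : volume (Ioc 0 t ∩ S) < ⊤ := (measure_mono inter_subset_right).trans_lt hSfin.lt_top
  refine (norm_setIntegral_le_of_norm_le_const hfin fun x hx => hF x (hsub x hx.1)).trans ?_
  exact mul_le_mul_of_nonneg_left ((measureReal_mono inter_subset_right hSfin).trans hv) hC

theorem integral_indicator_Iic (E : ℝ → ℝ) {b t : ℝ} (ht : 0 ≤ t) :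
    ∫ x in (0 : ℝ)..t, (Iic b).indicator E x = ∫ x in (0 : ℝ)..max 0 (min t b), E x := by
  rw [intervalIntegral.integral_of_le ht, intervalIntegral.integral_of_le (le_max_left _ _),
    setIntegral_indicator measurableSet_Iic]
  congr 2
  ext x
  simp only [mem_inter_iff, mem_Ioc, mem_Iic, le_max_iff, le_min_iff]
  constructor
  · rintro ⟨⟨h1, h2⟩, h3⟩
    exact ⟨h1, Or.inr ⟨h2, h3⟩⟩
  · rintro ⟨h1, h2 | ⟨h2, h3⟩⟩
    · exact absurd h1 h2.not_gt
    · exact ⟨⟨h1, h2⟩, h3⟩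

theorem abs_integral_le_of_eq_off_layers {D E : ℝ → ℝ} (hD : Continuous D) (hE : Continuous E)
    {T b C δ e : ℝ} (hδ : 0 ≤ δ) (hDC : ∀ t ∈ Icc 0 T, |D t| ≤ C) (hEC : ∀ t ∈ Icc 0 T, |E t| ≤ C)
    (hinside : ∀ t ∈ Icc 0 T, δ ≤ t → t ≤ b - δ → D t = E t)
    (houtside : ∀ t ∈ Icc 0 T, b + δ ≤ t → D t = 0)
    (he : ∀ t ∈ Icc 0 T, |∫ x in (0 : ℝ)..t, E x| ≤ e) :
    ∀ t ∈ Icc 0 T, |∫ x in (0 : ℝ)..t, D x| ≤ e + 2 * C * (3 * δ) := by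
  intro t ht
  have hC : 0 ≤ C := (abs_nonneg _).trans (hDC t ht)
  set S := Icc 0 δ ∪ Icc (b - δ) (b + δ)
  have hSv : volume.real S ≤ 3 * δ := by
    refine (measureReal_union_le _ _).trans_eq ?_
    rw [Real.volume_real_Icc_of_le hδ, Real.volume_real_Icc_of_le (by linarith)]
    ring
  have hEi : IntervalIntegrable ((Iic b).indicator E) volume 0 t :=
    ⟨(hE.intervalIntegrable 0 t).1.indicator measurableSet_Iic,
      (hE.intervalIntegrable 0 t).2.indicator measurableSet_Iic⟩
  have hlayer := abs_integral_le_of_eq_zero_off (F := fun x => D x - (Iic b).indicator E x) (T := T)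
    (by positivity : 0 ≤ 2 * C) hSv
    (measure_union_lt_top (by simp) (by simp)).ne (fun x hx => ?_) (fun x hx hxS => ?_) t ht
  · have he' := he (max 0 (min t b))
      ⟨le_max_left _ _, max_le (ht.1.trans ht.2) ((min_le_left _ _).trans ht.2)⟩
    rw [intervalIntegral.integral_sub (hD.intervalIntegrable _ _) hEi,
      integral_indicator_Iic E ht.1] at hlayer
    linarith [abs_sub_abs_le_abs_sub (∫ x in (0 : ℝ)..t, D x)
      (∫ x in (0 : ℝ)..max 0 (min t b), E x)]
  · have hind : |(Iic b).indicator E x| ≤ C :=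
      (norm_indicator_le_norm_self E x).trans (hEC x hx)
    linarith [abs_sub (D x) ((Iic b).indicator E x), hDC x hx]
  · simp only [S, mem_union, mem_Icc, not_or, not_and, not_le] at hxS
    rcases le_or_gt x b with hxb | hxb
    · have hxb' : x < b - δ := by
        by_contra! h
        linarith [hxS.2 h]
      rw [indicator_of_mem (mem_Iic.2 hxb), hinside x hx (hxS.1 hx.1).le hxb'.le, sub_self]
    · rw [indicator_of_notMem (by simpa using hxb),
        houtside x hx (hxS.2 (by linarith)).le, sub_zero]

/-! ### Dual weights -/

/-- The Gram matrix of the functions `P i` for the weight `w` on `[0, T]`. -/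
noncomputable def weightedGram {ι : Type*} (T : ℝ) (w : ℝ → ℝ) (P : ι → ℝ → ℝ) : Matrix ι ι ℝ :=
  Matrix.of fun i k => ∫ t in (0 : ℝ)..T, w t * (P i t * P k t)

/-- The combination of the `P i` dual to `P l` for the weight `w` on `[0, T]`; meaningful when the
Gram matrix is invertible. -/
noncomputable def dualFunction {ι : Type*} [Fintype ι] [DecidableEq ι] (T : ℝ) (w : ℝ → ℝ)
    (P : ι → ℝ → ℝ) (l : ι) (t : ℝ) : ℝ :=
  ∑ i, (weightedGram T w P)⁻¹ l i * P i t

section Gram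

variable {ι : Type*} [Fintype ι] {T : ℝ} {w : ℝ → ℝ} {P : ι → ℝ → ℝ}

theorem dotProduct_weightedGram_mulVec (hw : Continuous w) (hP : ∀ i, Continuous (P i))
    (v : ι → ℝ) :
    v ⬝ᵥ weightedGram T w P *ᵥ v = ∫ t in (0 : ℝ)..T, w t * (∑ i, v i * P i t) ^ 2 := by
  have hexpand : ∀ t, w t * (∑ i, v i * P i t) ^ 2 =
      ∑ i, ∑ k, v i * (w t * (P i t * P k t) * v k) := fun t => by
    rw [sq, Finset.sum_mul_sum, Finset.mul_sum]
    refine Finset.sum_congr rfl fun i _ => ?_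
    rw [Finset.mul_sum]
    exact Finset.sum_congr rfl fun k _ => by ring
  simp only [hexpand]
  rw [intervalIntegral.integral_finsetSum
    fun i _ => Continuous.intervalIntegrable (by fun_prop) _ _]
  refine Finset.sum_congr rfl fun i _ => ?_
  rw [intervalIntegral.integral_finsetSum
    fun k _ => Continuous.intervalIntegrable (by fun_prop) _ _]
  simp only [intervalIntegral.integral_const_mul, intervalIntegral.integral_mul_const,
    Matrix.mulVec, dotProduct, weightedGram, Matrix.of_apply, Finset.mul_sum]

variable [DecidableEq ι]

theorem isUnit_det_weightedGram (hT : 0 < T) (hw : Continuous w) (hP : ∀ i, Continuous (P i))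
    (h0 : ∀ t ∈ Icc 0 T, 0 ≤ w t)
    (hind : ∀ v : ι → ℝ, (∀ t ∈ Icc 0 T, 0 < w t → ∑ i, v i * P i t = 0) → v = 0) :
    IsUnit (weightedGram T w P).det := by
  refine isUnit_iff_ne_zero.2 fun hdet => ?_
  obtain ⟨v, hv, hGv⟩ := Matrix.exists_mulVec_eq_zero_iff.2 hdet
  have hnonneg : ∀ t ∈ Icc 0 T, 0 ≤ w t * (∑ i, v i * P i t) ^ 2 := fun t ht =>
    mul_nonneg (h0 t ht) (sq_nonneg _)
  refine hv (hind v fun t ht hwt => ?_)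
  by_contra hne
  have hpos : 0 < ∫ t in (0 : ℝ)..T, w t * (∑ i, v i * P i t) ^ 2 :=
    intervalIntegral.integral_pos hT (by fun_prop)
      (fun t ht => hnonneg t (Ioc_subset_Icc_self ht)) ⟨t, ht, by positivity⟩
  rw [← dotProduct_weightedGram_mulVec hw hP, hGv, dotProduct_zero] at hpos
  exact hpos.false

theorem integral_mul_dualFunction_mul (hw : Continuous w) (hP : ∀ i, Continuous (P i))
    (hG : IsUnit (weightedGram T w P).det) (k l : ι) :
    ∫ t in (0 : ℝ)..T, w t * dualFunction T w P l t * P k t = if k = l then 1 else 0 := by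
  have hexpand : ∀ t, w t * dualFunction T w P l t * P k t =
      ∑ i, (weightedGram T w P)⁻¹ l i * (w t * (P i t * P k t)) := fun t => by
    rw [dualFunction, Finset.mul_sum, Finset.sum_mul]
    exact Finset.sum_congr rfl fun i _ => by ring
  simp only [hexpand]
  rw [intervalIntegral.integral_finsetSum
    fun i _ => Continuous.intervalIntegrable (by fun_prop) _ _]
  simp only [intervalIntegral.integral_const_mul]
  have hinv := congr_fun₂ (Matrix.nonsing_inv_mul _ hG) l k
  rw [Matrix.mul_apply, Matrix.one_apply] at hinv
  simpa only [eq_comm (a := k), weightedGram, Matrix.of_apply] using hinv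

theorem continuous_uncurry_dualFunction {X : Type*} [TopologicalSpace X] {w : X → ℝ → ℝ}
    {P : X → ι → ℝ → ℝ} (hw : Continuous (Function.uncurry w))
    (hP : ∀ i, Continuous fun z : X × ℝ => P z.1 i z.2)
    (hG : ∀ x, IsUnit (weightedGram T (w x) (P x)).det) (l : ι) :
    Continuous fun z : X × ℝ => dualFunction T (w z.1) (P z.1) l z.2 := by
  have hgram : Continuous fun x => weightedGram T (w x) (P x) :=
    continuous_matrix fun i k =>
      intervalIntegral.continuous_parametric_intervalIntegral_of_continuous'
        (hw.mul ((hP i).mul (hP k))) 0 T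
  have hinv : Continuous fun x => (weightedGram T (w x) (P x))⁻¹ := by
    simp only [Matrix.inv_def, Ring.inverse_eq_inv']
    exact (hgram.matrix_det.inv₀ fun x => (hG x).ne_zero).smul hgram.matrix_adjugate
  exact continuous_finsetSum _ fun i _ =>
    ((hinv.matrix_elem l i).comp continuous_fst).mul (hP i)

end Gram

section SolProduct

variable {q : ℝ → ℝ}

theorem continuous_solProduct (hq : Continuous q) (k : Fin 3) : Continuous (solProduct q k) :=
  (isHillSolution_hillSol hq _).continuous.mul (isHillSolution_hillSol hq _).continuous

theorem continuous_uncurry_solProduct {X : Type*} [TopologicalSpace X] {q : X → ℝ → ℝ}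
    (hq : Continuous (Function.uncurry q)) (k : Fin 3) :
    Continuous fun z : X × ℝ => solProduct (q z.1) k z.2 :=
  (continuous_uncurry_hillSol hq _).mul (continuous_uncurry_hillSol hq _)

theorem eventually_eq_zero_of_hasDerivAt {S S' : ℝ → ℝ} (h : ∀ t, HasDerivAt S (S' t) t) {t₀ : ℝ}
    (h₀ : ∀ᶠ t in 𝓝 t₀, S t = 0) : ∀ᶠ t in 𝓝 t₀, S' t = 0 := by
  filter_upwards [h₀.eventually_nhds] with t ht
  exact (h t).unique ((hasDerivAt_const t (0 : ℝ)).congr_of_eventuallyEq ht)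

-- A quadratic form in the solutions vanishing near `t₀` vanishes there together with its first
-- two derivatives, so that the form itself is zero by the Wronskian identity.
theorem eq_zero_of_eventually_sum_mul_solProduct_eq_zero (hq : Continuous q) {v : Fin 3 → ℝ}
    {t₀ : ℝ} (h₀ : ∀ᶠ t in 𝓝 t₀, ∑ i, v i * solProduct q i t = 0) : v = 0 := by
  simp only [Fin.sum_univ_three, solProduct, Matrix.cons_val] at h₀
  have hx t := (isHillSolution_hillSol hq 0 t).1
  have hx' t := (isHillSolution_hillSol hq 0 t).2
  have hy t := (isHillSolution_hillSol hq 1 t).1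
  have hy' t := (isHillSolution_hillSol hq 1 t).2
  have hdet := hillSol_mul_hillSol'_sub_eq_one hq t₀
  have h₁ := eventually_eq_zero_of_hasDerivAt (fun t => ((((hx t).mul (hx t)).const_mul (v 0)).add
    (((hy t).mul (hx t)).const_mul (v 1))).add (((hy t).mul (hy t)).const_mul (v 2))) h₀
  have h₂ := eventually_eq_zero_of_hasDerivAt (fun t =>
    (((((hx' t).mul (hx t)).add ((hx t).mul (hx' t))).const_mul (v 0)).add
      ((((hy' t).mul (hx t)).add ((hy t).mul (hx' t))).const_mul (v 1))).add
        ((((hy' t).mul (hy t)).add ((hy t).mul (hy' t))).const_mul (v 2))) h₁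
  replace h₀ := h₀.self_of_nhds
  replace h₁ := h₁.self_of_nhds
  replace h₂ := h₂.self_of_nhds
  generalize hillSol q 0 t₀ = x, hillSol q 1 t₀ = y, hillSol' q 0 t₀ = x',
    hillSol' q 1 t₀ = y' at *
  have hsq : (x * y' - x' * y) ^ 2 = 1 := by
    linear_combination (x * y' - x' * y + 1) * hdet
  have h₃ : v 0 * x' ^ 2 + v 1 * (y' * x') + v 2 * y' ^ 2 = 0 := by
    linear_combination (1 / 2) * h₂ - q t₀ * h₀
  ext i
  fin_cases i
  · change v 0 = 0
    linear_combination y' ^ 2 * h₀ - y * y' * h₁ + y ^ 2 * h₃ - v 0 * hsq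
  · change v 1 = 0
    linear_combination (-2 * x' * y') * h₀ + (x * y' + x' * y) * h₁ - 2 * x * y * h₃ - v 1 * hsq
  · change v 2 = 0
    linear_combination x' ^ 2 * h₀ - x * x' * h₁ + x ^ 2 * h₃ - v 2 * hsq

end SolProduct

section Layers

variable {Y : Type*} [TopologicalSpace Y] {k : Y → ℝ → ℝ → ℝ}

theorem eventually_weakClose_of_eq_off_layers
    (hk : Continuous fun z : Y × ℝ × ℝ => k z.1 z.2.1 z.2.2)
    (hper : ∀ y t, Function.Periodic (k y t) 1) {m : Y → ℝ → ℝ}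
    (hm : ∀ y t, ∫ x in (0 : ℝ)..1, k y t x = m y t) {T : ℝ} (hT : 0 ≤ T) (y₀ : Y)
    {D : Y → ℝ → ℝ → ℝ} {b : Y → ℝ} (hD : ∀ y s, 0 < s → Continuous (D y s))
    (hDC : ∃ C, 0 ≤ C ∧ ∀ᶠ y in 𝓝 y₀, ∀ s, ∀ t ∈ Icc 0 T, |D y s t| ≤ C)
    (hinside : ∀ y s, 0 < s → ∀ t ∈ Icc 0 T, 2 * s ≤ t → t ≤ b y - 2 * s → D y s t = k y t (t / s))
    (houtside : ∀ y s, 0 < s → ∀ t ∈ Icc 0 T, b y + 2 * s ≤ t → D y s t = m y t)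
    {ε : ℝ} (hε : 0 < ε) :
    ∀ᶠ p : Y × ℝ in 𝓝 y₀ ×ˢ 𝓝[>] 0, WeakClose T ε (D p.1 p.2) (m p.1) := by
  obtain ⟨C, hC0, hC⟩ := hDC
  obtain ⟨B, hB0, hB⟩ := exists_eventually_abs_le_of_periodic hk hper T y₀
  have hmc : Continuous fun z : Y × ℝ => m z.1 z.2 := by
    simp only [← hm]
    exact intervalIntegral.continuous_parametric_intervalIntegral_of_continuous'
      (f := fun z : Y × ℝ => k z.1 z.2)
      (hk.comp (by fun_prop : Continuous fun w : (Y × ℝ) × ℝ => (w.1.1, w.1.2, w.2))) 0 1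
  have hmB : ∀ y, (∀ t ∈ Icc 0 T, ∀ x, |k y t x| ≤ B) → ∀ t ∈ Icc 0 T, |m y t| ≤ B :=
    fun y hy t ht => by
      rw [← hm]
      exact (intervalIntegral.norm_integral_le_of_norm_le_const (a := 0) (b := 1) (f := k y t)
        (C := B) fun x _ => hy t ht x).trans_eq (by simp)
  have hsmall : ∀ᶠ s : ℝ in 𝓝[>] 0, s < ε / (24 * (2 * B + C + 1)) :=
    nhdsWithin_le_nhds (gt_mem_nhds (by positivity))
  filter_upwards [tendsto_fst.eventually hC, tendsto_fst.eventually hB,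
    tendsto_snd.eventually hsmall, tendsto_snd.eventually self_mem_nhdsWithin,
    eventually_weakClose_average hk hper hT y₀ (half_pos hε)]
    with p hCp hBp hsp hs hclose t ht
  obtain ⟨y, s⟩ := p
  replace hs : 0 < s := hs
  simp only [hm] at hclose
  have hmB' := hmB y hBp
  have hmy : Continuous (m y) := hmc.comp (Continuous.prodMk_right y)
  have hlayer := abs_integral_le_of_eq_off_layers (D := fun t => D y s t - m y t)
    (E := fun t => k y t (t / s) - m y t) (C := B + C + B) (δ := 2 * s) (b := b y)
    ((hD y s hs).sub hmy)
    ((hk.comp (by fun_prop : Continuous fun t : ℝ => (y, t, t / s))).sub hmy) (by positivity)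
    (fun t ht => by linarith [abs_sub (D y s t) (m y t), hCp s t ht, hmB' t ht])
    (fun t ht => by linarith [abs_sub (k y t (t / s)) (m y t), hBp t ht (t / s), hmB' t ht])
    (fun t ht h₁ h₂ => by rw [hinside y s hs t ht h₁ h₂])
    (fun t ht h => sub_eq_zero.2 (houtside y s hs t ht h)) hclose t ht
  replace hsp : s * (24 * (2 * B + C + 1)) < ε := (lt_div_iff₀ (by positivity)).1 hsp
  exact hlayer.trans (by nlinarith)

end Layers

/-! ### Perturbing the argument of a nonlinearity -/

theorem exists_pos_abs_sub_le_of_abs_le {g : ℝ → ℝ} (hg : Continuous g) (K : ℝ) {ε : ℝ}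
    (hε : 0 < ε) : ∃ δ, 0 < δ ∧ ∀ x e, |x| ≤ K → |e| ≤ δ → |g (x + e) - g x| ≤ ε := by
  obtain ⟨d, hd, hgd⟩ := Metric.uniformContinuousOn_iff.1
    (isCompact_Icc.uniformContinuousOn_of_continuous
      (hg.continuousOn (s := Icc (-(K + 1)) (K + 1)))) ε hε
  refine ⟨min (d / 2) 1, by positivity, fun x e hx he => ?_⟩
  obtain ⟨hx₁, hx₂⟩ := abs_le.1 hx
  obtain ⟨he₁, he₂⟩ := abs_le.1 (he.trans (min_le_right _ _))
  refine (hgd (x + e) ⟨by linarith, by linarith⟩ x ⟨by linarith, by linarith⟩ ?_).le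
  rw [Real.dist_eq, add_sub_cancel_left]
  linarith [he.trans (min_le_left _ _)]

theorem exists_pos_abs_sub_sub_mul_le_of_abs_le {g g' : ℝ → ℝ} (hg : ∀ x, HasDerivAt g (g' x) x)
    (hg' : Continuous g') (K : ℝ) {ε : ℝ} (hε : 0 < ε) :
    ∃ δ, 0 < δ ∧ ∀ x e₁ e₂, |x| ≤ K → |e₁| ≤ δ → |e₂| ≤ δ →
      |g (x + e₁) - g (x + e₂) - g' x * (e₁ - e₂)| ≤ ε * |e₁ - e₂| := by
  obtain ⟨δ, hδ, hδ'⟩ := exists_pos_abs_sub_le_of_abs_le hg' K hε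
  refine ⟨δ, hδ, fun x e₁ e₂ hx h₁ h₂ => ?_⟩
  have hderiv : ∀ z, HasDerivAt (fun z => g (x + z) - g' x * z) (g' (x + z) - g' x) z := fun z => by
    exact (((hg (x + z)).comp_const_add x z).sub ((hasDerivAt_id z).const_mul (g' x))).congr_deriv
      (by ring)
  have hle := (convex_Icc (-δ) δ).norm_image_sub_le_of_norm_hasDerivWithin_le
    (fun z _ => (hderiv z).hasDerivWithinAt) (fun z hz => hδ' x z hx (abs_le.2 hz))
    (abs_le.1 h₂) (abs_le.1 h₁)
  rw [Real.norm_eq_abs, Real.norm_eq_abs] at hle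
  convert hle using 2
  ring

theorem WeakClose.mono {T ε ε' : ℝ} {Q q : ℝ → ℝ} (h : WeakClose T ε Q q) (hε : ε ≤ ε') :
    WeakClose T ε' Q q := fun t ht => (h t ht).trans hε

theorem WeakClose.of_abs_sub_le {T ε e : ℝ} {P Q q : ℝ → ℝ} (h : WeakClose T ε Q q)
    (hP : Continuous P) (hQ : Continuous Q) (hq : Continuous q)
    (hPQ : ∀ t ∈ Icc 0 T, |P t - Q t| ≤ e) : WeakClose T (ε + T * e) P q := by
  intro t ht
  have hdiff := abs_integral_le_mul ht.1 fun s hs => hPQ s ⟨hs.1, hs.2.trans ht.2⟩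
  have he : 0 ≤ e := (abs_nonneg _).trans (hPQ t ht)
  have hsplit : ∫ s in (0 : ℝ)..t, (P s - q s) =
      (∫ s in (0 : ℝ)..t, (P s - Q s)) + ∫ s in (0 : ℝ)..t, (Q s - q s) := by
    rw [← intervalIntegral.integral_add]
    · simp only [sub_add_sub_cancel]
    all_goals exact Continuous.intervalIntegrable (by fun_prop) _ _
  rw [hsplit]
  refine (abs_add_le _ _).trans ?_
  linarith [h t ht, mul_le_mul_of_nonneg_right ht.2 he]

theorem exists_pos_isWeakPerturbation_comp {ι : Type*} [Fintype ι] {g g' : ℝ → ℝ}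
    (hg : ∀ x, HasDerivAt g (g' x) x) (hg' : Continuous g') {T K M ε : ℝ} (hT : 0 ≤ T) (hK : 0 ≤ K)
    (hM : ∀ x, |x| ≤ K + 1 → |g x| ≤ M) (hM' : ∀ x, |x| ≤ K → |g' x| * K ≤ M) (hε : 0 < ε)
    (hε1 : ε ≤ 1) :
    ∃ δ, 0 < δ ∧ ∀ {x q : ℝ → ℝ} {v ζ : ι → ℝ → ℝ}, Continuous x → Continuous q →
      (∀ l, Continuous (v l)) → (∀ l, Continuous (ζ l)) → (∀ t ∈ Icc 0 T, |x t| ≤ K) →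
      (∀ l, ∀ t ∈ Icc 0 T, |v l t| ≤ K) → WeakClose T (ε / 2) (fun t => g (x t)) q →
      (∀ l, WeakClose T ε (fun t => g' (x t) * v l t) (ζ l)) →
      ∀ a b : ι → ℝ, ‖a‖ ≤ δ → ‖b‖ ≤ δ →
        IsWeakPerturbation T M ε q (fun t => g (x t + ∑ l, a l * v l t))
          (fun t => g (x t + ∑ l, b l * v l t)) (fun l t => g' (x t) * v l t) ζ (a - b) := by
  have hgc : Continuous g := continuous_iff_continuousAt.2 fun x => (hg x).continuousAt
  set N : ℝ := Fintype.card ι * K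
  have : 0 ≤ N := by positivity
  obtain ⟨δ₁, hδ₁, hclose⟩ := exists_pos_abs_sub_le_of_abs_le hgc K
    (by positivity : 0 < ε / (2 * (T + 1)))
  obtain ⟨δ₂, hδ₂, hmean⟩ := exists_pos_abs_sub_sub_mul_le_of_abs_le hg hg' K
    (by positivity : 0 < ε / (N + 1))
  set d : ℝ := min 1 (min δ₁ δ₂)
  have : 0 < d := by positivity
  refine ⟨d / (N + 1), by positivity, fun {x q v ζ} hx hq hv hζ hxK hvK hxq hvζ => ?_⟩
  have hsum : ∀ a : ι → ℝ, ‖a‖ ≤ d / (N + 1) → ∀ t ∈ Icc 0 T, |∑ l, a l * v l t| ≤ d := by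
    intro a ha t ht
    rw [le_div_iff₀ (by positivity)] at ha
    have := abs_sum_mul_le (fun l => hvK l t ht) a
    nlinarith [norm_nonneg a]
  have hbound : ∀ a : ι → ℝ, ‖a‖ ≤ d / (N + 1) →
      ∀ t ∈ Icc 0 T, |g (x t + ∑ l, a l * v l t)| ≤ M := fun a ha t ht =>
    hM _ (by linarith [abs_add_le (x t) (∑ l, a l * v l t), hxK t ht,
      (hsum a ha t ht).trans (min_le_left _ _)])
  have hweak : ∀ a : ι → ℝ, ‖a‖ ≤ d / (N + 1) →
      WeakClose T ε (fun t => g (x t + ∑ l, a l * v l t)) q := fun a ha =>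
    (hxq.of_abs_sub_le (by fun_prop) (by fun_prop) hq fun t ht => hclose (x t) _ (hxK t ht)
      ((hsum a ha t ht).trans ((min_le_right _ _).trans (min_le_left _ _)))).mono (by
        have : T * (ε / (2 * (T + 1))) ≤ ε / 2 := by
          rw [mul_div_assoc', div_le_div_iff₀ (by positivity) two_pos]
          nlinarith
        linarith)
  intro a b ha hb
  refine ⟨hq, by fun_prop, by fun_prop, fun l => by fun_prop, hζ, hbound a ha, hbound b hb,
    fun l t ht => ?_, hweak a ha, hweak b hb, hvζ, fun t ht => ?_, hε1⟩
  · rw [abs_mul]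
    exact (mul_le_mul_of_nonneg_left (hvK l t ht) (abs_nonneg _)).trans (hM' _ (hxK t ht))
  · have hsub : ∑ l, (a - b) l * v l t = (∑ l, a l * v l t) - ∑ l, b l * v l t := by
      simp only [Pi.sub_apply, sub_mul, Finset.sum_sub_distrib]
    have hdir : ∑ l, (a - b) l * (g' (x t) * v l t) =
        g' (x t) * ((∑ l, a l * v l t) - ∑ l, b l * v l t) := by
      rw [← hsub, Finset.mul_sum]
      exact Finset.sum_congr rfl fun l _ => by ring
    have hd₂ : d ≤ δ₂ := (min_le_right _ _).trans (min_le_right _ _)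
    have hle := hmean (x t) _ _ (hxK t ht) ((hsum a ha t ht).trans hd₂) ((hsum b hb t ht).trans hd₂)
    rw [hdir]
    refine hle.trans ?_
    have hN' := abs_sum_mul_le (fun l => hvK l t ht) (a - b)
    rw [hsub] at hN'
    rw [div_mul_eq_mul_div, div_le_iff₀ (by positivity)]
    nlinarith [norm_nonneg (a - b)]

theorem IsOscillation.continuous_integral_sq {g g' : ℝ → ℝ} {W : ℝ → ℝ → ℝ}
    (hW : IsOscillation g g' W) (hg' : Continuous g') :
    Continuous fun l => ∫ x in (0 : ℝ)..1, g' (W l x) ^ 2 :=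
  intervalIntegral.continuous_parametric_intervalIntegral_of_continuous'
    (f := fun l x => g' (W l x) ^ 2)
    ((continuous_pow 2).comp (hg'.comp hW.continuous)) 0 1

/-! ### Stages of the deformation -/

/-- A stage of the deformation of a loop. It consists of a potential `q` on `[0, T]` with monodromy
`A` and angle `α`, and of a front `p * T`: behind the front `q` is to be the local mean of `g ∘ x`
for a rapidly oscillating `x`, ahead of it `x = h`. The weight `η` is the density of the directions
in which `q` can be corrected. -/
structure IsStage (g g' : ℝ → ℝ) (T : ℝ) (A : Matrix (Fin 2) (Fin 2) ℝ) (α p : ℝ)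
    (h q η : ℝ → ℝ) : Prop where
  front_mem : p ∈ Icc 0 1
  base_period : h T = h 0
  base_ne : p = 0 → ∃ t₁ ∈ Ioo 0 T, ∃ t₂ ∈ Ioo 0 T, h t₁ ≠ h t₂
  target_eq : p < 1 → ∀ t ∈ Icc 0 T, q t = g (h t)
  weight_eq : p < 1 → ∀ t ∈ Icc 0 T, η t = g' (h t) ^ 2
  weight_nonneg : ∀ t ∈ Icc 0 T, 0 ≤ η t
  weight_pos : ∃ t ∈ Ioo 0 T, 0 < η t
  fundMatrix_target : fundMatrix q T = A
  hillAngle_target : hillAngle q T = α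

/-- The space of all stages, with the topology of locally uniform convergence. -/
abbrev Stage (g g' : ℝ → ℝ) (T : ℝ) (A : Matrix (Fin 2) (Fin 2) ℝ) (α : ℝ) : Type :=
  {σ : ℝ × C(ℝ, ℝ) × C(ℝ, ℝ) × C(ℝ, ℝ) // IsStage g g' T A α σ.1 σ.2.1 σ.2.2.1 σ.2.2.2}

namespace Stage

variable {g g' : ℝ → ℝ} {W : ℝ → ℝ → ℝ} {T : ℝ} {A : Matrix (Fin 2) (Fin 2) ℝ} {α : ℝ}
  {X : Type*} [TopologicalSpace X]

/-- The position `p` of the front, as a fraction of `T`. -/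
def front (σ : Stage g g' T A α) : ℝ := σ.1.1

/-- The function `h` ahead of the front. -/
def base (σ : Stage g g' T A α) : C(ℝ, ℝ) := σ.1.2.1

/-- The potential `q` with the prescribed monodromy. -/
def target (σ : Stage g g' T A α) : C(ℝ, ℝ) := σ.1.2.2.1

/-- The weight `η`. -/
def weight (σ : Stage g g' T A α) : C(ℝ, ℝ) := σ.1.2.2.2

theorem isStage (σ : Stage g g' T A α) :
    IsStage g g' T A α σ.front σ.base σ.target σ.weight :=
  σ.2

theorem pos (σ : Stage g g' T A α) : 0 < T := by
  obtain ⟨t, ht, -⟩ := σ.isStage.weight_pos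
  exact ht.1.trans ht.2

@[fun_prop]
theorem continuous_front : Continuous (front : Stage g g' T A α → ℝ) :=
  continuous_subtype_val.fst

@[fun_prop]
theorem continuous_base : Continuous (base : Stage g g' T A α → C(ℝ, ℝ)) :=
  continuous_subtype_val.snd.fst

@[fun_prop]
theorem continuous_target : Continuous (target : Stage g g' T A α → C(ℝ, ℝ)) :=
  continuous_subtype_val.snd.snd.fst

@[fun_prop]
theorem continuous_weight : Continuous (weight : Stage g g' T A α → C(ℝ, ℝ)) :=
  continuous_subtype_val.snd.snd.snd

theorem continuous_uncurry_target :
    Continuous (Function.uncurry fun (σ : Stage g g' T A α) t => σ.target t) := by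
  unfold Function.uncurry
  fun_prop

/-- The weight `η`, cut off at both ends of `[0, T]`. -/
def cutoffWeight (σ : Stage g g' T A α) (t : ℝ) : ℝ := σ.weight t * (t * (T - t))

theorem isUnit_det_weightedGram (σ : Stage g g' T A α) :
    IsUnit (weightedGram T σ.cutoffWeight (solProduct σ.target)).det := by
  have hw : Continuous σ.cutoffWeight := by unfold cutoffWeight; fun_prop
  refine HillMonodromy.isUnit_det_weightedGram σ.pos hw
    (continuous_solProduct σ.target.continuous)
    (fun t ht => mul_nonneg (σ.isStage.weight_nonneg t ht)
      (mul_nonneg ht.1 (sub_nonneg.2 ht.2))) fun v hv => ?_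
  obtain ⟨t₀, ht₀, hη⟩ := σ.isStage.weight_pos
  refine eq_zero_of_eventually_sum_mul_solProduct_eq_zero σ.target.continuous (t₀ := t₀) ?_
  have hw₀ : 0 < σ.cutoffWeight t₀ := mul_pos hη (mul_pos ht₀.1 (sub_pos.2 ht₀.2))
  filter_upwards [hw.continuousAt.eventually (lt_mem_nhds hw₀), Icc_mem_nhds ht₀.1 ht₀.2]
    with t hwt ht using hv t ht hwt

/-- Functions with `∫ η * dual l * (v_i v_j) = 0` or `1` on `[0, T]` for the three products
`v_i v_j` of solutions with potential `q`; they vanish at both ends of `[0, T]`. -/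
noncomputable def dual (σ : Stage g g' T A α) (l : Fin 3) (t : ℝ) : ℝ :=
  t * (T - t) * dualFunction T σ.cutoffWeight (solProduct σ.target) l t

theorem integral_weight_mul_dual_mul_solProduct (σ : Stage g g' T A α) (k l : Fin 3) :
    ∫ t in (0 : ℝ)..T, σ.weight t * σ.dual l t * solProduct σ.target k t =
      if k = l then 1 else 0 := by
  rw [← integral_mul_dualFunction_mul (by unfold cutoffWeight; fun_prop)
    (continuous_solProduct σ.target.continuous) σ.isUnit_det_weightedGram]
  exact intervalIntegral.integral_congr fun t _ => by
    simp only [dual, cutoffWeight]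
    ring

@[fun_prop]
theorem continuous_dual {σ : X → Stage g g' T A α} {t : X → ℝ} (hσ : Continuous σ)
    (ht : Continuous t) (l : Fin 3) : Continuous fun x => (σ x).dual l (t x) := by
  have hdual := continuous_uncurry_dualFunction (T := T) (X := Stage g g' T A α)
    (w := cutoffWeight) (P := fun σ => solProduct σ.target)
    (by unfold Function.uncurry cutoffWeight; fun_prop)
    (fun i => continuous_uncurry_solProduct continuous_uncurry_target i)
    isUnit_det_weightedGram l
  have hdualσ : Continuous fun x =>
      dualFunction T (σ x).cutoffWeight (solProduct (σ x).target) l (t x) := by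
    simpa only [Function.comp_def] using hdual.comp (hσ.prodMk ht)
  unfold dual
  fun_prop

/-- The signed distance from `t ≥ 0` to the region `[0, p * T]` behind the front, positive
inside. -/
noncomputable def depth (σ : Stage g g' T A α) (t : ℝ) : ℝ := min t (σ.front * T - t)

@[fun_prop]
theorem continuous_depth {σ : X → Stage g g' T A α} {t : X → ℝ} (hσ : Continuous σ)
    (ht : Continuous t) : Continuous fun x => (σ x).depth (t x) := by
  unfold depth
  fun_prop

/-- The function `h` ahead of the front, and the profile `W (q t)` run through with period `s`
behind it, with transition layers of width `s`. -/
noncomputable def sweep (W : ℝ → ℝ → ℝ) (σ : Stage g g' T A α) (s t : ℝ) : ℝ :=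
  (1 - smoothTransition (σ.depth t / s)) * σ.base t +
    smoothTransition (σ.depth t / s) * W (σ.target t) (t / s)

/-- The normalization of `g' ∘ W (q t)` for which `g' (W (q t)) * correctionProfile` has mean
`η * dual l`. -/
noncomputable def correctionProfile (W : ℝ → ℝ → ℝ) (σ : Stage g g' T A α) (l : Fin 3)
    (t x : ℝ) : ℝ :=
  g' (W (σ.target t) x) / (∫ y in (0 : ℝ)..1, g' (W (σ.target t) y) ^ 2) *
    (σ.weight t * σ.dual l t)

/-- Perturbations `V l` of `sweep W σ s` such that `g' (sweep W σ s) * V l` has local mean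
`η * dual l`. -/
noncomputable def direction (W : ℝ → ℝ → ℝ) (σ : Stage g g' T A α) (l : Fin 3) (s t : ℝ) : ℝ :=
  smoothTransition (-σ.depth t / s) * (g' (σ.base t) * σ.dual l t) +
    smoothTransition (σ.depth t / s - 1) * σ.correctionProfile W l t (t / s)

section Continuity

variable {σ : X → Stage g g' T A α} {s t x : X → ℝ}

theorem continuous_profile (hW : Continuous (Function.uncurry W)) (hσ : Continuous σ)
    (ht : Continuous t) (hx : Continuous x) : Continuous fun y => W ((σ y).target (t y)) (x y) :=
  hW.comp ((by fun_prop : Continuous fun y => (σ y).target (t y)).prodMk hx)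

theorem continuous_sweep (hW : Continuous (Function.uncurry W)) (hσ : Continuous σ)
    (hs : Continuous s) (hs0 : ∀ x, s x ≠ 0) (ht : Continuous t) :
    Continuous fun x => (σ x).sweep W (s x) (t x) := by
  have hcut : Continuous fun x => smoothTransition ((σ x).depth (t x) / s x) :=
    smoothTransition.continuous.comp ((continuous_depth hσ ht).div hs hs0)
  exact ((continuous_const.sub hcut).mul (by fun_prop)).add
    (hcut.mul (continuous_profile hW hσ ht (ht.div hs hs0)))

theorem continuous_correctionProfile (hg' : Continuous g') (hW : IsOscillation g g' W)
    (hσ : Continuous σ) (ht : Continuous t) (hx : Continuous x) (l : Fin 3) :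
    Continuous fun y => (σ y).correctionProfile W l (t y) (x y) :=
  ((hg'.comp (continuous_profile hW.continuous hσ ht hx)).div
    ((hW.continuous_integral_sq hg').comp (by fun_prop : Continuous fun y => (σ y).target (t y)))
    fun _ => (hW.integral_sq_pos _).ne').mul (by fun_prop)

theorem continuous_direction (hg' : Continuous g') (hW : IsOscillation g g' W) (hσ : Continuous σ)
    (hs : Continuous s) (hs0 : ∀ x, s x ≠ 0) (ht : Continuous t) (l : Fin 3) :
    Continuous fun x => (σ x).direction W l (s x) (t x) := by
  have hdepth : Continuous fun x => (σ x).depth (t x) / s x :=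
    (continuous_depth hσ ht).div hs hs0
  simp only [direction, neg_div]
  exact ((smoothTransition.continuous.comp hdepth.neg).mul
    ((hg'.comp (by fun_prop : Continuous fun x => (σ x).base (t x))).mul
      (continuous_dual hσ ht l))).add
    ((smoothTransition.continuous.comp (hdepth.sub continuous_const)).mul
      (continuous_correctionProfile hg' hW hσ ht (ht.div hs hs0) l))

end Continuity

theorem periodic_correctionProfile (hW : IsOscillation g g' W) (σ : Stage g g' T A α) (l : Fin 3)
    (t : ℝ) : Function.Periodic (σ.correctionProfile W l t) 1 := fun x => by
  simp only [correctionProfile, hW.periodic _ x]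

theorem integral_mul_correctionProfile (hW : IsOscillation g g' W) (σ : Stage g g' T A α)
    (l : Fin 3) (t : ℝ) :
    ∫ x in (0 : ℝ)..1, g' (W (σ.target t) x) * σ.correctionProfile W l t x =
      σ.weight t * σ.dual l t := by
  have hne := (hW.integral_sq_pos (σ.target t)).ne'
  simp only [correctionProfile]
  set N := ∫ y in (0 : ℝ)..1, g' (W (σ.target t) y) ^ 2
  calc ∫ x in (0 : ℝ)..1, g' (W (σ.target t) x) *
        (g' (W (σ.target t) x) / N * (σ.weight t * σ.dual l t))
      = ∫ x in (0 : ℝ)..1, g' (W (σ.target t) x) ^ 2 * (σ.weight t * σ.dual l t / N) :=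
        intervalIntegral.integral_congr fun x _ => by ring
    _ = N * (σ.weight t * σ.dual l t / N) := intervalIntegral.integral_mul_const _ _
    _ = σ.weight t * σ.dual l t := mul_div_cancel₀ _ hne

section Values

variable (σ : Stage g g' T A α) {s t : ℝ}

theorem sweep_of_depth_nonpos (hs : 0 < s) (h : σ.depth t ≤ 0) : σ.sweep W s t = σ.base t := by
  simp [sweep, smoothTransition.zero_of_nonpos (div_nonpos_of_nonpos_of_nonneg h hs.le)]

theorem sweep_of_le_depth (hs : 0 < s) (h : s ≤ σ.depth t) :
    σ.sweep W s t = W (σ.target t) (t / s) := by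
  simp [sweep, smoothTransition.one_of_one_le ((one_le_div hs).2 h)]

theorem direction_of_depth_le_neg (hs : 0 < s) (h : σ.depth t ≤ -s) (l : Fin 3) :
    σ.direction W l s t = g' (σ.base t) * σ.dual l t := by
  have hahead : 1 ≤ -σ.depth t / s := (one_le_div hs).2 (le_neg_of_le_neg h)
  have hbehind : σ.depth t / s - 1 ≤ 0 := by
    rw [neg_div] at hahead
    linarith
  simp [direction, smoothTransition.one_of_one_le hahead,
    smoothTransition.zero_of_nonpos hbehind]

theorem direction_of_two_mul_le_depth (hs : 0 < s) (h : 2 * s ≤ σ.depth t) (l : Fin 3) :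
    σ.direction W l s t = σ.correctionProfile W l t (t / s) := by
  have hbehind : 2 ≤ σ.depth t / s := (le_div_iff₀ hs).2 h
  have hahead : -σ.depth t / s ≤ 0 := by
    rw [neg_div]
    linarith
  simp [direction, smoothTransition.zero_of_nonpos hahead,
    smoothTransition.one_of_one_le (by linarith : 1 ≤ σ.depth t / s - 1)]

theorem direction_eq_zero_of_dual_eq_zero {l : Fin 3} (h : σ.dual l t = 0) :
    σ.direction W l s t = 0 := by
  simp [direction, correctionProfile, h]

theorem front_mul_le : σ.front * T ≤ T :=
  mul_le_of_le_one_left σ.pos.le σ.isStage.front_mem.2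

theorem front_lt_one_of_front_mul_lt (h : σ.front * T < T) : σ.front < 1 := by
  by_contra! h1
  exact h.not_ge (le_mul_of_one_le_left σ.pos.le h1)

end Values

end Stage

theorem eventually_forall_mem_Ioc {Y : Type*} {l : Filter Y} {P : Y × ℝ → Prop}
    (h : ∀ᶠ p in l ×ˢ 𝓝[>] 0, P p) : ∀ᶠ p in l ×ˢ 𝓝[>] 0, ∀ s ∈ Ioc 0 p.2, P (p.1, s) := by
  obtain ⟨pa, ha, pb, hb, hP⟩ := eventually_prod_iff.1 h
  obtain ⟨u, hu, hub⟩ := mem_nhdsGT_iff_exists_Ioc_subset.1 hb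
  filter_upwards [tendsto_fst.eventually ha, tendsto_snd.eventually (Ioc_mem_nhdsGT hu)]
    with p hp hpu s hs using hP hp (hub ⟨hs.1, hs.2.trans hpu.2⟩)

theorem abs_smoothTransition_mul_le (x y : ℝ) : |smoothTransition x * y| ≤ |y| := by
  rw [abs_mul, abs_of_nonneg (smoothTransition.nonneg x)]
  exact mul_le_of_le_one_left (abs_nonneg y) (smoothTransition.le_one x)

namespace Stage

variable {g g' : ℝ → ℝ} {W : ℝ → ℝ → ℝ} {T : ℝ} {A : Matrix (Fin 2) (Fin 2) ℝ} {α : ℝ}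

section Bounds

variable (σ₀ : Stage g g' T A α)

theorem exists_eventually_abs_sweep_le (hW : IsOscillation g g' W) :
    ∃ C, 0 ≤ C ∧ ∀ᶠ σ in 𝓝 σ₀, ∀ s, ∀ t ∈ Icc 0 T, |σ.sweep W s t| ≤ C := by
  obtain ⟨B, hB0, hB⟩ := exists_eventually_norm_le_of_isCompact
    (k := fun (σ : Stage g g' T A α) t => σ.base t) (by unfold Function.uncurry; fun_prop)
    (isCompact_Icc (a := 0) (b := T)) σ₀
  obtain ⟨C, hC0, hC⟩ := exists_eventually_abs_le_of_periodic
    (k := fun (σ : Stage g g' T A α) t x => W (σ.target t) x)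
    (continuous_profile hW.continuous continuous_fst continuous_snd.fst continuous_snd.snd)
    (fun σ t => hW.periodic _) T σ₀
  refine ⟨B + C, by positivity, ?_⟩
  filter_upwards [hB, hC] with σ hBσ hCσ s t ht
  refine (abs_add_le _ _).trans (add_le_add ?_ ?_)
  · rw [abs_mul, abs_of_nonneg (sub_nonneg.2 (smoothTransition.le_one _))]
    exact (mul_le_of_le_one_left (abs_nonneg _)
      (sub_le_self _ (smoothTransition.nonneg _))).trans (hBσ t ht)
  · exact (abs_smoothTransition_mul_le _ _).trans (hCσ t ht _)

theorem exists_eventually_abs_direction_le (hg' : Continuous g') (hW : IsOscillation g g' W)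
    (l : Fin 3) :
    ∃ C, 0 ≤ C ∧ ∀ᶠ σ in 𝓝 σ₀, ∀ s, ∀ t ∈ Icc 0 T, |σ.direction W l s t| ≤ C := by
  obtain ⟨B, hB0, hB⟩ := exists_eventually_norm_le_of_isCompact
    (k := fun (σ : Stage g g' T A α) t => g' (σ.base t) * σ.dual l t)
    ((hg'.comp (by fun_prop)).mul (continuous_dual continuous_fst continuous_snd l))
    (isCompact_Icc (a := 0) (b := T)) σ₀
  obtain ⟨C, hC0, hC⟩ := exists_eventually_abs_le_of_periodic
    (k := fun (σ : Stage g g' T A α) t x => σ.correctionProfile W l t x)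
    (continuous_correctionProfile hg' hW continuous_fst continuous_snd.fst continuous_snd.snd l)
    (fun σ t => periodic_correctionProfile hW σ l t) T σ₀
  refine ⟨B + C, by positivity, ?_⟩
  filter_upwards [hB, hC] with σ hBσ hCσ s t ht
  exact (abs_add_le _ _).trans (add_le_add
    ((abs_smoothTransition_mul_le _ _).trans (hBσ t ht))
    ((abs_smoothTransition_mul_le _ _).trans (hCσ t ht _)))

theorem exists_eventually_abs_sweep_and_direction_le (hg' : Continuous g')
    (hW : IsOscillation g g' W) :
    ∃ C, 0 ≤ C ∧ ∀ᶠ σ in 𝓝 σ₀, ∀ s, ∀ t ∈ Icc 0 T,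
      |σ.sweep W s t| ≤ C ∧ ∀ l, |σ.direction W l s t| ≤ C := by
  obtain ⟨B, hB0, hB⟩ := exists_eventually_abs_sweep_le σ₀ hW
  choose C hC0 hC using exists_eventually_abs_direction_le σ₀ hg' hW
  have hsum : 0 ≤ ∑ l, C l := Finset.sum_nonneg fun l _ => hC0 l
  refine ⟨B + ∑ l, C l, by positivity, ?_⟩
  filter_upwards [hB, eventually_all.2 hC] with σ hBσ hCσ s t ht
  exact ⟨(hBσ s t ht).trans (by linarith), fun l => (hCσ l s t ht).trans
    ((Finset.single_le_sum (fun l _ => hC0 l) (Finset.mem_univ l)).trans (by linarith))⟩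

theorem exists_eventually_c1Bounded :
    ∃ C, 0 ≤ C ∧ ∀ᶠ σ in 𝓝 σ₀,
      ∀ i, C1Bounded T C (hillSol σ.target i) (hillSol' σ.target i) := by
  obtain ⟨C, hC0, hC⟩ := exists_eventually_norm_le_of_isCompact
    (k := fun (σ : Stage g g' T A α) t i => (hillSol σ.target i t, hillSol' σ.target i t))
    (continuous_pi fun i : Fin 2 => (continuous_uncurry_hillSol continuous_uncurry_target i).prodMk
      (continuous_uncurry_hillSol' continuous_uncurry_target i))
    (isCompact_Icc (a := 0) (b := T)) σ₀
  refine ⟨C, hC0, ?_⟩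
  filter_upwards [hC] with σ hσ i t ht
  exact norm_prod_le_iff.1 ((norm_le_pi_norm _ i).trans (hσ t ht))

end Bounds

section WeakLimits

variable (σ₀ : Stage g g' T A α) {ε : ℝ}

theorem eventually_weakClose_sweep (hg : Continuous g) (hW : IsOscillation g g' W) (hε : 0 < ε) :
    ∀ᶠ p : Stage g g' T A α × ℝ in 𝓝 σ₀ ×ˢ 𝓝[>] 0,
      WeakClose T ε (fun t => g (p.1.sweep W p.2 t)) p.1.target := by
  obtain ⟨C, -, hC⟩ := exists_eventually_abs_sweep_le σ₀ hW
  obtain ⟨M, hM⟩ := isCompact_Icc.exists_bound_of_continuousOn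
    (hg.continuousOn (s := Icc (-C) C))
  refine eventually_weakClose_of_eq_off_layers (D := fun σ s t => g (σ.sweep W s t))
    (m := fun σ => σ.target) (k := fun σ t x => g (W (σ.target t) x)) (b := fun σ => σ.front * T)
    (hg.comp (continuous_profile hW.continuous continuous_fst continuous_snd.fst
      continuous_snd.snd)) (fun σ t x => by simp only [hW.periodic _ x])
    (fun σ t => hW.integral_eq _) σ₀.pos.le σ₀
    (fun σ s hs => hg.comp (continuous_sweep hW.continuous continuous_const continuous_const
      (fun _ => hs.ne') continuous_id))
    ⟨|M|, abs_nonneg M, ?_⟩ (fun σ s hs t _ h₁ h₂ => ?_) (fun σ s hs t ht h => ?_) hε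
  · filter_upwards [hC] with σ hσ s t ht using (hM _ (abs_le.1 (hσ s t ht))).trans (le_abs_self M)
  · have hdepth : s ≤ σ.depth t := le_min (by linarith) (by linarith)
    simp only [σ.sweep_of_le_depth hs hdepth]
  · have hdepth : σ.depth t ≤ 0 := (min_le_right _ _).trans (by linarith)
    have hfront : σ.front < 1 := σ.front_lt_one_of_front_mul_lt (by linarith [ht.2])
    simp only [σ.sweep_of_depth_nonpos hs hdepth, σ.isStage.target_eq hfront t ht]

theorem eventually_weakClose_direction (hg' : Continuous g') (hW : IsOscillation g g' W)
    (hε : 0 < ε) (l : Fin 3) :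
    ∀ᶠ p : Stage g g' T A α × ℝ in 𝓝 σ₀ ×ˢ 𝓝[>] 0,
      WeakClose T ε (fun t => g' (p.1.sweep W p.2 t) * p.1.direction W l p.2 t)
        fun t => p.1.weight t * p.1.dual l t := by
  obtain ⟨C, -, hC⟩ := exists_eventually_abs_sweep_le σ₀ hW
  obtain ⟨B, -, hB⟩ := exists_eventually_abs_direction_le σ₀ hg' hW l
  obtain ⟨M, hM⟩ := isCompact_Icc.exists_bound_of_continuousOn
    (hg'.continuousOn (s := Icc (-C) C))
  refine eventually_weakClose_of_eq_off_layers
    (D := fun σ s t => g' (σ.sweep W s t) * σ.direction W l s t)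
    (m := fun σ t => σ.weight t * σ.dual l t)
    (k := fun σ t x => g' (W (σ.target t) x) * σ.correctionProfile W l t x)
    (b := fun σ => σ.front * T)
    ((hg'.comp (continuous_profile hW.continuous continuous_fst continuous_snd.fst
      continuous_snd.snd)).mul (continuous_correctionProfile hg' hW continuous_fst
        continuous_snd.fst continuous_snd.snd l))
    (fun σ t x => by simp only [hW.periodic _ x, periodic_correctionProfile hW σ l t x])
    (fun σ t => integral_mul_correctionProfile hW σ l t) σ₀.pos.le σ₀
    (fun σ s hs => (hg'.comp (continuous_sweep hW.continuous continuous_const continuous_const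
      (fun _ => hs.ne') continuous_id)).mul (continuous_direction hg' hW continuous_const
        continuous_const (fun _ => hs.ne') continuous_id l))
    ⟨|M * B|, abs_nonneg _, ?_⟩ (fun σ s hs t _ h₁ h₂ => ?_) (fun σ s hs t ht h => ?_) hε
  · filter_upwards [hC, hB] with σ hσ hBσ s t ht
    exact (abs_mul_le_mul (hM _ (abs_le.1 (hσ s t ht))) (hBσ s t ht)).trans (le_abs_self _)
  · have hdepth : 2 * s ≤ σ.depth t := le_min h₁ (by linarith)
    simp only [σ.sweep_of_le_depth hs (by linarith : s ≤ σ.depth t),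
      σ.direction_of_two_mul_le_depth hs hdepth]
  · have hdepth : σ.depth t ≤ -s := (min_le_right _ _).trans (by linarith)
    have hfront : σ.front < 1 := σ.front_lt_one_of_front_mul_lt (by linarith [ht.2])
    simp only [σ.sweep_of_depth_nonpos hs (by linarith : σ.depth t ≤ 0),
      σ.direction_of_depth_le_neg hs hdepth, σ.isStage.weight_eq hfront t ht]
    ring

end WeakLimits

/-- The candidate loop: `sweep W σ s` corrected in the three directions `direction W σ l s`. -/
noncomputable def candidate (W : ℝ → ℝ → ℝ) (σ : Stage g g' T A α) (s : ℝ) (a : Fin 3 → ℝ)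
    (t : ℝ) : ℝ :=
  σ.sweep W s t + ∑ l, a l * σ.direction W l s t

theorem continuous_candidate {X : Type*} [TopologicalSpace X] {σ : X → Stage g g' T A α}
    {s t : X → ℝ} {a : X → Fin 3 → ℝ} (hg' : Continuous g') (hW : IsOscillation g g' W)
    (hσ : Continuous σ) (hs : Continuous s) (hs0 : ∀ x, s x ≠ 0) (ha : Continuous a)
    (ht : Continuous t) : Continuous fun x => (σ x).candidate W (s x) (a x) (t x) :=
  (continuous_sweep hW.continuous hσ hs hs0 ht).add (continuous_finsetSum _ fun l _ =>
    ((continuous_apply l).comp ha).mul (continuous_direction hg' hW hσ hs hs0 ht l))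

theorem candidate_zero (σ : Stage g g' T A α) (s : ℝ) : σ.candidate W s 0 = σ.sweep W s := by
  ext t
  simp [candidate]

theorem exists_eventually_isWeakPerturbation (hg : ∀ x, HasDerivAt g (g' x) x)
    (hg' : Continuous g') (hW : IsOscillation g g' W) (σ₀ : Stage g g' T A α) :
    ∃ K, 0 ≤ K ∧
      (∀ᶠ σ in 𝓝 σ₀, ∀ i, C1Bounded T K (hillSol σ.target i) (hillSol' σ.target i)) ∧
      ∀ ε, 0 < ε → ε ≤ 1 → ∀ᶠ p : Stage g g' T A α × ℝ in 𝓝 σ₀ ×ˢ 𝓝[>] 0,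
        ∀ s ∈ Ioc 0 p.2, ∀ a b, ‖a‖ ≤ p.2 → ‖b‖ ≤ p.2 →
          IsWeakPerturbation T K ε p.1.target (fun t => g (p.1.candidate W s a t))
            (fun t => g (p.1.candidate W s b t))
            (fun l t => g' (p.1.sweep W s t) * p.1.direction W l s t)
            (fun l t => p.1.weight t * p.1.dual l t) (a - b) := by
  have hgc : Continuous g := continuous_iff_continuousAt.2 fun x => (hg x).continuousAt
  obtain ⟨K, hK0, hK⟩ := exists_eventually_abs_sweep_and_direction_le σ₀ hg' hW
  obtain ⟨C, hC0, hC⟩ := exists_eventually_c1Bounded σ₀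
  obtain ⟨M, hM⟩ := isCompact_Icc.exists_bound_of_continuousOn
    (hgc.continuousOn (s := Icc (-(K + 1)) (K + 1)))
  obtain ⟨M', hM'⟩ := isCompact_Icc.exists_bound_of_continuousOn
    (hg'.continuousOn (s := Icc (-K) K))
  set L := max C (max M (M' * K))
  refine ⟨L, hC0.trans (le_max_left _ _), ?_, fun ε hε hε1 => ?_⟩
  · filter_upwards [hC] with σ hσ i using (hσ i).mono (le_max_left _ _)
  obtain ⟨δ, hδ, hpert⟩ := exists_pos_isWeakPerturbation_comp (ι := Fin 3) (M := L) hg hg'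
    σ₀.pos.le hK0
    (fun x hx => (hM x (abs_le.1 hx)).trans ((le_max_left _ _).trans (le_max_right _ _)))
    (fun x hx => (mul_le_mul_of_nonneg_right (hM' x (abs_le.1 hx)) hK0).trans
      ((le_max_right _ _).trans (le_max_right _ _))) hε hε1
  filter_upwards [tendsto_fst.eventually hK, tendsto_snd.eventually (Ioc_mem_nhdsGT hδ),
    eventually_forall_mem_Ioc (eventually_weakClose_sweep σ₀ hgc hW (half_pos hε)),
    eventually_all.2 fun l =>
      eventually_forall_mem_Ioc (eventually_weakClose_direction σ₀ hg' hW hε l)]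
    with ⟨σ, r⟩ hKσ hr hsweep hdir s hs a b ha hb
  exact hpert
    (continuous_sweep hW.continuous continuous_const continuous_const (fun _ => hs.1.ne')
      continuous_id) σ.target.continuous
    (fun l => continuous_direction hg' hW continuous_const continuous_const (fun _ => hs.1.ne')
      continuous_id l)
    (fun l => σ.weight.continuous.mul (continuous_dual continuous_const continuous_id l))
    (fun t ht => (hKσ s t ht).1) (fun l t ht => (hKσ s t ht).2 l) (hsweep s hs)
    (fun l => hdir l s hs) a b (ha.trans hr.2) (hb.trans hr.2)

section Separation

variable (σ₀ : Stage g g' T A α)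

theorem eventually_lt_abs_sweep_sub_of_front_pos (hW : IsOscillation g g' W)
    (hp : 0 < σ₀.front) :
    ∀ᶠ p : Stage g g' T A α × ℝ in 𝓝 σ₀ ×ˢ 𝓝[>] 0, ∃ t₁ ∈ Ioo 0 T, ∃ t₂ ∈ Ioo 0 T,
      1 < |p.1.sweep W p.2 t₁ - p.1.sweep W p.2 t₂| := by
  have hpT : 0 < σ₀.front * T / 2 := half_pos (mul_pos hp σ₀.pos)
  have hfront : ∀ᶠ σ in 𝓝 σ₀, σ₀.front * T / 2 < σ.front * T :=
    (by fun_prop : Continuous fun σ : Stage g g' T A α => σ.front * T).continuousAt.eventually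
      (lt_mem_nhds (half_lt_self (mul_pos hp σ₀.pos)))
  filter_upwards [tendsto_fst.eventually hfront,
    tendsto_snd.eventually (Ioo_mem_nhdsGT (by positivity : 0 < σ₀.front * T / 2 / 4))]
    with ⟨σ, s⟩ hσ ⟨hs, hs'⟩
  simp only at hσ hs hs' ⊢
  have hT := σ.front_mul_le
  have hdepth₁ : s ≤ σ.depth s := le_min le_rfl (by linarith)
  have hdepth₂ : s ≤ σ.depth (3 / 2 * s) := le_min (by linarith) (by linarith)
  refine ⟨s, ⟨hs, by linarith⟩, 3 / 2 * s, ⟨by positivity, by linarith⟩, ?_⟩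
  rw [σ.sweep_of_le_depth hs hdepth₁, σ.sweep_of_le_depth hs hdepth₂,
    mul_div_cancel_right₀ _ hs.ne', div_self hs.ne', abs_sub_comm]
  have h₁ := hW.apply_zero_lt (σ.target s)
  have h₂ := hW.lt_apply_half (σ.target (3 / 2 * s))
  rw [← (hW.periodic _).eq] at h₁
  rw [← hW.periodic _ (1 / 2), (by norm_num : (1 : ℝ) / 2 + 1 = 3 / 2)] at h₂
  exact lt_abs.2 (Or.inl (by linarith))

theorem exists_eventually_lt_abs_sweep_sub_of_front_eq_zero (hp : σ₀.front = 0) :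
    ∃ d, 0 < d ∧ ∀ᶠ p : Stage g g' T A α × ℝ in 𝓝 σ₀ ×ˢ 𝓝[>] 0, ∃ t₁ ∈ Ioo 0 T, ∃ t₂ ∈ Ioo 0 T,
      d < |p.1.sweep W p.2 t₁ - p.1.sweep W p.2 t₂| := by
  obtain ⟨t₁, ht₁, t₂, ht₂, hne⟩ := σ₀.isStage.base_ne hp
  have hd : 0 < |σ₀.base t₁ - σ₀.base t₂| := abs_pos.2 (sub_ne_zero.2 hne)
  have hbase : ∀ᶠ σ in 𝓝 σ₀, |σ₀.base t₁ - σ₀.base t₂| / 2 < |σ.base t₁ - σ.base t₂| :=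
    (by fun_prop : Continuous fun σ : Stage g g' T A α => |σ.base t₁ - σ.base t₂|).continuousAt
      |>.eventually (lt_mem_nhds (half_lt_self hd))
  have hdepth : ∀ t ∈ Ioo 0 T, ∀ᶠ σ in 𝓝 σ₀, σ.depth t < 0 := fun t ht =>
    (by fun_prop : Continuous fun σ : Stage g g' T A α => σ.depth t).continuousAt.eventually
      (gt_mem_nhds (min_lt_of_right_lt (by rw [hp]; linarith [ht.1])))
  refine ⟨_, half_pos hd, ?_⟩
  filter_upwards [tendsto_fst.eventually hbase, tendsto_fst.eventually (hdepth t₁ ht₁),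
    tendsto_fst.eventually (hdepth t₂ ht₂), tendsto_snd.eventually self_mem_nhdsWithin]
    with p hbase h₁ h₂ hs
  refine ⟨t₁, ht₁, t₂, ht₂, ?_⟩
  rwa [p.1.sweep_of_depth_nonpos hs h₁.le, p.1.sweep_of_depth_nonpos hs h₂.le]

theorem eventually_exists_candidate_ne (hg' : Continuous g') (hW : IsOscillation g g' W) :
    ∀ᶠ p : Stage g g' T A α × ℝ in 𝓝 σ₀ ×ˢ 𝓝[>] 0, ∀ s ∈ Ioc 0 p.2, ∀ a, ‖a‖ ≤ p.2 →
      ∃ t₁ ∈ Ioo 0 T, ∃ t₂ ∈ Ioo 0 T, p.1.candidate W s a t₁ ≠ p.1.candidate W s a t₂ := by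
  obtain ⟨d, hd, hsep⟩ : ∃ d, 0 < d ∧ ∀ᶠ p : Stage g g' T A α × ℝ in 𝓝 σ₀ ×ˢ 𝓝[>] 0,
      ∃ t₁ ∈ Ioo 0 T, ∃ t₂ ∈ Ioo 0 T, d < |p.1.sweep W p.2 t₁ - p.1.sweep W p.2 t₂| := by
    rcases σ₀.isStage.front_mem.1.eq_or_lt with hp | hp
    · exact exists_eventually_lt_abs_sweep_sub_of_front_eq_zero σ₀ hp.symm
    · exact ⟨1, one_pos, eventually_lt_abs_sweep_sub_of_front_pos σ₀ hW hp⟩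
  obtain ⟨K, hK0, hK⟩ := exists_eventually_abs_sweep_and_direction_le σ₀ hg' hW
  filter_upwards [eventually_forall_mem_Ioc hsep, tendsto_fst.eventually hK,
    tendsto_snd.eventually (Ioc_mem_nhdsGT (by positivity : 0 < d / (6 * K + 1)))]
    with ⟨σ, r⟩ hsep hKσ ⟨hr, hr'⟩ s hs a ha
  obtain ⟨t₁, ht₁, t₂, ht₂, hlt⟩ := hsep s hs
  refine ⟨t₁, ht₁, t₂, ht₂, fun heq => ?_⟩
  have hsmall : ∀ t ∈ Ioo 0 T, |∑ l, a l * σ.direction W l s t| ≤ d / 2 := fun t ht => by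
    have hsum := abs_sum_mul_le (hKσ s t (Ioo_subset_Icc_self ht)).2 a
    rw [le_div_iff₀ (by positivity)] at hr'
    simp only [Fintype.card_fin] at hsum
    push_cast at hsum
    nlinarith [mul_le_mul_of_nonneg_left ha (by positivity : 0 ≤ 3 * K)]
  have hdiff : σ.sweep W s t₁ - σ.sweep W s t₂ =
      (∑ l, a l * σ.direction W l s t₂) - ∑ l, a l * σ.direction W l s t₁ := by
    simp only [candidate] at heq
    linarith
  rw [hdiff] at hlt
  linarith [abs_sub (∑ l, a l * σ.direction W l s t₂) (∑ l, a l * σ.direction W l s t₁),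
    hsmall t₁ ht₁, hsmall t₂ ht₂]

end Separation

section Correction

variable (σ₀ : Stage g g' T A α)

theorem eventually_norm_monodromyDefect_sub_sub_le (hg : ∀ x, HasDerivAt g (g' x) x)
    (hg' : Continuous g') (hW : IsOscillation g g' W) :
    ∀ᶠ p : Stage g g' T A α × ℝ in 𝓝 σ₀ ×ˢ 𝓝[>] 0,
      ∀ s ∈ Ioc 0 p.2, ∀ a b, ‖a‖ ≤ p.2 → ‖b‖ ≤ p.2 →
        ‖monodromyDefect T A (fun t => g (p.1.candidate W s a t)) -
          monodromyDefect T A (fun t => g (p.1.candidate W s b t)) - (a - b)‖ ≤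
            1 / 2 * ‖a - b‖ := by
  obtain ⟨K, hK0, hK, hpert⟩ := exists_eventually_isWeakPerturbation hg hg' hW σ₀
  have hC := IsWeakPerturbation.perturbationConst_nonneg (m := 3) σ₀.pos.le hK0
  set C := IsWeakPerturbation.perturbationConst 3 T K
  filter_upwards [tendsto_fst.eventually hK, hpert (1 / (2 * (C + 1))) (by positivity)
    (div_le_one_of_le₀ (by linarith) (by positivity))] with ⟨σ, r⟩ hKσ hpert s hs a b ha hb
  refine ((hpert s hs a b ha hb).norm_monodromyDefect_sub_sub_le σ.pos.le hK0
    σ.isStage.fundMatrix_target hKσ fun k l =>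
      σ.integral_weight_mul_dual_mul_solProduct k l).trans ?_
  refine mul_le_mul_of_nonneg_right ?_ (norm_nonneg _)
  rw [mul_one_div, div_le_div_iff₀ (by positivity) two_pos]
  linarith

theorem eventually_norm_monodromyDefect_sweep_le (hg : ∀ x, HasDerivAt g (g' x) x)
    (hg' : Continuous g') (hW : IsOscillation g g' W) {ε : ℝ} (hε : 0 < ε) :
    ∀ᶠ p : Stage g g' T A α × ℝ in 𝓝 σ₀ ×ˢ 𝓝[>] 0,
      ‖monodromyDefect T A fun t => g (p.1.sweep W p.2 t)‖ ≤ ε := by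
  obtain ⟨K, hK0, hK, hpert⟩ := exists_eventually_isWeakPerturbation hg hg' hW σ₀
  have hM := gronwallConst_nonneg (K := K) σ₀.pos.le hK0
  have hT := σ₀.pos
  set C := 2 * K * (K + gronwallConst T K K) * (1 + T)
  have : 0 ≤ C := by positivity
  have hδ : 0 < min 1 (ε / (C + 1)) := by positivity
  filter_upwards [tendsto_fst.eventually hK, hpert _ hδ (min_le_left _ _),
    tendsto_snd.eventually self_mem_nhdsWithin] with ⟨σ, s⟩ hKσ hpert hs
  have h := hpert s ⟨hs, le_rfl⟩ 0 0 (by simpa using hs.le) (by simpa using hs.le)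
  simp only [candidate_zero] at h
  refine (h.weakClose.norm_monodromyDefect_le σ.pos.le hK0 h.continuous h.continuous_base
    σ.isStage.fundMatrix_target h.abs_le hKσ h.le_one).trans ?_
  calc C * min 1 (ε / (C + 1)) ≤ C * (ε / (C + 1)) := by gcongr; exact min_le_right _ _
    _ ≤ ε := by rw [mul_div_assoc', div_le_iff₀ (by positivity)]; linarith

theorem eventually_abs_hillAngle_sub_le (hg : ∀ x, HasDerivAt g (g' x) x)
    (hg' : Continuous g') (hW : IsOscillation g g' W) :
    ∀ᶠ p : Stage g g' T A α × ℝ in 𝓝 σ₀ ×ˢ 𝓝[>] 0, ∀ s ∈ Ioc 0 p.2, ∀ a, ‖a‖ ≤ p.2 →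
      |hillAngle (fun t => g (p.1.candidate W s a t)) T - α| ≤ 1 := by
  obtain ⟨K, hK0, hK, hpert⟩ := exists_eventually_isWeakPerturbation hg hg' hW σ₀
  obtain ⟨C, hC0, hC⟩ := WeakClose.exists_abs_hillAngle_sub_le σ₀.pos.le hK0
  filter_upwards [tendsto_fst.eventually hK, hpert (1 / (C + 1)) (by positivity)
    (div_le_one_of_le₀ (by linarith) (by positivity))] with ⟨σ, r⟩ hKσ hpert s hs a ha
  have h := hpert s hs a a ha ha
  have hangle := hC h.continuous h.continuous_base h.abs_le hKσ h.le_one h.weakClose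
  rw [σ.isStage.hillAngle_target] at hangle
  refine hangle.trans ?_
  rw [mul_one_div]
  exact div_le_one_of_le₀ (by linarith) (by positivity)

end Correction

end Stage

/-! ### Dependence of the monodromy on the potential -/

section Congr

variable {Q q : ℝ → ℝ} {T : ℝ}

/- The Wronskians of the `v_i` of `q` with the `v_j` of `Q` are constant on `[0, T]`. -/
theorem hillSol_eq_of_eqOn (hQ : Continuous Q) (hq : Continuous q) (h : EqOn Q q (Icc 0 T))
    (j : Fin 2) {t : ℝ} (ht : t ∈ Icc 0 T) :
    hillSol Q j t = hillSol q j t ∧ hillSol' Q j t = hillSol' q j t := by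
  have hwronskian (i : Fin 2) : hillSol q i t * hillSol' Q j t - hillSol' q i t * hillSol Q j t =
      hillSol q i t * hillSol' q j t - hillSol' q i t * hillSol q j t := by
    have hi := isHillSolution_hillSol hq i
    have hint : ∫ τ in (0 : ℝ)..t, (Q τ - q τ) * (hillSol q i τ * hillSol Q j τ) = 0 :=
      intervalIntegral.integral_zero_ae <| .of_forall fun τ hτ => by
        rw [uIoc_of_le ht.1] at hτ
        rw [h ⟨hτ.1.le, hτ.2.trans ht.2⟩, sub_self, zero_mul]
    rw [hi.integral_mul_eq_wronskian hq hQ (isHillSolution_hillSol hQ j), hillSol_zero_eq Q q,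
      hillSol'_zero_eq Q q, sub_eq_zero] at hint
    rw [hint, hi.wronskian_eq (isHillSolution_hillSol hq j) t]
  have hdet := hillSol_mul_hillSol'_sub_eq_one hq t
  constructor
  · linear_combination (hillSol q j t - hillSol Q j t) * hdet - hillSol q 0 t * hwronskian 1 +
      hillSol q 1 t * hwronskian 0
  · linear_combination (hillSol' q j t - hillSol' Q j t) * hdet - hillSol' q 0 t * hwronskian 1 +
      hillSol' q 1 t * hwronskian 0

theorem fundMatrix_eq_of_eqOn (hT : 0 ≤ T) (hQ : Continuous Q) (hq : Continuous q)
    (h : EqOn Q q (Icc 0 T)) : fundMatrix Q T = fundMatrix q T := by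
  have hsol j := hillSol_eq_of_eqOn hQ hq h j ⟨hT, le_rfl⟩
  simp only [fundMatrix, hsol]

theorem hillAngle_eq_of_eqOn (hT : 0 ≤ T) (hQ : Continuous Q) (hq : Continuous q)
    (h : EqOn Q q (Icc 0 T)) : hillAngle Q T = hillAngle q T :=
  intervalIntegral.integral_congr fun t ht => by
    rw [uIcc_of_le hT] at ht
    simp only [angularSpeed, radiusSq, hillSol_eq_of_eqOn hQ hq h _ ht]

theorem continuous_monodromyDefect {X : Type*} [TopologicalSpace X] {q : X → ℝ → ℝ}
    (hq : Continuous (Function.uncurry q)) (T : ℝ) (A : Matrix (Fin 2) (Fin 2) ℝ) :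
    Continuous fun x => monodromyDefect T A (q x) := by
  have hT : Continuous fun x : X => (x, T) := by fun_prop
  have h (i : Fin 2) : Continuous fun x => hillSol (q x) i T := by
    simpa only [Function.comp_def] using (continuous_uncurry_hillSol hq i).comp hT
  have h' (i : Fin 2) : Continuous fun x => hillSol' (q x) i T := by
    simpa only [Function.comp_def] using (continuous_uncurry_hillSol' hq i).comp hT
  refine continuous_pi fun k => ?_
  unfold monodromyDefect
  fun_prop

/- The first row of the fundamental matrix determines the angle modulo `2π`. -/
theorem hillAngle_eq_of_abs_sub_le_one {A : Matrix (Fin 2) (Fin 2) ℝ} {α : ℝ}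
    (hrow : ∃ r : ℝ, 0 < r ∧ A 0 0 = r * cos α ∧ A 0 1 = r * sin α) (hq : Continuous q)
    (hA : fundMatrix q T = A) (hα : |hillAngle q T - α| ≤ 1) : hillAngle q T = α := by
  obtain ⟨r, hr, hcos, hsin⟩ := hrow
  obtain ⟨hcos', hsin'⟩ := hillSol_eq_sqrt_radiusSq_mul hq T
  have hρ : 0 < √(radiusSq q T) := Real.sqrt_pos.2 (radiusSq_pos hq T)
  rw [show hillSol q 0 T = A 0 0 by simp [← hA, fundMatrix], hcos] at hcos'
  rw [show hillSol q 1 T = A 0 1 by simp [← hA, fundMatrix], hsin] at hsin'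
  set ρ := √(radiusSq q T)
  set θ := hillAngle q T
  have hzero : r * ρ * sin (θ - α) = 0 := by
    rw [sin_sub]
    linear_combination r * sin α * hcos' - r * cos α * hsin'
  have hπ := pi_gt_three
  rw [abs_le] at hα
  exact sub_eq_zero.1 <| (sin_eq_zero_iff_of_lt_of_lt (by linarith) (by linarith)).1 <|
    (mul_eq_zero.1 hzero).resolve_left (mul_pos hr hρ).ne'

end Congr

/-! ### Continuous solution of the correction equation -/

theorem exists_continuousMap_pos_forall {Y : Type*} [TopologicalSpace Y] [NormalSpace Y]
    [ParacompactSpace Y] {P : Y × ℝ → Prop} (h : ∀ y, ∀ᶠ p in 𝓝 y ×ˢ 𝓝[>] 0, P p) :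
    ∃ r : C(Y, ℝ), ∀ y, 0 < r y ∧ P (y, r y) := by
  obtain ⟨r, hr⟩ := exists_continuous_forall_mem_convex_of_local_const
    (t := fun y => {c | 0 < c ∧ ∀ s ∈ Ioc 0 c, P (y, s)})
    (fun y => Set.OrdConnected.convex ⟨fun b hb c hc a ha =>
      ⟨hb.1.trans_le ha.1, fun s hs => hc.2 s ⟨hs.1, hs.2.trans ha.2⟩⟩⟩) fun y => by
    obtain ⟨pa, ha, pb, hb, hP⟩ := eventually_prod_iff.1 (eventually_forall_mem_Ioc (h y))
    obtain ⟨c, hc, hc0⟩ := (hb.and self_mem_nhdsWithin).exists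
    exact ⟨c, ha.mono fun y' hy' => ⟨hc0, hP hy' hc⟩⟩
  exact ⟨r, fun y => ⟨(hr y).1, (hr y).2 _ ⟨(hr y).1, le_rfl⟩⟩⟩

section ApproxId

variable {E : Type*} [NormedAddCommGroup E]

theorem norm_sub_le_two_mul_norm_of_apply_eq_zero {F : E → E} {a b : E}
    (h : ‖F a - F b - (a - b)‖ ≤ 1 / 2 * ‖a - b‖) (hb : F b = 0) : ‖a - b‖ ≤ 2 * ‖F a‖ := by
  rw [hb, sub_zero] at h
  rw [norm_sub_rev] at h
  linarith [norm_sub_norm_le (a - b) (F a)]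

variable [NormedSpace ℝ E] [CompleteSpace E]

theorem exists_norm_le_apply_eq_zero {F : E → E} {r : ℝ} (hr : 0 ≤ r)
    (hF : ∀ a b, ‖a‖ ≤ r → ‖b‖ ≤ r → ‖F a - F b - (a - b)‖ ≤ 1 / 2 * ‖a - b‖)
    (h0 : ‖F 0‖ ≤ r / 2) : ∃ a, ‖a‖ ≤ r ∧ F a = 0 := by
  have happrox : ApproximatesLinearOn F (ContinuousLinearMap.id ℝ E) (Metric.closedBall 0 r)
      (1 / 2) := fun a ha b hb => by
    simpa using hF a b (mem_closedBall_zero_iff.1 ha) (mem_closedBall_zero_iff.1 hb)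
  obtain ⟨a, ha, hFa⟩ := happrox.surjOn_closedBall_of_nonlinearRightInverse
    ⟨id, 1, by simp, by simp⟩ hr le_rfl (a := 0) (by
      rw [mem_closedBall_iff_norm, zero_sub, norm_neg]
      refine h0.trans_eq ?_
      norm_num
      ring)
  exact ⟨a, mem_closedBall_zero_iff.1 ha, hFa⟩

theorem exists_continuousMap_apply_eq_zero {Y : Type*} [TopologicalSpace Y] {F : Y → E → E}
    (hF : ∀ a, Continuous fun y => F y a) {r : C(Y, ℝ)} (hr : ∀ y, 0 < r y)
    (happrox : ∀ y a b, ‖a‖ ≤ r y → ‖b‖ ≤ r y → ‖F y a - F y b - (a - b)‖ ≤ 1 / 2 * ‖a - b‖)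
    (h0 : ∀ y, ‖F y 0‖ ≤ r y / 4) : ∃ a : C(Y, E), ∀ y, ‖a y‖ ≤ r y ∧ F y (a y) = 0 := by
  have hhalf y : r y / 2 ≤ r y := half_le_self (hr y).le
  choose a ha hFa using fun y => exists_norm_le_apply_eq_zero (half_pos (hr y)).le
    (fun b c hb hc => happrox y b c (hb.trans (hhalf y)) (hc.trans (hhalf y)))
    ((h0 y).trans_eq (by ring))
  refine ⟨⟨a, continuous_iff_continuousAt.2 fun y₀ => ?_⟩, fun y => ⟨(ha y).trans (hhalf y), hFa y⟩⟩
  rw [ContinuousAt, tendsto_iff_norm_sub_tendsto_zero]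
  have hlim : Tendsto (fun y => 2 * ‖F y (a y₀)‖) (𝓝 y₀) (𝓝 0) := by
    simpa [hFa] using ((hF (a y₀)).norm.const_mul 2).tendsto y₀
  refine squeeze_zero' (.of_forall fun _ => norm_nonneg _) ?_ hlim
  filter_upwards [r.continuous.continuousAt.eventually (lt_mem_nhds (half_lt_self (hr y₀)))]
    with y hy
  rw [norm_sub_rev]
  exact norm_sub_le_two_mul_norm_of_apply_eq_zero
    (happrox y _ _ ((ha y₀).trans hy.le) ((ha y).trans (hhalf y))) (hFa y)

end ApproxId

/-! ### Periodic extension -/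

/-- The `T`-periodic extension of the restriction of `v` to `[0, T)`. -/
noncomputable def periodicExtension {E : Type*} (T : ℝ) (v : ℝ → E) (t : ℝ) : E :=
  v (T * Int.fract (t / T))

section PeriodicExtension

variable {E : Type*} {T t : ℝ} {v : ℝ → E}

theorem periodic_periodicExtension (hT : T ≠ 0) (v : ℝ → E) :
    Function.Periodic (periodicExtension T v) T := fun t => by
  simp only [periodicExtension, add_div, div_self hT, Int.fract_add_one]

theorem periodicExtension_of_mem_Ico (ht : t ∈ Ico 0 T) : periodicExtension T v t = v t := by
  have hT : 0 < T := ht.1.trans_lt ht.2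
  rw [periodicExtension, Int.fract_eq_self.2 ⟨div_nonneg ht.1 hT.le, (div_lt_one hT).2 ht.2⟩,
    mul_div_cancel₀ _ hT.ne']

theorem periodicExtension_of_mem_Icc (hv : v T = v 0) (ht : t ∈ Icc 0 T) :
    periodicExtension T v t = v t := by
  rcases ht.2.eq_or_lt with rfl | htT
  · rcases eq_or_ne t 0 with rfl | ht0
    · simp [periodicExtension]
    · simp [periodicExtension, div_self ht0, hv]
  · exact periodicExtension_of_mem_Ico ⟨ht.1, htT⟩

theorem continuous_periodicExtension {Y : Type*} [TopologicalSpace Y] [TopologicalSpace E]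
    {F : Y → ℝ → E} (hF : Continuous (Function.uncurry F)) (hper : ∀ y, F y T = F y 0) :
    Continuous (Function.uncurry fun y => periodicExtension T (F y)) :=
  ContinuousOn.comp_fract (s := fun z : Y × ℝ => z.2 / T) (f := fun z x => F z.1 (T * x))
    (hF.comp (by fun_prop : Continuous fun w : (Y × ℝ) × ℝ => (w.1.1, T * w.2))).continuousOn
    (by fun_prop) fun z => by simpa using (hper z.1).symm

end PeriodicExtension

/-! ### Loops with prescribed monodromy -/

/-- A loop of period `T` such that the potential `g ∘ v` has monodromy `A` and angle `α`. -/
structure IsMonodromyLoop (g : ℝ → ℝ) (T : ℝ) (A : Matrix (Fin 2) (Fin 2) ℝ) (α : ℝ)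
    (v : ℝ → ℝ) : Prop where
  continuous : Continuous v
  apply_eq : v T = v 0
  exists_ne : ∃ t₁ ∈ Ioo 0 T, ∃ t₂ ∈ Ioo 0 T, v t₁ ≠ v t₂
  fundMatrix_eq : fundMatrix (fun t => g (v t)) T = A
  hillAngle_eq : hillAngle (fun t => g (v t)) T = α

namespace Stage

variable {g g' : ℝ → ℝ} {W : ℝ → ℝ → ℝ} {T : ℝ} {A : Matrix (Fin 2) (Fin 2) ℝ} {α : ℝ}

section

variable (σ : Stage g g' T A α) {s t : ℝ}

theorem candidate_eq_base (hs : 0 < s) (a : Fin 3 → ℝ) (ht : t = 0 ∨ t = T) :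
    σ.candidate W s a t = σ.base t := by
  have hdual (l : Fin 3) : σ.dual l t = 0 := by rcases ht with rfl | rfl <;> simp [dual]
  have hdepth : σ.depth t ≤ 0 := by
    rcases ht with rfl | rfl
    · exact min_le_left _ _
    · exact (min_le_right _ _).trans (sub_nonpos.2 σ.front_mul_le)
  simp [candidate, σ.sweep_of_depth_nonpos hs hdepth, σ.direction_eq_zero_of_dual_eq_zero (hdual _)]

theorem sweep_of_front_eq_zero (hs : 0 < s) (h : σ.front = 0) : σ.sweep W s = σ.base := by
  ext t
  refine σ.sweep_of_depth_nonpos hs ?_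
  rw [depth, h, zero_mul, zero_sub, min_le_iff]
  exact (le_total t 0).imp_right neg_nonpos.2

theorem monodromyDefect_base_of_front_eq_zero (hg : Continuous g) (h : σ.front = 0) :
    monodromyDefect T A (fun t => g (σ.base t)) = 0 := by
  have hbase : Continuous fun t => g (σ.base t) := hg.comp σ.base.continuous
  refine monodromyDefect_self hbase ?_
  rw [fundMatrix_eq_of_eqOn σ.pos.le hbase σ.target.continuous fun t ht =>
    (σ.isStage.target_eq (h ▸ one_pos) t ht).symm, σ.isStage.fundMatrix_target]

end

/-- For periods `s ≤ r` and corrections `‖a‖ ≤ r`, the candidates are not constant, their angles are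
close to `α`, and the defect of the monodromy is close to an isometry in `a`. -/
structure IsCorrectionRadius (W : ℝ → ℝ → ℝ) (σ : Stage g g' T A α) (r : ℝ) : Prop where
  exists_ne : ∀ s ∈ Ioc 0 r, ∀ a, ‖a‖ ≤ r →
    ∃ t₁ ∈ Ioo 0 T, ∃ t₂ ∈ Ioo 0 T, σ.candidate W s a t₁ ≠ σ.candidate W s a t₂
  norm_sub_sub_le : ∀ s ∈ Ioc 0 r, ∀ a b, ‖a‖ ≤ r → ‖b‖ ≤ r →
    ‖monodromyDefect T A (fun t => g (σ.candidate W s a t)) -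
      monodromyDefect T A (fun t => g (σ.candidate W s b t)) - (a - b)‖ ≤ 1 / 2 * ‖a - b‖
  abs_hillAngle_sub_le : ∀ s ∈ Ioc 0 r, ∀ a, ‖a‖ ≤ r →
    |hillAngle (fun t => g (σ.candidate W s a t)) T - α| ≤ 1

instance : ParacompactSpace (Stage g g' T A α) :=
  have : TopologicalSpace.MetrizableSpace (Stage g g' T A α) :=
    IsEmbedding.subtypeVal.metrizableSpace
  let _ := TopologicalSpace.metrizableSpaceMetric (Stage g g' T A α)
  inferInstance

theorem exists_continuousMap_isCorrectionRadius (hg : ∀ x, HasDerivAt g (g' x) x)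
    (hg' : Continuous g') (hW : IsOscillation g g' W) :
    ∃ r : C(Stage g g' T A α, ℝ), ∀ σ, 0 < r σ ∧ σ.IsCorrectionRadius W (r σ) :=
  exists_continuousMap_pos_forall
    (P := fun p : Stage g g' T A α × ℝ => p.1.IsCorrectionRadius W p.2) fun σ₀ => by
    filter_upwards [eventually_exists_candidate_ne σ₀ hg' hW,
      eventually_norm_monodromyDefect_sub_sub_le σ₀ hg hg' hW,
      eventually_abs_hillAngle_sub_le σ₀ hg hg' hW] with p h₁ h₂ h₃ using ⟨h₁, h₂, h₃⟩

theorem exists_continuousMap_period (hg : ∀ x, HasDerivAt g (g' x) x) (hg' : Continuous g')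
    (hW : IsOscillation g g' W) {r : C(Stage g g' T A α, ℝ)} (hr : ∀ σ, 0 < r σ) :
    ∃ s : C(Stage g g' T A α, ℝ), ∀ σ, 0 < s σ ∧ s σ ≤ r σ ∧
      ‖monodromyDefect T A fun t => g (σ.sweep W (s σ) t)‖ ≤ r σ / 4 :=
  exists_continuousMap_pos_forall (P := fun p : Stage g g' T A α × ℝ => p.2 ≤ r p.1 ∧
    ‖monodromyDefect T A fun t => g (p.1.sweep W p.2 t)‖ ≤ r p.1 / 4) fun σ₀ => by
    have hr₀ := half_pos (hr σ₀)
    filter_upwards [tendsto_fst.eventually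
        (r.continuous.continuousAt.eventually (lt_mem_nhds (half_lt_self (hr σ₀)))),
      tendsto_snd.eventually (Ioc_mem_nhdsGT hr₀),
      eventually_norm_monodromyDefect_sweep_le σ₀ hg hg' hW (half_pos (half_pos hr₀))]
      with p hp hs hsweep
    exact ⟨hs.2.trans hp.le, hsweep.trans (by linarith)⟩

theorem exists_continuousMap_isMonodromyLoop_candidate (hA : A.det = 1)
    (hrow : ∃ r : ℝ, 0 < r ∧ A 0 0 = r * cos α ∧ A 0 1 = r * sin α)
    (hg : ∀ x, HasDerivAt g (g' x) x) (hg' : Continuous g') (hW : IsOscillation g g' W) :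
    ∃ (s : C(Stage g g' T A α, ℝ)) (a : C(Stage g g' T A α, Fin 3 → ℝ)), ∀ σ, 0 < s σ ∧
      IsMonodromyLoop g T A α (σ.candidate W (s σ) (a σ)) ∧ (σ.front = 0 → a σ = 0) := by
  have hgc : Continuous g := continuous_iff_continuousAt.2 fun x => (hg x).continuousAt
  obtain ⟨r, hr⟩ := exists_continuousMap_isCorrectionRadius (T := T) (A := A) (α := α) hg hg' hW
  have hr0 σ : 0 < r σ := (hr σ).1
  obtain ⟨s, hs⟩ := exists_continuousMap_period hg hg' hW hr0
  have hs0 σ : 0 < s σ := (hs σ).1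
  have hsr σ : s σ ∈ Ioc 0 (r σ) := ⟨hs0 σ, (hs σ).2.1⟩
  have hcont (a : Fin 3 → ℝ) : Continuous (Function.uncurry fun σ t =>
      g (Stage.candidate W σ (s σ) a t)) :=
    hgc.comp (continuous_candidate hg' hW continuous_fst (s.continuous.comp continuous_fst)
      (fun z => (hs0 z.1).ne') continuous_const continuous_snd)
  obtain ⟨a, ha⟩ := exists_continuousMap_apply_eq_zero
    (fun a => continuous_monodromyDefect (hcont a) T A) hr0
    (fun σ => (hr σ).2.norm_sub_sub_le _ (hsr σ)) fun σ => by
      simpa only [candidate_zero] using (hs σ).2.2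
  refine ⟨s, a, fun σ => ⟨hs0 σ, ?_, fun hfront => ?_⟩⟩
  · have hfund := fundMatrix_eq_of_monodromyDefect_eq_zero hA ((hcont (a σ)).uncurry_left σ)
      (ha σ).2
    exact
      { continuous := continuous_candidate hg' hW continuous_const continuous_const
          (fun _ => (hs0 σ).ne') continuous_const continuous_id
        apply_eq := by
          rw [candidate_eq_base σ (hs0 σ) _ (.inl rfl), candidate_eq_base σ (hs0 σ) _ (.inr rfl),
            σ.isStage.base_period]
        exists_ne := (hr σ).2.exists_ne _ (hsr σ) _ (ha σ).1
        fundMatrix_eq := hfund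
        hillAngle_eq := hillAngle_eq_of_abs_sub_le_one hrow ((hcont (a σ)).uncurry_left σ) hfund
          ((hr σ).2.abs_hillAngle_sub_le _ (hsr σ) _ (ha σ).1) }
  · have hzero : monodromyDefect T A (fun t => g (σ.candidate W (s σ) 0 t)) = 0 := by
      rw [candidate_zero, sweep_of_front_eq_zero σ (hs0 σ) hfront]
      exact monodromyDefect_base_of_front_eq_zero σ hgc hfront
    have hnorm := norm_sub_le_two_mul_norm_of_apply_eq_zero
      (F := fun b => monodromyDefect T A fun t => g (σ.candidate W (s σ) b t))
      ((hr σ).2.norm_sub_sub_le _ (hsr σ) 0 (a σ) (by simpa using (hr0 σ).le) (ha σ).1) (ha σ).2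
    simpa [hzero] using hnorm

theorem exists_isMonodromyLoop (hA : A.det = 1)
    (hrow : ∃ r : ℝ, 0 < r ∧ A 0 0 = r * cos α ∧ A 0 1 = r * sin α)
    (hg : ∀ x, HasDerivAt g (g' x) x) (hg' : Continuous g') (hW : IsOscillation g g' W) :
    ∃ v : Stage g g' T A α → ℝ → ℝ, Continuous (Function.uncurry v) ∧
      (∀ σ, IsMonodromyLoop g T A α (v σ)) ∧ ∀ σ, σ.front = 0 → v σ = σ.base := by
  obtain ⟨s, a, h⟩ :=
    exists_continuousMap_isMonodromyLoop_candidate (T := T) (A := A) hA hrow hg hg' hW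
  refine ⟨fun σ => σ.candidate W (s σ) (a σ), continuous_candidate hg' hW continuous_fst
    (s.continuous.comp continuous_fst) (fun z => (h z.1).1.ne') (a.continuous.comp continuous_fst)
    continuous_snd, fun σ => (h σ).2.1, fun σ hσ => ?_⟩
  beta_reduce
  rw [(h σ).2.2 hσ, candidate_zero, sweep_of_front_eq_zero σ (h σ).1 hσ]

end Stage

/-! ### Periodic functions and the level set -/

theorem exists_continuous_boundedContinuousFunction {Y E : Type*} [TopologicalSpace Y]
    [PseudoMetricSpace E] {T : ℝ} (hT : 0 < T) {F : Y → ℝ → E}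
    (hF : Continuous (Function.uncurry F)) (hper : ∀ y, Function.Periodic (F y) T) :
    ∃ G : Y → BoundedContinuousFunction ℝ E, Continuous G ∧ ∀ y, ⇑(G y) = F y := by
  refine ⟨fun y => ⟨⟨F y, hF.uncurry_left y⟩, Metric.isBounded_range_iff.1
    ((hper y).isBounded_of_continuous hT.ne' (hF.uncurry_left y))⟩,
    continuous_iff_continuousAt.2 fun y₀ => ?_, fun _ => rfl⟩
  rw [ContinuousAt, BoundedContinuousFunction.tendsto_iff_tendstoUniformly,
    Metric.tendstoUniformly_iff]
  intro ε hε
  have hunif := ContinuousMap.tendsto_iff_forall_isCompact_tendstoUniformlyOn.1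
    ((ContinuousMap.curry ⟨Function.uncurry F, hF⟩).continuous.tendsto y₀) (Icc 0 T) isCompact_Icc
  filter_upwards [Metric.tendstoUniformlyOn_iff.1 hunif ε hε] with y hy t
  have hdist : Function.Periodic (fun t => dist (F y₀ t) (F y t)) T := fun t => by
    simp only [hper y₀ t, hper y t]
  obtain ⟨s, hs, hst⟩ := hdist.exists_mem_Ico₀ hT t
  exact hst.trans_lt (hy s (Ico_subset_Icc_self hs))

theorem exists_mem_Ioo_ne_of_periodic {E : Type*} [TopologicalSpace E] [T2Space E] {T : ℝ}
    (hT : 0 < T) {u : ℝ → E} (hu : Continuous u) (hper : Function.Periodic u T)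
    (hne : ¬∃ c, u = fun _ => c) : ∃ t₁ ∈ Ioo 0 T, ∃ t₂ ∈ Ioo 0 T, u t₁ ≠ u t₂ := by
  by_contra! hconst
  refine hne ⟨u (T / 2), funext fun t => ?_⟩
  have hclosure : EqOn u (fun _ => u (T / 2)) (closure (Ioo 0 T)) :=
    EqOn.closure (fun t ht => hconst t ht _ ⟨half_pos hT, half_lt_self hT⟩) hu continuous_const
  rw [closure_Ioo hT.ne] at hclosure
  obtain ⟨s, hs, hst⟩ := hper.exists_mem_Ico₀ hT t
  exact hst.trans (hclosure (Ico_subset_Icc_self hs))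

theorem exists_mem_apply_mem_of_dense {u : ℝ → ℝ} (hu : Continuous u) {I D : Set ℝ}
    [I.OrdConnected] (hD : Dense D) {t₁ t₂ : ℝ} (h₁ : t₁ ∈ I) (h₂ : t₂ ∈ I) (hne : u t₁ ≠ u t₂) :
    ∃ t ∈ I, u t ∈ D := by
  obtain ⟨x, hxD, hx⟩ := hD.exists_between (inf_lt_sup.2 hne)
  obtain ⟨t, ht, rfl⟩ := intermediate_value_uIcc hu.continuousOn (Ioo_subset_Icc_self hx)
  exact ⟨t, OrdConnected.uIcc_subset ‹_› h₁ h₂ ht, hxD⟩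

theorem _root_.NowhereFlat.dense_deriv_ne_zero {g : ℝ → ℝ} (hg : NowhereFlat g) :
    Dense {x | deriv g x ≠ 0} := by
  change Dense {x | deriv g x = 0}ᶜ
  rw [← interior_eq_empty_iff_dense_compl, Set.eq_empty_iff_forall_notMem]
  intro x hx
  have hzero : deriv g =ᶠ[𝓝 x] fun _ => 0 := mem_interior_iff_mem_nhds.1 hx
  obtain ⟨r, -, hr⟩ := hg
  obtain ⟨k, hk, -, hne⟩ := hr x
  obtain ⟨k, rfl⟩ := Nat.exists_eq_add_one.2 hk
  rw [iteratedDeriv_succ', (hzero.iteratedDeriv k).self_of_nhds] at hne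
  simp at hne

section LevelSet

variable {f : ℝ → ℝ} {A : Matrix (Fin 2) (Fin 2) ℝ} {α : ℝ} {u : BoundedContinuousFunction ℝ ℝ}

theorem isMonodromyLoop_of_mem_levelSet (hf : Continuous (deriv f)) (hu : u ∈ levelSet f A α) :
    IsMonodromyLoop (deriv f) (2 * π) A α u := by
  obtain ⟨hper, hne, hfund, hangle⟩ := (mem_levelSet_iff hf).1 hu
  exact ⟨u.continuous, hper.eq, exists_mem_Ioo_ne_of_periodic two_pi_pos u.continuous hper hne,
    hfund, hangle⟩

theorem mem_levelSet_of_eq_periodicExtension (hf : Continuous (deriv f)) {v : ℝ → ℝ}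
    (hv : IsMonodromyLoop (deriv f) (2 * π) A α v) (hu : ⇑u = periodicExtension (2 * π) v) :
    u ∈ levelSet f A α := by
  have heqOn : EqOn (fun t => deriv f (u t)) (fun t => deriv f (v t)) (Icc 0 (2 * π)) :=
    fun t ht => by simp only [hu, periodicExtension_of_mem_Icc hv.apply_eq ht]
  have hcu : Continuous fun t => deriv f (u t) := hf.comp u.continuous
  have hcv : Continuous fun t => deriv f (v t) := hf.comp hv.continuous
  refine (mem_levelSet_iff hf).2 ⟨hu ▸ periodic_periodicExtension two_pi_pos.ne' v, ?_,
    (fundMatrix_eq_of_eqOn two_pi_pos.le hcu hcv heqOn).trans hv.fundMatrix_eq,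
    (hillAngle_eq_of_eqOn two_pi_pos.le hcu hcv heqOn).trans hv.hillAngle_eq⟩
  rintro ⟨c, hc⟩
  obtain ⟨t₁, h₁, t₂, h₂, hne⟩ := hv.exists_ne
  refine hne ?_
  rw [← periodicExtension_of_mem_Ico (v := v) (Ioo_subset_Ico_self h₁), ← hu, hc,
    ← periodicExtension_of_mem_Ico (v := v) (Ioo_subset_Ico_self h₂), ← hu, hc]

theorem periodicExtension_eq_self {E : Type*} {T : ℝ} {v : ℝ → E} (hT : T ≠ 0)
    (hv : Function.Periodic v T) : periodicExtension T v = v := by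
  funext t
  rw [periodicExtension, ← Int.self_sub_floor, mul_sub, mul_div_cancel₀ _ hT, mul_comm T,
    hv.sub_int_mul_eq]

theorem Stage.exists_continuousMap_levelSet (hf : ContDiff ℝ 2 f)
    (hsurj : Function.Surjective (deriv f)) (hA : A.det = 1)
    (hrow : ∃ r : ℝ, 0 < r ∧ A 0 0 = r * cos α ∧ A 0 1 = r * sin α) :
    ∃ F : C(Stage (deriv f) (deriv (deriv f)) (2 * π) A α, levelSet f A α),
      ∀ (σ : Stage (deriv f) (deriv (deriv f)) (2 * π) A α) (u : levelSet f A α),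
        σ.front = 0 → ⇑σ.base = u.1 → F σ = u := by
  have hg : ContDiff ℝ 1 (deriv f) := hf.deriv'
  have hg' (x : ℝ) : HasDerivAt (deriv f) (deriv (deriv f) x) x :=
    (hg.differentiable one_ne_zero x).hasDerivAt
  have hg'' : Continuous (deriv (deriv f)) := hg.continuous_deriv le_rfl
  obtain ⟨W, hW⟩ := exists_isOscillation hg' hg'' hsurj
  obtain ⟨v, hv, hloop, hfront⟩ := exists_isMonodromyLoop hA hrow hg' hg'' hW
  obtain ⟨G, hG, hGv⟩ := exists_continuous_boundedContinuousFunction two_pi_pos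
    (continuous_periodicExtension hv fun σ => (hloop σ).apply_eq)
    fun σ => periodic_periodicExtension two_pi_pos.ne' (v σ)
  refine ⟨⟨fun σ => ⟨G σ, mem_levelSet_of_eq_periodicExtension hg.continuous (hloop σ) (hGv σ)⟩,
    hG.subtype_mk _⟩, fun σ u hσ hu => Subtype.ext (DFunLike.coe_injective ?_)⟩
  have hper : Function.Periodic u.1 (2 * π) := ((mem_levelSet_iff hg.continuous).1 u.2).1
  exact (hGv σ).trans (by rw [hfront σ hσ, hu, periodicExtension_eq_self two_pi_pos.ne' hper])

end LevelSet

/-! ### The deformation -/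

section Deformation

variable {g g' : ℝ → ℝ} {A : Matrix (Fin 2) (Fin 2) ℝ} {α : ℝ} {φ φ' φ'' : ℝ → ℝ}

/-- The path of potentials from `q` at `σ = 0` to the potential of the angular speed `φ` at `σ = 1`
along which the angular speed is affine in `σ`. -/
noncomputable def keplerSegment (φ φ' φ'' q : ℝ → ℝ) (σ t : ℝ) : ℝ :=
  keplerPotential ((1 - σ) * angularSpeed q t + σ * φ t) ((1 - σ) * angularSpeed' q t + σ * φ' t)
    ((1 - σ) * angularSpeed'' q t + σ * φ'' t)

theorem keplerSegment_zero {q : ℝ → ℝ} (hq : Continuous q) (t : ℝ) :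
    keplerSegment φ φ' φ'' q 0 t = q t := by
  simp [keplerSegment, keplerPotential_angularSpeed hq t]

theorem keplerSegment_one (q : ℝ → ℝ) (t : ℝ) :
    keplerSegment φ φ' φ'' q 1 t = keplerPotential (φ t) (φ' t) (φ'' t) := by
  simp [keplerSegment]

theorem continuous_keplerSegment {X : Type*} [TopologicalSpace X] {q : X → ℝ → ℝ} {σ : X → ℝ}
    (hq : Continuous (Function.uncurry q)) (hφ : IsAngularSpeed φ φ' φ'') (hσ : Continuous σ)
    (hσ₀₁ : ∀ x, σ x ∈ Icc 0 1) :
    Continuous (Function.uncurry fun x => keplerSegment φ φ' φ'' (q x) (σ x)) := by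
  have := continuous_uncurry_angularSpeed hq
  have := continuous_uncurry_angularSpeed' hq
  have := continuous_uncurry_angularSpeed'' hq
  have := hφ.continuous; have := hφ.continuous'; have := hφ.continuous''
  have hpos (z : X × ℝ) : (1 - σ z.1) * angularSpeed (q z.1) z.2 + σ z.1 * φ z.2 ≠ 0 :=
    ((convex_Ioi (0 : ℝ)) ((isAngularSpeed_angularSpeed (hq.uncurry_left z.1)).pos z.2)
      (hφ.pos z.2) (sub_nonneg.2 (hσ₀₁ z.1).2) (hσ₀₁ z.1).1 (sub_add_cancel 1 _)).ne'
  unfold Function.uncurry keplerSegment keplerPotential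
  fun_prop (disch := assumption)

theorem IsMonodromyLoop.hasMonodromy (hg : Continuous g) {u : ℝ → ℝ}
    (hu : IsMonodromyLoop g (2 * π) A α u) :
    HasMonodromy A α (angularSpeed fun t => g (u t)) (angularSpeed' fun t => g (u t))
      (angularSpeed'' fun t => g (u t)) := by
  simpa only [hu.fundMatrix_eq, hu.hillAngle_eq] using
    hasMonodromy_angularSpeed (q := fun t => g (u t)) (hg.comp hu.continuous)

theorem isStage_keplerSegment (hA : A.det = 1)
    (hrow : ∃ r : ℝ, 0 < r ∧ A 0 0 = r * cos α ∧ A 0 1 = r * sin α) (hg : Continuous g)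
    (hdense : Dense {x | g' x ≠ 0}) (hφ : HasMonodromy A α φ φ' φ'') {u : ℝ → ℝ}
    (hu : IsMonodromyLoop g (2 * π) A α u) {p σ : ℝ} (hp : p ∈ Icc 0 1) (hσ : σ ∈ Icc 0 1)
    (hpσ : p < 1 → σ = 0) :
    IsStage g g' (2 * π) A α p (fun t => (1 - σ) * u t)
      (keplerSegment φ φ' φ'' (fun t => g (u t)) σ) fun t => (1 - σ) * g' (u t) ^ 2 + σ where
  front_mem := hp
  base_period := by rw [hu.apply_eq]
  base_ne h := by simpa [hpσ (h ▸ one_pos)] using hu.exists_ne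
  target_eq h t _ := by
    rw [hpσ h, keplerSegment_zero (q := fun t => g (u t)) (hg.comp hu.continuous), sub_zero,
      one_mul]
  weight_eq h t _ := by simp [hpσ h]
  weight_nonneg t _ := add_nonneg (mul_nonneg (sub_nonneg.2 hσ.2) (sq_nonneg _)) hσ.1
  weight_pos := by
    obtain ⟨t₁, h₁, t₂, h₂, hne⟩ := hu.exists_ne
    obtain ⟨t, ht, hgt⟩ := exists_mem_apply_mem_of_dense hu.continuous hdense h₁ h₂ hne
    refine ⟨t, ht, ?_⟩
    simpa using (convex_Ioi (0 : ℝ)) (sq_pos_of_ne_zero hgt) (mem_Ioi.2 one_pos)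
      (sub_nonneg.2 hσ.2) hσ.1 (sub_add_cancel 1 σ)
  fundMatrix_target :=
    ((hu.hasMonodromy hg).convexCombination hφ hσ.1 hσ.2).fundMatrix_keplerPotential_eq hA hrow
  hillAngle_target :=
    ((hu.hasMonodromy hg).convexCombination hφ hσ.1 hσ.2).hillAngle_keplerPotential

theorem isStage_one (hA : A.det = 1)
    (hrow : ∃ r : ℝ, 0 < r ∧ A 0 0 = r * cos α ∧ A 0 1 = r * sin α)
    (hφ : HasMonodromy A α φ φ' φ'') :
    IsStage g g' (2 * π) A α 1 0 (fun t => keplerPotential (φ t) (φ' t) (φ'' t)) 1 where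
  front_mem := ⟨zero_le_one, le_rfl⟩
  base_period := rfl
  base_ne h := absurd h one_ne_zero
  target_eq h := absurd h (lt_irrefl 1)
  weight_eq h := absurd h (lt_irrefl 1)
  weight_nonneg _ _ := zero_le_one
  weight_pos := ⟨π, ⟨pi_pos, by linarith [pi_pos]⟩, one_pos⟩
  fundMatrix_target := hφ.fundMatrix_keplerPotential_eq hA hrow
  hillAngle_target := hφ.hillAngle_keplerPotential

theorem sq_add_sq_pos_of_polar {x y : ℝ}
    (h : ∃ r : ℝ, 0 < r ∧ x = r * cos α ∧ y = r * sin α) : 0 < x ^ 2 + y ^ 2 := by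
  obtain ⟨r, hr, rfl, rfl⟩ := h
  rw [mul_pow, mul_pow, ← mul_add, cos_sq_add_sin_sq]
  positivity

theorem exists_continuousMap_stage (hA : A.det = 1)
    (hrow : ∃ r : ℝ, 0 < r ∧ A 0 0 = r * cos α ∧ A 0 1 = r * sin α) (hα : 0 < α)
    (hg : Continuous g) (hg' : Continuous g') (hdense : Dense {x | g' x ≠ 0}) {Y : Type*}
    [TopologicalSpace Y] (U : C(Y, BoundedContinuousFunction ℝ ℝ))
    (hU : ∀ y, IsMonodromyLoop g (2 * π) A α (U y)) :
    ∃ (σ₁ : Stage g g' (2 * π) A α) (H : C(unitInterval × Y, Stage g g' (2 * π) A α)),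
      (∀ y, (H (0, y)).front = 0 ∧ ⇑(H (0, y)).base = U y) ∧ ∀ y, H (1, y) = σ₁ := by
  obtain ⟨φ, φ', φ'', hφ⟩ := exists_hasMonodromy hα (sq_add_sq_pos_of_polar hrow)
  let p (z : unitInterval × Y) : ℝ := min 1 (2 * z.1)
  let σ (z : unitInterval × Y) : ℝ := max 0 (2 * z.1 - 1)
  have hpc : Continuous p := by fun_prop
  have hσc : Continuous σ := by fun_prop
  have hp z : p z ∈ Icc 0 1 :=
    ⟨le_min zero_le_one (mul_nonneg zero_le_two z.1.2.1), min_le_left _ _⟩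
  have hσ z : σ z ∈ Icc 0 1 := ⟨le_max_left _ _, max_le zero_le_one (by linarith [z.1.2.2])⟩
  have hpσ z (h : p z < 1) : σ z = 0 := max_eq_left (by
    linarith [(min_lt_iff.1 h).resolve_left (lt_irrefl 1)])
  let h : C(unitInterval × Y, C(ℝ, ℝ)) := .curry ⟨fun z => (1 - σ z.1) * U z.1.2 z.2, by fun_prop⟩
  let q : C(unitInterval × Y, C(ℝ, ℝ)) := .curry
    ⟨_, continuous_keplerSegment (q := fun z : unitInterval × Y => fun t => g (U z.2 t))
      (by unfold Function.uncurry; fun_prop) hφ.toIsAngularSpeed hσc hσ⟩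
  let η : C(unitInterval × Y, C(ℝ, ℝ)) := .curry
    ⟨fun z => (1 - σ z.1) * g' (U z.1.2 z.2) ^ 2 + σ z.1, by fun_prop⟩
  let H : C(unitInterval × Y, Stage g g' (2 * π) A α) :=
    ⟨fun z => ⟨(p z, h z, q z, η z), isStage_keplerSegment hA hrow hg hdense hφ (hU z.2) (hp z)
      (hσ z) (hpσ z)⟩, by fun_prop⟩
  refine ⟨⟨(1, 0, ⟨_, hφ.continuous_keplerPotential⟩, 1), isStage_one hA hrow hφ⟩, H, fun y => ?_,
    fun y => ?_⟩
  · have hp0 : p (0, y) = 0 := by simp [p]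
    refine ⟨hp0, funext fun t => ?_⟩
    change (1 - σ (0, y)) * U y t = U y t
    rw [hpσ _ (hp0 ▸ one_pos), sub_zero, one_mul]
  · have hp1 : p (1, y) = 1 := by norm_num [p]
    have hσ1 : σ (1, y) = 1 := by norm_num [σ]
    refine Subtype.ext (Prod.ext hp1 (Prod.ext ?_ (Prod.ext ?_ ?_))) <;> ext t
    · change (1 - σ (1, y)) * U y t = 0
      rw [hσ1, sub_self, zero_mul]
    · change keplerSegment φ φ' φ'' _ (σ (1, y)) t = _
      rw [hσ1, keplerSegment_one]
      rfl
    · change (1 - σ (1, y)) * g' (U y t) ^ 2 + σ (1, y) = 1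
      rw [hσ1, sub_self, zero_mul, zero_add]

end Deformation

end HillMonodromy

open HillMonodromy in
theorem stmt_15_general {f : ℝ → ℝ} (hf : ContDiff ℝ 2 f) (hsurj : Function.Surjective (deriv f))
    (hdense : Dense {x | deriv (deriv f) x ≠ 0}) {A : Matrix (Fin 2) (Fin 2) ℝ} (hA : A.det = 1)
    {α : ℝ} (hα : 0 < α) (hrow : ∃ r : ℝ, 0 < r ∧ A 0 0 = r * cos α ∧ A 0 1 = r * sin α) :
    (levelSet f A α).Nonempty ∧ ContractibleSpace (levelSet f A α) := by
  have hg : ContDiff ℝ 1 (deriv f) := hf.deriv'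
  obtain ⟨F, hF⟩ := Stage.exists_continuousMap_levelSet hf hsurj hA hrow
  obtain ⟨σ₁, H, hH₀, hH₁⟩ := exists_continuousMap_stage hA hrow hα hg.continuous
    (hg.continuous_deriv le_rfl) hdense ⟨Subtype.val, continuous_subtype_val⟩
    fun u : levelSet f A α => isMonodromyLoop_of_mem_levelSet hg.continuous u.2
  refine ⟨⟨F σ₁, (F σ₁).2⟩, (contractible_iff_id_nullhomotopic _).2 ⟨F σ₁, ⟨⟨F.comp H, ?_, ?_⟩⟩⟩⟩
  · exact fun u => hF _ u (hH₀ u).1 (hH₀ u).2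
  · exact fun u => congrArg F (hH₁ u)

/-- Theorem 4.1. For `f` smooth with `f'` surjective and nowhere
flat, the level set of the nonlinear monodromy map over any element of `G₀` — encoded by
`A ∈ SL(2,ℝ)` and a compatible winding `α > 0` — inside the nonconstant continuous
`2π`-periodic functions with the sup-norm topology, is nonempty and contractible. -/
theorem stmt_15 (f : ℝ → ℝ) (hf : ContDiff ℝ (⊤ : ℕ∞) f)
    (hsurj : Function.Surjective (deriv f)) (hnf : NowhereFlat (deriv f))
    (A : Matrix (Fin 2) (Fin 2) ℝ) (hA : A.det = 1)
    (α : ℝ) (hα : 0 < α)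
    (hrow : ∃ r : ℝ, 0 < r ∧ A 0 0 = r * Real.cos α ∧ A 0 1 = r * Real.sin α) :
    (levelSet f A α).Nonempty ∧ ContractibleSpace (levelSet f A α) :=
  stmt_15_general (mod_cast contDiff_infty.1 hf 2) hsurj hnf.dense_deriv_ne_zero hA hα hrow
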